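/- Let 1 ≤ ℓ < k be integers, set t₄ = ⌈(3k−ℓ−2)/(k−ℓ)⌉ and t₅ = t₄(k−ℓ), and suppose 0 < ε ≤ ℓ/(3t₅) and 1/n ≪ β ≪ η, α, 1/k, 1/t₅. Let V be a set of n vertices and let V′, U ⊆ V with |U| ≤ ηn/3. Let H be a k-graph on V such that deg_H(v) ≥ α·n^{k−1} for all v ∈ V′, and for every ℓ-set S ⊆ V either deg_H(S) = 0 or deg_H(S) ≥ η·n^{k−ℓ}. Suppose G = 𝔾^{(k)}(n,p) on V with p ≥ n^{−(k−ℓ)−ε} if ℓ ≥ 2 and p ≥ C·n^{−(k−1)} if ℓ = 1 (for a suitable constant C with 1/n ≪ 1/C). Then H ∪ G a.a.s. contains a family 𝒜 of at most βn pairwise vertex-disjoint copies of the ℓ-path P_{t₅−1}, each with both ℓ-ends in ∂_ℓ H, such that V(𝒜) ⊆ V ∖ U and every (k−ℓ)-set W ⊆ V′ has at least β³n W-absorbers in 𝒜. -/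

import Mathlib

open Finset
open scoped Classical

/-- All `k`-subsets of `Fin n` (the possible edges of a `k`-graph on `n` vertices). -/
def kSets (n k : ℕ) : Finset (Finset (Fin n)) := Finset.univ.powersetCard k

/-- The probability that the binomial random `k`-graph `G^{(k)}(n,p)` (each `k`-set is an
edge independently with probability `p`) has an edge set satisfying the property `A`. -/
noncomputable def gProb (n k : ℕ) (p : ℝ) (A : Finset (Finset (Fin n)) → Prop) : ℝ :=
  ∑ E ∈ (kSets n k).powerset.filter (fun E => A E),
    p ^ E.card * (1 - p) ^ ((kSets n k).card - E.card)

/-- Expectation of a random variable `f` of the random `k`-graph `G^{(k)}(n,p)`. -/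
noncomputable def gExpect (n k : ℕ) (p : ℝ) (f : Finset (Finset (Fin n)) → ℝ) : ℝ :=
  ∑ E ∈ (kSets n k).powerset,
    p ^ E.card * (1 - p) ^ ((kSets n k).card - E.card) * f E

/-- The degree of a vertex set `S` in the `k`-graph with edge set `E`: the number of edges
containing `S` (equivalently, the number of `(k-|S|)`-sets `T` with `S ∪ T ∈ E`). -/
def degOf {n : ℕ} (E : Finset (Finset (Fin n))) (S : Finset (Fin n)) : ℕ :=
  (E.filter (fun e => S ⊆ e)).card

/-- The minimum vertex degree (minimum 1-degree) of a `k`-graph. -/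
noncomputable def minVertexDeg {n : ℕ} (E : Finset (Finset (Fin n))) : ℕ :=
  sInf {d : ℕ | ∃ v : Fin n, degOf E {v} = d}

/-- The index set of the `i`-th edge of the path `P_{a,x}`:
`{x + i*d, x + i*d + 1, …, x + i*d + k - 1}` (here `d = k - ℓ`). -/
def edgeIdx (k d x i : ℕ) : Finset ℕ := (Finset.range k).image (fun j => x + i * d + j)

/-- The ordered `b`-tuple `w` spans a labeled copy of `P_{a,x}` (the `k`-uniform `ℓ`-path
with `a` edges, preceded and followed by `x` isolated vertices) in the edge set `E`. -/
def SpansPax {n : ℕ} (k ℓ a x : ℕ) (E : Finset (Finset (Fin n))) {b : ℕ}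
    (w : Fin b → Fin n) : Prop :=
  Function.Injective w ∧
  ∀ i < a,
    ((Finset.univ.filter (fun m : Fin b => (m : ℕ) ∈ edgeIdx k (k - ℓ) x i)).image w) ∈ E

/-- The ordered tuple `w` spans a labeled copy of the `ℓ`-path `P_a` of length `a` in `E`. -/
def SpansPath {n : ℕ} (k ℓ a : ℕ) (E : Finset (Finset (Fin n))) {b : ℕ}
    (w : Fin b → Fin n) : Prop :=
  SpansPax k ℓ a 0 E w

/-- The first `ℓ`-end of the ordered tuple `w` (its first `ℓ` vertices, as a set). -/
def firstEnd {n b : ℕ} (ℓ : ℕ) (w : Fin b → Fin n) : Finset (Fin n) :=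
  (Finset.univ.filter (fun m : Fin b => (m : ℕ) < ℓ)).image w

/-- The last `ℓ`-end of the ordered tuple `w` (its last `ℓ` vertices, as a set). -/
def lastEnd {n b : ℕ} (ℓ : ℕ) (w : Fin b → Fin n) : Finset (Fin n) :=
  (Finset.univ.filter (fun m : Fin b => b - ℓ ≤ (m : ℕ))).image w

/-- The `k`-graph with edge set `E` on vertex set `Fin n` contains a Hamiltonian `ℓ`-cycle:
there is a cyclic ordering of all `n` vertices such that each of the `n/(k-ℓ)` edges
consists of `k` consecutive vertices, consecutive edges overlapping in `ℓ` vertices. -/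
def IsHamCycle (n k ℓ : ℕ) (E : Finset (Finset (Fin n))) : Prop :=
  ∃ f : ZMod n → Fin n, Function.Bijective f ∧
    ∀ i < n / (k - ℓ),
      ((Finset.range k).image (fun j => f (((i * (k - ℓ) + j : ℕ) : ZMod n)))) ∈ E

/-- The `ℓ`-shadow of a `k`-graph: all `ℓ`-sets contained in some edge. -/
def shadowL {n : ℕ} (ℓ : ℕ) (E : Finset (Finset (Fin n))) : Finset (Finset (Fin n)) :=
  (Finset.univ.powersetCard ℓ).filter (fun S => ∃ e ∈ E, S ⊆ e)

/-- The list `v` of vertices spans a copy of the `ℓ`-path `P_a` of length `a` in `E`. -/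
def ListSpans {n : ℕ} (k ℓ a : ℕ) (E : Finset (Finset (Fin n))) (v : List (Fin n)) : Prop :=
  v.Nodup ∧ v.length = a * (k - ℓ) + ℓ ∧
    ∀ i < a, ((v.drop (i * (k - ℓ))).take k).toFinset ∈ E

/-- `Φ_F(n,p) = min { n^{v_H} p^{e_H} : H ⊆ F, e_H > 0 }`, where the subgraph `H` is given
by a nonempty edge set `E' ⊆ F` together with a vertex set `W` containing all its edges. -/
noncomputable def Phi {V : Type*} (n : ℕ) (p : ℝ) (F : Finset (Finset V)) : ℝ :=
  sInf {r : ℝ | ∃ (W : Finset V) (E' : Finset (Finset V)),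
    E' ⊆ F ∧ E'.Nonempty ∧ (∀ e ∈ E', e ⊆ W) ∧ r = (n : ℝ) ^ W.card * p ^ E'.card}

/-- The ordered tuple `w` spans a labeled copy of the `k`-graph `F` (given by its edge set
`Fe` on vertex set `Fin s`) in the edge set `E`. -/
def SpansCopy {n s : ℕ} (Fe : Finset (Finset (Fin s))) (E : Finset (Finset (Fin n)))
    (w : Fin s → Fin n) : Prop :=
  ∀ e ∈ Fe, e.image w ∈ E

/-- Concatenation of three ordered tuples. -/
def concat3 {n p q r : ℕ} (A : Fin p → Fin n) (C : Fin q → Fin n) (B : Fin r → Fin n)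
    (m : Fin (p + q + r)) : Fin n :=
  if h : (m : ℕ) < p then A ⟨(m : ℕ), h⟩
  else if h2 : (m : ℕ) < p + q then C ⟨(m : ℕ) - p, by omega⟩
  else B ⟨(m : ℕ) - (p + q), by have := m.isLt; omega⟩

/-- `w`, spanning an `ℓ`-path of length `a`, is a `W`-absorber in `E`: it avoids `W`, and
its vertex set together with `W` spans an `ℓ`-path (of length `a+1` when `|W| = k - ℓ`)
with the same two `ℓ`-ends. -/
def IsAbsorber {n : ℕ} (k ℓ a : ℕ) (E : Finset (Finset (Fin n))) {b : ℕ}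
    (w : Fin b → Fin n) (W : Finset (Fin n)) : Prop :=
  (∀ m, w m ∉ W) ∧
  ∃ w' : Fin (b + W.card) → Fin n, SpansPath k ℓ (a + 1) E w' ∧
    Finset.image w' Finset.univ = Finset.image w Finset.univ ∪ W ∧
    firstEnd ℓ w' = firstEnd ℓ w ∧ lastEnd ℓ w' = lastEnd ℓ w




/-- Expectation over a `p`-random subset of `X`. -/
noncomputable def bE {α : Type*} (X : Finset α) (p : ℝ) (f : Finset α → ℝ) : ℝ :=
  ∑ E ∈ X.powerset, p ^ E.card * (1 - p) ^ (X.card - E.card) * f E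

section bern
set_option linter.unusedSectionVars false
variable {α : Type*} [DecidableEq α]

lemma bE_add (X : Finset α) (p : ℝ) (f g : Finset α → ℝ) :
    bE X p (fun E => f E + g E) = bE X p f + bE X p g := by
  simp only [bE, mul_add, Finset.sum_add_distrib]

lemma bE_sub (X : Finset α) (p : ℝ) (f g : Finset α → ℝ) :
    bE X p (fun E => f E - g E) = bE X p f - bE X p g := by
  simp only [bE, mul_sub, Finset.sum_sub_distrib]

lemma bE_mul_left (X : Finset α) (p c : ℝ) (f : Finset α → ℝ) :
    bE X p (fun E => c * f E) = c * bE X p f := by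
  simp only [bE, Finset.mul_sum]
  exact Finset.sum_congr rfl fun _ _ => by ring

lemma bE_sum {ι : Type*} (X : Finset α) (p : ℝ) (S : Finset ι) (f : ι → Finset α → ℝ) :
    bE X p (fun E => ∑ i ∈ S, f i E) = ∑ i ∈ S, bE X p (f i) := by
  simp only [bE, Finset.mul_sum]
  exact Finset.sum_comm

lemma bE_mono (X : Finset α) (p : ℝ) (hp0 : 0 ≤ p) (hp1 : p ≤ 1) (f g : Finset α → ℝ)
    (h : ∀ E ⊆ X, f E ≤ g E) : bE X p f ≤ bE X p g := by
  unfold bE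
  refine Finset.sum_le_sum fun E hE => ?_
  have := h E (Finset.mem_powerset.1 hE)
  have h1 : 0 ≤ 1 - p := by linarith
  exact mul_le_mul_of_nonneg_left this (by positivity)

lemma bE_congr (X : Finset α) (p : ℝ) (f g : Finset α → ℝ)
    (h : ∀ E ⊆ X, f E = g E) : bE X p f = bE X p g := by
  unfold bE
  exact Finset.sum_congr rfl fun E hE => by rw [h E (Finset.mem_powerset.1 hE)]

lemma bE_insert (X : Finset α) (a : α) (ha : a ∉ X) (p : ℝ) (f : Finset α → ℝ) :
    bE (insert a X) p f = (1 - p) * bE X p f + p * bE X p (fun E => f (insert a E)) := by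
  unfold bE
  rw [Finset.sum_powerset_insert ha, Finset.mul_sum, Finset.mul_sum]
  congr 1
  · refine Finset.sum_congr rfl fun E hE => ?_
    have hE' := Finset.card_le_card (Finset.mem_powerset.1 hE)
    rw [Finset.card_insert_of_notMem ha, Nat.succ_sub hE', pow_succ]
    ring
  · refine Finset.sum_congr rfl fun E hE => ?_
    have : a ∉ E := fun h => ha (Finset.mem_powerset.1 hE h)
    rw [Finset.card_insert_of_notMem ha, Finset.card_insert_of_notMem this,
      Nat.add_sub_add_right, pow_succ]
    ring

lemma bE_one (X : Finset α) (p : ℝ) : bE X p (fun _ => 1) = 1 := by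
  induction X using Finset.induction_on with
  | empty => simp [bE]
  | insert a X ha ih => rw [bE_insert X a ha, ih]; ring

lemma bE_contains (X : Finset α) (p : ℝ) : ∀ (R : Finset α) (_ : R ⊆ X) (f : Finset α → ℝ),
    bE X p (fun E => if R ⊆ E then f E else 0) = p ^ R.card * bE X p (fun E => f (E ∪ R)) := by
  induction X using Finset.induction_on with
  | empty =>
    intro R hR f
    have : R = ∅ := Finset.subset_empty.1 hR
    subst this
    simp [bE]
  | insert a X ha ih =>
    intro R hR f
    rw [bE_insert X a ha, bE_insert X a ha]
    by_cases haR : a ∈ R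
    · have h1 : bE X p (fun E => if R ⊆ E then f E else 0) = 0 := by
        rw [bE_congr X p _ (fun _ => 0)]
        · simp [bE]
        · intro E hE
          rw [if_neg]
          exact fun h => ha (hE (h haR))
      have hR' : R.erase a ⊆ X := by
        intro x hx
        rcases Finset.mem_insert.1 (hR (Finset.mem_of_mem_erase hx)) with h | h
        · exact absurd h (Finset.ne_of_mem_erase hx)
        · exact h
      have h2 : (fun E => if R ⊆ insert a E then f (insert a E) else 0)
          = (fun E => if R.erase a ⊆ E then f (insert a E) else 0) := by
        funext E
        simp only [Finset.subset_insert_iff]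
      rw [h1, h2, ih (R.erase a) hR' (fun E => f (insert a E))]
      have h3 : ∀ E : Finset α, insert a (E ∪ R.erase a) = E ∪ R := by
        intro E
        rw [← Finset.union_insert, Finset.insert_erase haR]
      have h4 : ∀ E : Finset α, insert a E ∪ R = E ∪ R := by
        intro E
        ext x; simp only [mem_union, mem_insert]
        constructor
        · rintro ((rfl | h) | h) <;> tauto
        · tauto
      simp only [h3, h4]
      have hc : R.card = (R.erase a).card + 1 := by
        rw [Finset.card_erase_of_mem haR]
        have := Finset.card_pos.2 ⟨a, haR⟩
        omega
      rw [hc, pow_succ]; ring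
    · have hR' : R ⊆ X := by
        intro x hx
        rcases Finset.mem_insert.1 (hR hx) with h | h
        · exact absurd (h ▸ hx) haR
        · exact h
      have h2 : (fun E => if R ⊆ insert a E then f (insert a E) else 0)
          = (fun E => if R ⊆ E then f (insert a E) else 0) := by
        funext E
        simp only [Finset.subset_insert_iff, Finset.erase_eq_of_notMem haR]
      rw [h2, ih R hR' f, ih R hR' (fun E => f (insert a E))]
      simp only [Finset.insert_union]
      ring

lemma bE_subset (X R : Finset α) (p : ℝ) (hR : R ⊆ X) :
    bE X p (fun E => if R ⊆ E then 1 else 0) = p ^ R.card := by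
  rw [bE_contains X p R hR (fun _ => 1), bE_one, mul_one]

/-- Indicator that no `R i`, `i ∈ S`, is contained in `E`. -/
noncomputable def avInd {ι : Type*} (R : ι → Finset α) (S : Finset ι) (E : Finset α) : ℝ :=
  if ∀ i ∈ S, ¬ R i ⊆ E then 1 else 0

lemma avInd_anti {ι : Type*} (R : ι → Finset α) (S S' : Finset ι) (E E' : Finset α)
    (hS : S ⊆ S') (hE : E ⊆ E') : avInd R S' E' ≤ avInd R S E := by
  unfold avInd
  by_cases h : ∀ i ∈ S', ¬ R i ⊆ E'
  · have : ∀ i ∈ S, ¬ R i ⊆ E := fun i hi hh => h i (hS hi) (hh.trans hE)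
    rw [if_pos h, if_pos this]
  · rw [if_neg h]
    exact ite_nonneg zero_le_one le_rfl

lemma avInd_nonneg {ι : Type*} (R : ι → Finset α) (S : Finset ι) (E : Finset α) :
    0 ≤ avInd R S E := by
  unfold avInd; split_ifs <;> norm_num

/-- Sum of correlations. -/
noncomputable def dSum {ι : Type*} (R : ι → Finset α) (p : ℝ) (S : Finset ι) : ℝ :=
  ∑ i ∈ S, ∑ j ∈ S, if (i ≠ j ∧ ¬ Disjoint (R i) (R j)) then p ^ (R i ∪ R j).card else 0

lemma janson_basic {ι : Type*} (X : Finset α) (p : ℝ) (hp0 : 0 ≤ p) (hp1 : p ≤ 1)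
    (R : ι → Finset α) (S : Finset ι) (hR : ∀ i ∈ S, R i ⊆ X) :
    bE X p (avInd R S) ≤ Real.exp (-(∑ i ∈ S, p ^ (R i).card) + dSum R p S) := by
  induction S using Finset.induction_on with
  | empty =>
    have : bE X p (avInd R ∅) = 1 := by
      rw [← bE_one X p]; exact bE_congr X p _ _ fun E _ => by simp [avInd]
    rw [this]; simp [dSum]
  | insert m S hm ih =>
    have ihS := ih (fun i hi => hR i (Finset.mem_insert_of_mem hi))
    have hRm := hR m (Finset.mem_insert_self m S)
    set S0 := S.filter (fun j => Disjoint (R m) (R j)) with hS0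
    set S1 := S.filter (fun j => ¬ Disjoint (R m) (R j)) with hS1
    set σ := ∑ j ∈ S1, p ^ (R m ∪ R j).card with hσ
    have hσ0 : 0 ≤ σ := Finset.sum_nonneg fun _ _ => by positivity
    set q := bE X p (avInd R S) with hq
    set q0 := bE X p (avInd R S0) with hq0
    have hqq0 : q ≤ q0 := bE_mono X p hp0 hp1 _ _ fun E _ =>
      avInd_anti R S0 S E E (Finset.filter_subset _ _) subset_rfl
    have hqnn : 0 ≤ q := by
      have := bE_mono X p hp0 hp1 (fun _ => 0) (avInd R S) (fun E _ => avInd_nonneg R S E)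
      have h0 : bE X p (fun _ => 0) = 0 := by simp [bE]
      rw [h0] at this
      exact this
    have hle : bE X p (avInd R (insert m S)) ≤ q :=
      bE_mono X p hp0 hp1 _ _ fun E _ =>
        avInd_anti R S _ E E (Finset.subset_insert _ _) subset_rfl
    have hpt : ∀ E ⊆ X, avInd R (insert m S) E ≤ avInd R S E
        - ((if R m ⊆ E then avInd R S0 E else 0)
          - ∑ j ∈ S1, (if R m ∪ R j ⊆ E then avInd R S0 E else 0)) := by
      intro E _
      have hsum : 0 ≤ ∑ j ∈ S1, (if R m ∪ R j ⊆ E then avInd R S0 E else 0) :=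
        Finset.sum_nonneg fun j _ => by
          split_ifs
          · exact avInd_nonneg _ _ _
          · exact le_rfl
      by_cases hmE : R m ⊆ E
      · have h0 : avInd R (insert m S) E = 0 := by
          unfold avInd
          rw [if_neg]
          intro h
          exact h m (Finset.mem_insert_self _ _) hmE
        rw [h0, if_pos hmE]
        by_cases hav : ∀ i ∈ S, ¬ R i ⊆ E
        · have h1 : avInd R S E = 1 := if_pos hav
          have h2 : avInd R S0 E = 1 := if_pos fun i hi => hav i (Finset.filter_subset _ _ hi)
          linarith
        · push Not at hav
          obtain ⟨j, hj, hjE⟩ := hav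
          by_cases hd : Disjoint (R m) (R j)
          · have h2 : avInd R S0 E = 0 := by
              unfold avInd
              rw [if_neg]
              intro h
              exact h j (Finset.mem_filter.2 ⟨hj, hd⟩) hjE
            have := avInd_nonneg R S E
            linarith
          · have h3 : (if R m ∪ R j ⊆ E then avInd R S0 E else 0) ≤
                ∑ j ∈ S1, (if R m ∪ R j ⊆ E then avInd R S0 E else 0) := by
              apply Finset.single_le_sum (f := fun j => if R m ∪ R j ⊆ E then avInd R S0 E else 0)
              · intro i _
                split_ifs
                · exact avInd_nonneg _ _ _
                · exact le_rfl
              · exact Finset.mem_filter.2 ⟨hj, hd⟩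
            rw [if_pos (Finset.union_subset hmE hjE)] at h3
            have := avInd_nonneg R S E
            linarith
      · rw [if_neg hmE]
        have := avInd_anti R S (insert m S) E E (Finset.subset_insert _ _) subset_rfl
        linarith
    have h1 : bE X p (avInd R (insert m S)) ≤ q - (p ^ (R m).card * q0 - σ * q0) := by
      refine (bE_mono X p hp0 hp1 _ _ hpt).trans ?_
      rw [bE_sub, bE_sub, bE_sum, bE_contains X p (R m) hRm]
      have e1 : bE X p (fun E => avInd R S0 (E ∪ R m)) = q0 := by
        congr 1; funext E
        unfold avInd
        congr 1
        apply propext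
        refine forall₂_congr fun i hi => not_congr ?_
        have hdis : Disjoint (R m) (R i) := (Finset.mem_filter.1 hi).2
        constructor
        · intro h x hx
          rcases Finset.mem_union.1 (h hx) with h' | h'
          · exact h'
          · exact absurd hx (Finset.disjoint_left.1 hdis h')
        · intro h; exact h.trans Finset.subset_union_left
      rw [e1]
      have e2 : ∑ j ∈ S1, bE X p (fun E => if R m ∪ R j ⊆ E then avInd R S0 E else 0)
          ≤ σ * q0 := by
        rw [hσ, Finset.sum_mul]
        refine Finset.sum_le_sum fun j hj => ?_
        have hjS := Finset.filter_subset _ _ hj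
        rw [bE_contains X p _ (Finset.union_subset hRm (hR j (Finset.mem_insert_of_mem hjS)))]
        refine mul_le_mul_of_nonneg_left ?_ (by positivity)
        exact bE_mono X p hp0 hp1 _ _ fun E _ =>
          avInd_anti R S0 S0 E _ subset_rfl Finset.subset_union_left
      linarith
    have h2 : bE X p (avInd R (insert m S)) ≤ q * Real.exp (-(p ^ (R m).card - σ)) := by
      by_cases hc : 0 ≤ p ^ (R m).card - σ
      · have hA : q - (p ^ (R m).card * q0 - σ * q0) ≤ q * (1 - (p ^ (R m).card - σ)) := by
          nlinarith
        have hB := Real.add_one_le_exp (-(p ^ (R m).card - σ))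
        have hC : q * (1 - (p ^ (R m).card - σ)) ≤ q * Real.exp (-(p ^ (R m).card - σ)) :=
          mul_le_mul_of_nonneg_left (by linarith) hqnn
        linarith
      · have : 1 ≤ Real.exp (-(p ^ (R m).card - σ)) := Real.one_le_exp (by linarith)
        nlinarith
    have h3 : dSum R p S + σ ≤ dSum R p (insert m S) := by
      unfold dSum
      rw [Finset.sum_insert hm, add_comm]
      apply add_le_add
      · rw [hσ, hS1, Finset.sum_filter]
        rw [Finset.sum_insert hm]
        have : (if m ≠ m ∧ ¬Disjoint (R m) (R m) then p ^ (R m ∪ R m).card else 0) = 0 := by simp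
        rw [this, zero_add]
        refine Finset.sum_le_sum fun j hj => ?_
        have hne : m ≠ j := fun h => hm (h ▸ hj)
        simp [hne]
      · refine Finset.sum_le_sum fun i hi => ?_
        refine Finset.sum_le_sum_of_subset_of_nonneg (Finset.subset_insert _ _) ?_
        intro j _ _
        split_ifs
        · positivity
        · exact le_rfl
    refine h2.trans ?_
    rw [Finset.sum_insert hm]
    refine (mul_le_mul_of_nonneg_right ihS (Real.exp_pos _).le).trans ?_
    rw [← Real.exp_add]
    apply Real.exp_le_exp.2
    linarith

lemma janson_ext {ι : Type*} (X : Finset α) (p : ℝ) (hp0 : 0 ≤ p) (hp1 : p ≤ 1)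
    (R : ι → Finset α) (S : Finset ι) (hR : ∀ i ∈ S, R i ⊆ X) (D : ℝ) (hD : 0 < D)
    (hD1 : dSum R p S ≤ D) (hD2 : ∑ i ∈ S, p ^ (R i).card ≤ 2 * D) :
    bE X p (avInd R S) ≤ Real.exp (-((∑ i ∈ S, p ^ (R i).card) ^ 2 / (4 * D))) := by
  set μ := ∑ i ∈ S, p ^ (R i).card with hμ
  have hμ0 : 0 ≤ μ := Finset.sum_nonneg fun _ _ => by positivity
  set t := μ / (2 * D) with ht
  have ht0 : 0 ≤ t := by positivity
  have ht1 : t ≤ 1 := by rw [ht, div_le_one (by positivity)]; exact hD2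
  have key : bE S t (fun S' => (∑ i ∈ S', p ^ (R i).card) - dSum R p S')
      = t * μ - t ^ 2 * dSum R p S := by
    rw [bE_sub]
    congr 1
    · rw [bE_congr S t _ (fun S' => ∑ i ∈ S, p ^ (R i).card * (if {i} ⊆ S' then 1 else 0))]
      · rw [bE_sum, hμ, Finset.mul_sum]
        refine Finset.sum_congr rfl fun i hi => ?_
        rw [bE_mul_left, bE_subset S {i} t (by simpa using hi)]
        simp [mul_comm]
      · intro E hE
        simp only [Finset.singleton_subset_iff, mul_ite, mul_one, mul_zero]
        rw [← Finset.sum_filter]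
        congr 1
        ext i; simp only [mem_filter]; exact ⟨fun h => ⟨hE h, h⟩, fun h => h.2⟩
    · have e : ∀ S' ⊆ S, dSum R p S' = ∑ i ∈ S, ∑ j ∈ S,
          (if (i ≠ j ∧ ¬ Disjoint (R i) (R j)) then p ^ (R i ∪ R j).card else 0)
            * (if ({i, j} : Finset ι) ⊆ S' then 1 else 0) := by
        intro S' hS'
        unfold dSum
        rw [← Finset.sum_subset hS']
        · refine Finset.sum_congr rfl fun i hi => ?_
          rw [← Finset.sum_subset hS']
          · refine Finset.sum_congr rfl fun j hj => ?_
            rw [if_pos (c := ({i, j} : Finset ι) ⊆ S'), mul_one]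
            simp [Finset.insert_subset_iff, hi, hj]
          · intro j _ hj
            rw [if_neg (c := ({i, j} : Finset ι) ⊆ S'), mul_zero]
            simp [Finset.insert_subset_iff, hj]
        · intro i _ hi
          refine Finset.sum_eq_zero fun j _ => ?_
          rw [if_neg (c := ({i, j} : Finset ι) ⊆ S'), mul_zero]
          simp [Finset.insert_subset_iff, hi]
      rw [bE_congr S t _ _ e, bE_sum]
      unfold dSum
      rw [Finset.mul_sum]
      refine Finset.sum_congr rfl fun i hi => ?_
      rw [bE_sum, Finset.mul_sum]
      refine Finset.sum_congr rfl fun j hj => ?_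
      rw [bE_mul_left, bE_subset S {i, j} t (by simp [Finset.insert_subset_iff, hi, hj])]
      by_cases hij : i ≠ j
      · rw [Finset.card_pair hij]; ring
      · simp [hij]
  obtain ⟨S', hS', hval⟩ : ∃ S' ⊆ S, t * μ - t ^ 2 * dSum R p S ≤
      (∑ i ∈ S', p ^ (R i).card) - dSum R p S' := by
    by_contra hcon
    push Not at hcon
    have h1 : 0 < bE S t (fun S' => (t * μ - t ^ 2 * dSum R p S) -
        ((∑ i ∈ S', p ^ (R i).card) - dSum R p S')) := by
      have hpos : ∃ E ∈ S.powerset, 0 < t ^ E.card * (1 - t) ^ (S.card - E.card) := by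
        by_contra hh
        push Not at hh
        have h1 := bE_one S t
        unfold bE at h1
        have : ∑ E ∈ S.powerset, t ^ E.card * (1 - t) ^ (S.card - E.card) * 1 ≤ 0 :=
          Finset.sum_nonpos fun E hE => by simpa using hh E hE
        linarith
      unfold bE
      refine Finset.sum_pos' ?_ ?_
      · intro E hE
        have := hcon E (Finset.mem_powerset.1 hE)
        have h1 : 0 ≤ 1 - t := by linarith
        exact mul_nonneg (by positivity) (by linarith)
      · obtain ⟨E, hE, hpE⟩ := hpos
        refine ⟨E, hE, mul_pos hpE ?_⟩
        have := hcon E (Finset.mem_powerset.1 hE)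
        linarith
    rw [bE_sub, key] at h1
    have h2 := bE_mul_left S t (t * μ - t ^ 2 * dSum R p S) (fun _ => 1)
    simp only [mul_one] at h2
    rw [h2, bE_one] at h1
    linarith
  have h1 : bE X p (avInd R S) ≤ bE X p (avInd R S') :=
    bE_mono X p hp0 hp1 _ _ fun E _ => avInd_anti R S' S E E hS' subset_rfl
  refine h1.trans ((janson_basic X p hp0 hp1 R S' fun i hi => hR i (hS' hi)).trans ?_)
  apply Real.exp_le_exp.2
  have h2 : t * μ - t ^ 2 * D ≤ t * μ - t ^ 2 * dSum R p S := by nlinarith [sq_nonneg t]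
  have h3 : t * μ - t ^ 2 * D = μ ^ 2 / (4 * D) := by
    rw [ht]; field_simp; ring
  linarith

end bern


/-- The set of random edges required by the tuple `w`. -/
noncomputable def Rw {n b : ℕ} (J : Finset ℕ) (Fe : ℕ → Finset (Fin b)) (w : Fin b → Fin n) :
    Finset (Finset (Fin n)) := J.image (fun j => (Fe j).image w)

lemma Rw_injOn {n b : ℕ} (J : Finset ℕ) (Fe : ℕ → Finset (Fin b)) (w : Fin b → Fin n)
    (hw : Function.Injective w) (hinj : Set.InjOn Fe J) :
    Set.InjOn (fun j => (Fe j).image w) J := by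
  intro i hi j hj h
  exact hinj hi hj (Finset.image_injective hw h)

lemma card_maps_into {n b : ℕ} (Y : Finset (Fin b)) (A : Finset (Fin n)) :
    (Finset.univ.filter (fun w : Fin b → Fin n => ∀ y ∈ Y, w y ∈ A)).card
      = A.card ^ Y.card * n ^ (b - Y.card) := by
  have h : (Finset.univ.filter (fun w : Fin b → Fin n => ∀ y ∈ Y, w y ∈ A))
      = Fintype.piFinset (fun y => if y ∈ Y then A else Finset.univ) := by
    ext w
    simp only [mem_filter, mem_univ, true_and, Fintype.mem_piFinset]
    refine forall_congr' fun y => ?_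
    by_cases hy : y ∈ Y <;> simp [hy]
  rw [h, Fintype.card_piFinset]
  have h2 : ∀ y : Fin b, (if y ∈ Y then A else Finset.univ).card = if y ∈ Y then A.card else n := by
    intro y; split_ifs <;> simp
  simp only [h2]
  rw [Finset.prod_ite]
  simp only [Finset.prod_const]
  congr 2
  · congr 1; ext; simp
  · have : (Finset.univ.filter (fun y => y ∉ Y)) = Yᶜ := by ext; simp
    rw [this, Finset.card_compl, Fintype.card_fin]

lemma no_copy {n b k d l : ℕ} (hb0 : 0 < b) (hn : 0 < n) (p : ℝ) (hp0 : 0 < p) (hp1 : p ≤ 1)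
    (J : Finset ℕ) (hJ : J.Nonempty) (Fe : ℕ → Finset (Fin b))
    (hk : ∀ j ∈ J, (Fe j).card = k) (hinj : Set.InjOn Fe J)
    (hv : ∀ J' ⊆ J, J'.Nonempty → J'.card * d + l ≤ (J'.biUnion Fe).card)
    (Φ : ℝ) (hΦ0 : 0 < Φ)
    (hΦ : ∀ j, 1 ≤ j → j ≤ J.card → Φ ≤ (n : ℝ) ^ (j * d + l) * p ^ j)
    (c : ℝ) (hc : 0 < c) (Λ : Finset (Fin b → Fin n)) (hΛi : ∀ w ∈ Λ, Function.Injective w)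
    (hΛ : c * (n : ℝ) ^ b ≤ Λ.card) :
    bE (kSets n k) p (avInd (Rw J Fe) Λ) ≤
      Real.exp (-(c ^ 2 / (4 * 2 ^ J.card * (b : ℝ) ^ b) * Φ)) := by
  set e := J.card with he
  have he1 : 1 ≤ e := Finset.card_pos.2 hJ
  have hn1 : (1 : ℝ) ≤ n := by exact_mod_cast hn
  have hn0 : (0 : ℝ) < n := by linarith
  have hcardb : ∀ Y : Finset (Fin b), Y.card ≤ b := fun Y => by
    simpa using Finset.card_le_univ Y
  have hbR : (1 : ℝ) ≤ b := by exact_mod_cast hb0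
  have hRcard : ∀ w ∈ Λ, (Rw J Fe w).card = e := fun w hw =>
    Finset.card_image_of_injOn (Rw_injOn J Fe w (hΛi w hw) hinj)
  have hRX : ∀ w ∈ Λ, Rw J Fe w ⊆ kSets n k := by
    intro w hw x hx
    obtain ⟨j, hj, rfl⟩ := Finset.mem_image.1 hx
    simp only [kSets, mem_powersetCard, subset_univ, true_and]
    rw [Finset.card_image_of_injective _ (hΛi w hw), hk j hj]
  have hμ : ∑ w ∈ Λ, p ^ (Rw J Fe w).card = Λ.card * p ^ e := by
    rw [Finset.sum_congr rfl (fun w hw => by rw [hRcard w hw]), Finset.sum_const, nsmul_eq_mul]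
  have hΛle : (Λ.card : ℝ) ≤ (n : ℝ) ^ b := by
    have : Λ.card ≤ n ^ b := by
      have := Finset.card_le_univ Λ
      simpa using this
    exact_mod_cast this
  set D : ℝ := (n : ℝ) ^ b * (2 ^ e * ((b : ℝ) ^ b * ((n : ℝ) ^ b * p ^ (2 * e)) / Φ)) with hD
  have hDpos : 0 < D := by positivity
  -- the bound for fixed `w`
  have hfix : ∀ w ∈ Λ, (∑ w' ∈ Λ, if (w ≠ w' ∧ ¬ Disjoint (Rw J Fe w) (Rw J Fe w'))
      then p ^ (Rw J Fe w ∪ Rw J Fe w').card else 0)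
      ≤ 2 ^ e * ((b : ℝ) ^ b * ((n : ℝ) ^ b * p ^ (2 * e)) / Φ) := by
    intro w hw
    set PJ := J.powerset.filter (fun J' => J'.Nonempty) with hPJ
    have hterm : ∀ w' ∈ Λ, (if (w ≠ w' ∧ ¬ Disjoint (Rw J Fe w) (Rw J Fe w'))
        then p ^ (Rw J Fe w ∪ Rw J Fe w').card else 0)
        ≤ ∑ J' ∈ PJ, if (∀ y ∈ J'.biUnion Fe, w' y ∈ Finset.univ.image w)
          then p ^ (2 * e - J'.card) else 0 := by
      intro w' hw'
      have hnn : ∀ J' ∈ PJ, (0 : ℝ) ≤ (if (∀ y ∈ J'.biUnion Fe, w' y ∈ Finset.univ.image w)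
          then p ^ (2 * e - J'.card) else 0) := by
        intro J' _
        split_ifs
        · positivity
        · exact le_rfl
      by_cases hcond : (w ≠ w' ∧ ¬ Disjoint (Rw J Fe w) (Rw J Fe w'))
      · rw [if_pos hcond]
        set K := J.filter (fun j => (Fe j).image w' ∈ Rw J Fe w) with hK
        have hKcard : (Rw J Fe w ∩ Rw J Fe w').card = K.card := by
          have : Rw J Fe w ∩ Rw J Fe w' = K.image (fun j => (Fe j).image w') := by
            ext x
            simp only [mem_inter, mem_image, hK, mem_filter]
            constructor
            · rintro ⟨h1, h2⟩
              obtain ⟨j, hj, rfl⟩ := Finset.mem_image.1 h2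
              exact ⟨j, ⟨hj, h1⟩, rfl⟩
            · rintro ⟨j, ⟨hj, h1⟩, rfl⟩
              exact ⟨h1, Finset.mem_image_of_mem (fun j => (Fe j).image w') hj⟩
          rw [this]
          exact Finset.card_image_of_injOn
            ((Rw_injOn J Fe w' (hΛi w' hw') hinj).mono (by
              intro x hx; exact (Finset.mem_filter.1 hx).1))
        have hKne : K.Nonempty := by
          rw [← Finset.card_pos, ← hKcard, Finset.card_pos]
          exact Finset.not_disjoint_iff_nonempty_inter.1 hcond.2
        have hucard : (Rw J Fe w ∪ Rw J Fe w').card = 2 * e - K.card := by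
          have := Finset.card_union_add_card_inter (Rw J Fe w) (Rw J Fe w')
          rw [hKcard, hRcard w hw, hRcard w' hw'] at this
          omega
        have hKin : K ∈ PJ := by
          rw [hPJ, mem_filter, mem_powerset]
          exact ⟨Finset.filter_subset _ _, hKne⟩
        refine le_trans ?_ (Finset.single_le_sum hnn hKin)
        rw [if_pos, hucard]
        intro y hy
        obtain ⟨j, hj, hyj⟩ := Finset.mem_biUnion.1 hy
        obtain ⟨i, _, hi⟩ := Finset.mem_image.1 (Finset.mem_filter.1 hj).2
        have : w' y ∈ (Fe i).image w := by
          rw [hi]; exact Finset.mem_image_of_mem _ hyj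
        exact Finset.image_subset_image (Finset.subset_univ _) this
      · rw [if_neg hcond]
        exact Finset.sum_nonneg hnn
    refine (Finset.sum_le_sum hterm).trans ?_
    rw [Finset.sum_comm]
    have hone : ∀ J' ∈ PJ, (∑ w' ∈ Λ, if (∀ y ∈ J'.biUnion Fe, w' y ∈ Finset.univ.image w)
          then p ^ (2 * e - J'.card) else 0) ≤ (b : ℝ) ^ b * ((n : ℝ) ^ b * p ^ (2 * e)) / Φ := by
      intro J' hJ'
      rw [hPJ, mem_filter, mem_powerset] at hJ'
      obtain ⟨hJJ, hne⟩ := hJ'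
      have hj1 : 1 ≤ J'.card := Finset.card_pos.2 hne
      have hj2 : J'.card ≤ e := Finset.card_le_card hJJ
      set j := J'.card with hj
      set Y := J'.biUnion Fe with hY
      have hvY : j * d + l ≤ Y.card := hv J' hJJ hne
      rw [← Finset.sum_filter, Finset.sum_const, nsmul_eq_mul]
      have hcnt : ((Λ.filter (fun w' => ∀ y ∈ Y, w' y ∈ Finset.univ.image w)).card : ℝ)
          ≤ (b : ℝ) ^ b * (n : ℝ) ^ (b - Y.card) := by
        have h1 : (Λ.filter (fun w' => ∀ y ∈ Y, w' y ∈ Finset.univ.image w)).card ≤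
            (Finset.univ.filter (fun w' : Fin b → Fin n =>
              ∀ y ∈ Y, w' y ∈ Finset.univ.image w)).card :=
          Finset.card_le_card (Finset.filter_subset_filter _ (Finset.subset_univ _))
        rw [card_maps_into] at h1
        have h2 : (Finset.univ.image w).card ^ Y.card ≤ b ^ b := by
          have : (Finset.univ.image w).card ≤ b := by
            simpa using (Finset.card_image_le (s := Finset.univ) (f := w))
          exact (Nat.pow_le_pow_left this _).trans (Nat.pow_le_pow_right hb0 (hcardb Y))
        have h3 := h1.trans (Nat.mul_le_mul_right _ h2)
        exact_mod_cast h3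
      have hΦj := hΦ j hj1 hj2
      rw [le_div_iff₀ hΦ0]
      have hnpow : (n : ℝ) ^ (b - Y.card) * (n : ℝ) ^ (j * d + l) ≤ (n : ℝ) ^ b := by
        rw [← pow_add]
        apply pow_le_pow_right₀ hn1
        have := hcardb Y
        omega
      have hppow : p ^ (2 * e - j) * p ^ j = p ^ (2 * e) := by
        rw [← pow_add]; congr 1; omega
      calc ((Λ.filter (fun w' => ∀ y ∈ Y, w' y ∈ Finset.univ.image w)).card : ℝ)
              * p ^ (2 * e - j) * Φ
          ≤ ((b : ℝ) ^ b * (n : ℝ) ^ (b - Y.card)) * p ^ (2 * e - j)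
              * ((n : ℝ) ^ (j * d + l) * p ^ j) := by gcongr
        _ = (b : ℝ) ^ b * (((n : ℝ) ^ (b - Y.card) * (n : ℝ) ^ (j * d + l))
              * (p ^ (2 * e - j) * p ^ j)) := by ring
        _ ≤ (b : ℝ) ^ b * ((n : ℝ) ^ b * p ^ (2 * e)) := by
            rw [hppow]; gcongr
    refine (Finset.sum_le_sum hone).trans ?_
    rw [Finset.sum_const, nsmul_eq_mul]
    have hPc : (PJ.card : ℝ) ≤ 2 ^ e := by
      have : PJ.card ≤ 2 ^ e := by
        rw [he, ← Finset.card_powerset]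
        exact Finset.card_le_card (Finset.filter_subset _ _)
      exact_mod_cast this
    exact mul_le_mul_of_nonneg_right hPc (by positivity)
  have hD1 : dSum (Rw J Fe) p Λ ≤ D := by
    unfold dSum
    refine (Finset.sum_le_sum (g := fun _ => 2 ^ e * ((b : ℝ) ^ b * ((n : ℝ) ^ b * p ^ (2 * e)) / Φ)) (fun w hw => by
      have h := hfix w hw
      refine le_trans (le_of_eq ?_) h
      refine Finset.sum_congr rfl fun w1 _ => ?_
      congr)).trans ?_
    rw [Finset.sum_const, nsmul_eq_mul, hD]
    exact mul_le_mul_of_nonneg_right hΛle (by positivity)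
  have hΦb : Φ ≤ (n : ℝ) ^ b * p ^ e := by
    refine (hΦ e he1 le_rfl).trans ?_
    refine mul_le_mul_of_nonneg_right ?_ (by positivity)
    apply pow_le_pow_right₀ hn1
    exact (hv J subset_rfl hJ).trans (hcardb _)
  have hDge : (n : ℝ) ^ b * p ^ e ≤ D := by
    have h1 : (1 : ℝ) ≤ 2 ^ e := one_le_pow₀ (by norm_num)
    have h2 : (1 : ℝ) ≤ (b : ℝ) ^ b := one_le_pow₀ hbR
    have h3 : p ^ e ≤ ((n : ℝ) ^ b * p ^ (2 * e)) / Φ := by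
      rw [le_div_iff₀ hΦ0, two_mul, pow_add]
      have : 0 < p ^ e := by positivity
      nlinarith
    rw [hD]
    refine mul_le_mul_of_nonneg_left ?_ (by positivity)
    calc p ^ e ≤ 1 * (1 * (((n : ℝ) ^ b * p ^ (2 * e)) / Φ)) := by linarith
      _ ≤ 2 ^ e * ((b : ℝ) ^ b * (((n : ℝ) ^ b * p ^ (2 * e)) / Φ)) := by gcongr
      _ = _ := by ring
  have hD2 : ∑ w ∈ Λ, p ^ (Rw J Fe w).card ≤ 2 * D := by
    rw [hμ]
    have : (Λ.card : ℝ) * p ^ e ≤ (n : ℝ) ^ b * p ^ e :=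
      mul_le_mul_of_nonneg_right hΛle (by positivity)
    linarith
  refine (janson_ext (kSets n k) p hp0.le hp1 (Rw J Fe) Λ hRX D hDpos hD1 hD2).trans ?_
  apply Real.exp_le_exp.2
  rw [hμ]
  apply neg_le_neg
  rw [le_div_iff₀ (by positivity)]
  have h1 : c ^ 2 / (4 * 2 ^ e * (b : ℝ) ^ b) * Φ * (4 * D) = (c * (n : ℝ) ^ b * p ^ e) ^ 2 := by
    rw [hD]; field_simp; try ring
  rw [h1]
  gcongr


/-- weight of `W` -/
noncomputable def wgt {ι κ : Type*} [DecidableEq ι] (L : κ → Finset ι) (Λ : Finset ι) (W : κ) : ℝ :=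
  (1 / 2 : ℝ) ^ (Λ.filter (fun w => w ∈ L W)).card

/-- total weight -/
noncomputable def twgt {ι κ : Type*} [DecidableEq ι] (𝒲 : Finset κ) (L : κ → Finset ι) (Λ : Finset ι) : ℝ :=
  ∑ W ∈ 𝒲, wgt L Λ W

/-- good tuples -/
noncomputable def GoodT {ι κ : Type*} [DecidableEq ι] [Fintype ι] (𝒲 : Finset κ) (L : κ → Finset ι) (θ : ℝ)
    (Λ : Finset ι) : Finset ι :=
  Finset.univ.filter (fun w => θ * twgt 𝒲 L Λ ≤ ∑ W ∈ 𝒲, if w ∈ L W then wgt L Λ W else 0)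

lemma wgt_pos {ι κ : Type*} [DecidableEq ι] (L : κ → Finset ι) (Λ : Finset ι) (W : κ) : 0 < wgt L Λ W := by
  unfold wgt; positivity

lemma twgt_pos {ι κ : Type*} [DecidableEq ι] (𝒲 : Finset κ) (h𝒲 : 𝒲.Nonempty) (L : κ → Finset ι) (Λ : Finset ι) :
    0 < twgt 𝒲 L Λ := Finset.sum_pos (fun W _ => wgt_pos L Λ W) h𝒲

lemma good_card {ι κ : Type*} [DecidableEq ι] [Fintype ι] (𝒲 : Finset κ) (h𝒲 : 𝒲.Nonempty) (L : κ → Finset ι)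
    (θ N : ℝ) (hθ : 0 ≤ θ) (hN : (Fintype.card ι : ℝ) = N)
    (hL : ∀ W ∈ 𝒲, 2 * θ * N ≤ (L W).card) (Λ : Finset ι) :
    θ * N ≤ (GoodT 𝒲 L θ Λ).card := by
  have hΨ := twgt_pos 𝒲 h𝒲 L Λ
  set Ψ := twgt 𝒲 L Λ with hΨd
  set s : ι → ℝ := fun w => ∑ W ∈ 𝒲, if w ∈ L W then wgt L Λ W else 0 with hs
  have hN0 : 0 ≤ N := by rw [← hN]; positivity
  have h1 : 2 * θ * N * Ψ ≤ ∑ w, s w := by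
    rw [hs, Finset.sum_comm, hΨd, twgt, Finset.mul_sum]
    refine Finset.sum_le_sum fun W hW => ?_
    rw [← Finset.sum_filter, Finset.sum_const, nsmul_eq_mul]
    refine mul_le_mul_of_nonneg_right ?_ (wgt_pos L Λ W).le
    refine (hL W hW).trans (le_of_eq ?_)
    congr 2; ext; simp
  have h2 : ∑ w, s w ≤ (GoodT 𝒲 L θ Λ).card * Ψ + N * (θ * Ψ) := by
    rw [← Finset.sum_filter_add_sum_filter_not Finset.univ (fun w => θ * Ψ ≤ s w)]
    refine add_le_add ?_ ?_
    · have : ∀ w ∈ Finset.univ.filter (fun w => θ * Ψ ≤ s w), s w ≤ Ψ := by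
        intro w _
        refine Finset.sum_le_sum fun W _ => ?_
        split_ifs
        · exact le_rfl
        · exact (wgt_pos L Λ W).le
      refine (Finset.sum_le_card_nsmul _ _ _ this).trans ?_
      rw [nsmul_eq_mul]
      exact le_rfl
    · have : ∀ w ∈ Finset.univ.filter (fun w => ¬ θ * Ψ ≤ s w), s w ≤ θ * Ψ := by
        intro w hw
        exact (not_le.1 (Finset.mem_filter.1 hw).2).le
      refine (Finset.sum_le_card_nsmul _ _ _ this).trans ?_
      rw [nsmul_eq_mul]
      refine mul_le_mul_of_nonneg_right ?_ (by positivity)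
      rw [← hN]
      exact_mod_cast Finset.card_le_univ _
  have h3 : θ * N * Ψ ≤ (GoodT 𝒲 L θ Λ).card * Ψ := by nlinarith
  exact le_of_mul_le_mul_right h3 hΨ

lemma good_mem {ι κ : Type*} [DecidableEq ι] [Fintype ι] (𝒲 : Finset κ) (h𝒲 : 𝒲.Nonempty) (L : κ → Finset ι)
    (θ : ℝ) (hθ : 0 < θ) (Λ : Finset ι) (w : ι) (hw : w ∈ GoodT 𝒲 L θ Λ) :
    ∃ W ∈ 𝒲, w ∈ L W := by
  by_contra h
  push Not at h
  have h1 := (Finset.mem_filter.1 hw).2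
  rw [Finset.sum_eq_zero (fun W hW => by rw [if_neg (h W hW)])] at h1
  have := twgt_pos 𝒲 h𝒲 L Λ
  nlinarith [mul_pos hθ this]

lemma twgt_step {ι κ : Type*} [DecidableEq ι] [Fintype ι] (𝒲 : Finset κ) (L : κ → Finset ι)
    (θ : ℝ) (Λ : Finset ι) (w : ι) (hw : w ∈ GoodT 𝒲 L θ Λ) (hwΛ : w ∉ Λ) :
    twgt 𝒲 L (insert w Λ) ≤ (1 - θ / 2) * twgt 𝒲 L Λ := by
  have h1 := (Finset.mem_filter.1 hw).2
  have h2 : ∀ W ∈ 𝒲, wgt L (insert w Λ) W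
      = wgt L Λ W - 1 / 2 * (if w ∈ L W then wgt L Λ W else 0) := by
    intro W _
    unfold wgt
    rw [Finset.filter_insert]
    split_ifs with h
    · rw [Finset.card_insert_of_notMem (by simp [hwΛ]), pow_succ]; ring
    · ring
  unfold twgt at *
  rw [Finset.sum_congr rfl h2, Finset.sum_sub_distrib, ← Finset.mul_sum]
  linarith

/-- all vertices of the tuples in `Λ` -/
noncomputable def vts {n b : ℕ} (Λ : Finset (Fin b → Fin n)) : Finset (Fin n) :=
  Λ.biUnion (fun w => Finset.univ.image w)

lemma vts_card {n b : ℕ} (Λ : Finset (Fin b → Fin n)) : (vts Λ).card ≤ Λ.card * b := by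
  unfold vts
  refine Finset.card_biUnion_le_card_mul _ _ _ fun w _ => ?_
  simpa using (Finset.card_image_le (s := Finset.univ) (f := w))

/-- pairwise disjoint family -/
def PD {n b : ℕ} (Λ : Finset (Fin b → Fin n)) : Prop :=
  ∀ w ∈ Λ, ∀ w' ∈ Λ, w ≠ w' → ∀ m m', w m ≠ w' m'

lemma mem_vts {n b : ℕ} {Λ : Finset (Fin b → Fin n)} {w : Fin b → Fin n} (hw : w ∈ Λ) (m : Fin b) :
    w m ∈ vts Λ := Finset.mem_biUnion.2 ⟨w, hw, Finset.mem_image_of_mem _ (Finset.mem_univ _)⟩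

lemma PD_union {n b : ℕ} {Λ Λ' : Finset (Fin b → Fin n)} (h : PD Λ) (h' : PD Λ')
    (hd : ∀ w ∈ Λ', ∀ m, w m ∉ vts Λ) : PD (Λ ∪ Λ') := by
  intro w hw w' hw' hne m m'
  rcases Finset.mem_union.1 hw with h1 | h1 <;> rcases Finset.mem_union.1 hw' with h2 | h2
  · exact h w h1 w' h2 hne m m'
  · intro he
    exact hd w' h2 m' (he ▸ mem_vts h1 m)
  · intro he
    exact hd w h1 m (he ▸ mem_vts h2 m')
  · exact h' w h1 w' h2 hne m m'

lemma not_mem_of_avoid {n b : ℕ} (hb : 0 < b) {Λ : Finset (Fin b → Fin n)} {w : Fin b → Fin n}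
    (h : ∀ m, w m ∉ vts Λ) : w ∉ Λ := fun hw => h ⟨0, hb⟩ (mem_vts hw _)

lemma group_lemma {n b : ℕ} (hb : 0 < b) {κ : Type*} (𝒲 : Finset κ)
    (L : κ → Finset (Fin b → Fin n)) (θ γ : ℝ) (hθ2 : θ ≤ 2) (r : ℕ)
    (P : (Fin b → Fin n) → Prop)
    (hQ : ∀ T : Finset (Fin n), (T.card : ℝ) ≤ γ → ∀ Λ : Finset (Fin b → Fin n), Λ.card < r →
      ∃ w ∈ GoodT 𝒲 L θ Λ, P w ∧ ∀ m, w m ∉ T)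
    (T : Finset (Fin n)) (hT : (T.card : ℝ) + r * b ≤ γ) (s : ℕ) (hs : s ≤ r) :
    ∃ Λ : Finset (Fin b → Fin n), Λ.card = s ∧ PD Λ ∧
      (∀ w ∈ Λ, (∃ Λ', w ∈ GoodT 𝒲 L θ Λ') ∧ P w ∧ ∀ m, w m ∉ T) ∧
      twgt 𝒲 L Λ ≤ (1 - θ / 2) ^ s * 𝒲.card := by
  induction s with
  | zero =>
    refine ⟨∅, rfl, fun w hw => by simp at hw, fun w hw => by simp at hw, ?_⟩
    simp [twgt, wgt]
  | succ s ih =>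
    obtain ⟨Λ, hc, hpd, hP, hw⟩ := ih (by omega)
    obtain ⟨w, hwg, hwP, hwT⟩ := hQ (T ∪ vts Λ) (by
      have h1 := Finset.card_union_le T (vts Λ)
      have h2 := vts_card Λ
      have h3 : Λ.card * b ≤ r * b := Nat.mul_le_mul_right _ (by omega)
      have h4 : (T ∪ vts Λ).card ≤ T.card + r * b := by omega
      have h5 : ((T ∪ vts Λ).card : ℝ) ≤ T.card + r * b := by exact_mod_cast h4
      linarith) Λ (by omega)
    have hwn : ∀ m, w m ∉ vts Λ := fun m hm => hwT m (Finset.mem_union_right _ hm)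
    have hwT' : ∀ m, w m ∉ T := fun m hm => hwT m (Finset.mem_union_left _ hm)
    have hwΛ := not_mem_of_avoid hb hwn
    refine ⟨insert w Λ, by rw [Finset.card_insert_of_notMem hwΛ, hc], ?_, ?_, ?_⟩
    · have : insert w Λ = Λ ∪ {w} := by ext; simp
      rw [this]
      refine PD_union hpd ?_ ?_
      · intro a ha a' ha' hne
        simp at ha ha'
        exact absurd (ha.trans ha'.symm) hne
      · intro a ha; simp at ha; subst ha; exact hwn
    · intro a ha
      rcases Finset.mem_insert.1 ha with rfl | ha
      · exact ⟨⟨Λ, hwg⟩, hwP, hwT'⟩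
      · exact hP a ha
    · refine (twgt_step 𝒲 L θ Λ w hwg hwΛ).trans ?_
      rw [pow_succ']
      have : 0 ≤ 1 - θ / 2 := by linarith
      nlinarith

lemma count_of_twgt {ι κ : Type*} [DecidableEq ι] (𝒲 : Finset κ) (L : κ → Finset ι) (Λ : Finset ι) (θ x : ℝ)
    (hθ2 : θ ≤ 2) (r : ℕ) (h𝒲 : (𝒲.card : ℝ) ≤ Real.exp x) (hr : 4 * x ≤ θ * r)
    (h : twgt 𝒲 L Λ ≤ (1 - θ / 2) ^ r * 𝒲.card) (W : κ) (hW : W ∈ 𝒲) :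
    θ * r / 4 ≤ (Λ.filter (fun w => w ∈ L W)).card := by
  set q := (Λ.filter (fun w => w ∈ L W)).card with hq
  have h1 : wgt L Λ W ≤ twgt 𝒲 L Λ :=
    Finset.single_le_sum (f := fun W => wgt L Λ W) (fun W _ => (wgt_pos L Λ W).le) hW
  have h2 : (1 - θ / 2) ^ r ≤ Real.exp (-(θ / 2) * r) := by
    have h3 : 1 - θ / 2 ≤ Real.exp (-(θ / 2)) := by
      have := Real.add_one_le_exp (-(θ / 2)); linarith
    calc (1 - θ / 2) ^ r ≤ (Real.exp (-(θ / 2))) ^ r :=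
          pow_le_pow_left₀ (by linarith) h3 r
      _ = Real.exp (-(θ / 2) * r) := by rw [← Real.exp_nat_mul]; ring_nf
  have h4 : Real.exp (-(q : ℝ)) ≤ wgt L Λ W := by
    unfold wgt
    rw [← hq]
    have : Real.exp (-(q : ℝ)) = (Real.exp (-1)) ^ q := by
      rw [← Real.exp_nat_mul]; ring_nf
    rw [this]
    refine pow_le_pow_left₀ (Real.exp_pos _).le ?_ q
    rw [Real.exp_neg, one_div]
    apply inv_anti₀ (by norm_num)
    have := Real.add_one_le_exp (1 : ℝ)
    linarith
  have h5 : Real.exp (-(q : ℝ)) ≤ Real.exp (-(θ / 2) * r + x) := by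
    rw [Real.exp_add]
    calc _ ≤ (1 - θ / 2) ^ r * (𝒲.card : ℝ) := h4.trans (h1.trans h)
      _ ≤ _ := by gcongr
  have := Real.exp_le_exp.1 h5
  linarith

lemma groups_lemma {n b : ℕ} (hb : 0 < b) {κ : Type*} (𝒲 : Finset κ)
    (L : κ → Finset (Fin b → Fin n)) (θ γ x : ℝ) (hθ2 : θ ≤ 2) (r : ℕ)
    (h𝒲 : (𝒲.card : ℝ) ≤ Real.exp x) (hr : 4 * x ≤ θ * r)
    (P : (Fin b → Fin n) → Prop)
    (hQ : ∀ T : Finset (Fin n), (T.card : ℝ) ≤ γ → ∀ Λ : Finset (Fin b → Fin n), Λ.card < r →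
      ∃ w ∈ GoodT 𝒲 L θ Λ, P w ∧ ∀ m, w m ∉ T)
    (s : ℕ) (hs : (s : ℝ) * r * b ≤ γ) :
    ∃ Λ : Finset (Fin b → Fin n), Λ.card = s * r ∧ PD Λ ∧
      (∀ w ∈ Λ, (∃ Λ', w ∈ GoodT 𝒲 L θ Λ') ∧ P w) ∧
      ∀ W ∈ 𝒲, s * (θ * r / 4) ≤ (Λ.filter (fun w => w ∈ L W)).card := by
  induction s with
  | zero => exact ⟨∅, by simp, fun w hw => by simp at hw, fun w hw => by simp at hw, by simp⟩
  | succ s ih =>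
    push_cast at hs
    have hrb : (0 : ℝ) ≤ r * b := by positivity
    obtain ⟨Λ, hc, hpd, hP, hW⟩ := ih (by nlinarith)
    obtain ⟨Λ', hc', hpd', hP', hw'⟩ := group_lemma hb 𝒲 L θ γ hθ2 r P hQ (vts Λ) (by
      have h2 : ((vts Λ).card : ℝ) ≤ s * r * b := by
        have := vts_card Λ
        rw [hc] at this
        exact_mod_cast this
      nlinarith) r le_rfl
    have hdisj : Disjoint Λ Λ' := by
      rw [Finset.disjoint_right]
      intro w hw
      exact not_mem_of_avoid hb (hP' w hw).2.2
    refine ⟨Λ ∪ Λ', ?_, PD_union hpd hpd' fun w hw => (hP' w hw).2.2, ?_, ?_⟩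
    · rw [Finset.card_union_of_disjoint hdisj, hc, hc']; ring
    · intro w hw
      rcases Finset.mem_union.1 hw with h | h
      · exact hP w h
      · exact ⟨(hP' w h).1, (hP' w h).2.1⟩
    · intro W hWW
      rw [Finset.filter_union, Finset.card_union_of_disjoint
        (Finset.disjoint_filter_filter hdisj)]
      have h1 := hW W hWW
      have h2 := count_of_twgt 𝒲 L Λ' θ x hθ2 r h𝒲 hr hw' W hWW
      push_cast
      linarith


/-- Numerical parameters of the absorber. -/
structure Par where
  (d l k t m κ g : ℕ)
  (hd : 1 ≤ d) (hl : 1 ≤ l) (hk : k = d + l) (h1 : m * d ≤ k) (h2 : k + 1 ≤ m * d + d)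
  (h3 : k ≤ κ * d) (hκ : 2 ≤ κ) (hg : g + κ = t) (hgm : m ≤ g ∨ (d = 1 ∧ g + 1 = m))
  (hm : 1 ≤ m)

namespace Par
variable (P : Par)

/-- number of edges plus one -/
def T : ℕ := P.t * P.d
/-- start of last block -/
def B : ℕ := (P.d - 1) * P.t
/-- the gap edge -/
def G : ℕ := P.B + P.g
/-- insertion position -/
def q : ℕ := P.G * P.d + P.l
/-- number of vertices -/
def b : ℕ := (P.T - 1) * P.d + P.l
/-- positions of the exchanged vertices -/
def xp (i : ℕ) : ℕ := i * P.T + (P.m * P.d - 1)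
/-- window -/
def win (J : ℕ) : Finset ℕ := Finset.Ico (J * P.d) (J * P.d + P.k)
/-- type of edges in `H` -/
def HT (J : ℕ) : Prop := J % P.t ≤ P.g ∨ P.B ≤ J
/-- relabelling -/
def pii (y : ℕ) : ℕ := if y < P.q then y else if y < P.q + P.d then P.xp (y - P.q) else y - P.d
/-- exchanged -/
noncomputable def upd {β : Type*} (f u : ℕ → β) (y : ℕ) : β :=
  if h : ∃ i, i < P.d ∧ y = P.xp i then u (Classical.choose h) else f y
/-- random edge indices -/
noncomputable def JJ : Finset ℕ := (Finset.range (P.T - 1)).filter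
  (fun J => P.G ≤ J ∨ J % P.t < P.m ∨ ¬ P.HT J)
/-- random edges -/
noncomputable def FeN (J : ℕ) : Finset ℕ := if P.G ≤ J then (P.win (J + 1)).image P.pii else P.win J

lemma htpos : 2 ≤ P.t := by have := P.hκ; have := P.hg; omega
lemma hmd1 : 1 ≤ P.m * P.d := Nat.mul_pos P.hm P.hd
lemma tT : P.g * P.d + P.κ * P.d = P.T := by rw [T, ← P.hg]; ring
lemma BT : P.B + P.t = P.T := by
  have h := P.hd
  unfold B T
  obtain ⟨e, he⟩ : ∃ e, P.d = e + 1 := ⟨P.d - 1, by omega⟩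
  rw [he]; simp; ring
lemma GT : P.G + P.κ = P.T := by
  have := P.BT; have := P.hg; unfold G; omega
lemma T2 : 2 ≤ P.T := by have := P.BT; have := P.htpos; omega
lemma bpos : 0 < P.b := by have := P.hl; unfold b; omega
lemma Bd : P.B * P.d = (P.d - 1) * P.T := by unfold B T; ring
lemma Gd : P.G * P.d = (P.d - 1) * P.T + P.g * P.d := by rw [← Bd]; unfold G; ring
lemma mg : P.m * P.d ≤ P.g * P.d + P.l ∧ P.m * P.d ≤ P.g * P.d + P.d := by
  have h := P.hl
  rcases P.hgm with h1 | ⟨h1, h2⟩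
  · have := Nat.mul_le_mul_right P.d h1; omega
  · rw [← h2, h1]; omega
lemma winlen (J : ℕ) (hJ : J < P.T - 1) : J * P.d + P.k ≤ P.b := by
  have h : (J + 1) * P.d ≤ (P.T - 1) * P.d := Nat.mul_le_mul_right _ (by omega)
  have := P.hk
  unfold b
  rw [add_mul] at h; omega
lemma win_last : (P.T - 2) * P.d + P.k = P.b ∧ P.T - 2 < P.T - 1 := by
  have h := P.T2
  have := P.hk
  unfold b
  obtain ⟨e, he⟩ : ∃ e, P.T = e + 2 := ⟨P.T - 2, by omega⟩
  rw [he]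
  have : (e + 2 - 1) * P.d = e * P.d + P.d := by
    rw [show e + 2 - 1 = e + 1 by omega]; ring
  have h3 : (e + 2 - 2) * P.d = e * P.d := by simp
  omega
lemma xp_lt_q (i : ℕ) (hi : i < P.d) : P.xp i < P.q ∧ P.xp i < P.G * P.d + P.d := by
  have h := P.mg
  have h1 := P.hmd1
  have h2 : i * P.T ≤ (P.d - 1) * P.T := Nat.mul_le_mul_right _ (by omega)
  have h3 := P.Gd
  unfold xp q
  omega
lemma q_le : P.q ≤ (P.T - 1) * P.d ∧ P.G < P.T - 1 ∧ P.q ≤ P.b := by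
  have h := P.GT
  have h1 := P.hκ
  have h2 : P.G * P.d + (P.κ - 1) * P.d = (P.T - 1) * P.d := by
    rw [← add_mul]; congr 1; omega
  have h3 : (P.κ - 1) * P.d + P.d = P.κ * P.d := by
    rw [← Nat.succ_mul]; congr 1; omega
  have := P.h3
  have := P.hk
  have := P.hd
  unfold q b
  omega
lemma xp_lt_b (i : ℕ) (hi : i < P.d) : P.xp i < P.b := (P.xp_lt_q i hi).1.trans_le P.q_le.2.2
lemma l_le_xp (i : ℕ) : P.l ≤ P.xp i := by
  have := P.h2; have := P.hk
  unfold xp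
  have := Nat.zero_le (i * P.T)
  omega
lemma mdT : P.m * P.d ≤ P.T ∧ P.k ≤ P.T := by
  have := P.tT; have := P.h3; have := P.h1; omega
lemma xp_inj (i j : ℕ) (h : P.xp i = P.xp j) : i = j := by
  unfold xp at h
  have := P.T2
  exact Nat.eq_of_mul_eq_mul_right (by omega : 0 < P.T) (by omega)
lemma Jd (J : ℕ) : J * P.d = (J / P.t) * P.T + (J % P.t) * P.d := by
  conv_lhs => rw [← Nat.div_add_mod J P.t]
  unfold T; ring
lemma modlt (J : ℕ) : J % P.t < P.t := Nat.mod_lt _ (by have := P.htpos; omega)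
lemma xp_win (i J : ℕ) (h : P.xp i ∈ P.win J) : J / P.t = i ∧ J % P.t < P.m := by
  unfold win xp at h
  rw [Finset.mem_Ico, P.Jd J] at h
  have hj := P.modlt J
  have hT : P.T = P.t * P.d := rfl
  set i' := J / P.t
  set j := J % P.t
  have h1 := P.h1
  have h2 := P.h2
  have h3 := P.hmd1
  have h4 := P.mdT
  have h5 := P.hk
  have hjt : (j + 1) * P.d ≤ P.t * P.d := Nat.mul_le_mul_right _ hj
  rw [add_mul] at hjt
  rcases lt_trichotomy i i' with hii | hii | hii
  · exfalso
    have : (i + 1) * P.T ≤ i' * P.T := Nat.mul_le_mul_right _ hii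
    rw [add_mul] at this
    omega
  · refine ⟨hii.symm, ?_⟩
    by_contra hjm
    have : P.m * P.d ≤ j * P.d := Nat.mul_le_mul_right _ (by omega)
    rw [hii] at h
    omega
  · exfalso
    have : (i' + 1) * P.T ≤ i * P.T := Nat.mul_le_mul_right _ hii
    rw [add_mul] at this
    omega
lemma Jlast (J : ℕ) (h : P.B ≤ J) (h' : J < P.T) : J = P.B + J % P.t := by
  have hBT := P.BT
  have : J % P.t = J - P.B := by
    have h1 : J = (J - P.B) + P.t * (P.d - 1) := by
      have : P.B = P.t * (P.d - 1) := by unfold B; ring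
      omega
    conv_lhs => rw [h1]
    rw [Nat.add_mul_mod_self_left, Nat.mod_eq_of_lt (by omega)]
  omega

lemma upd_xp {β : Type*} (f u : ℕ → β) (i : ℕ) (hi : i < P.d) : P.upd f u (P.xp i) = u i := by
  unfold upd
  have h : ∃ j, j < P.d ∧ P.xp i = P.xp j := ⟨i, hi, rfl⟩
  rw [dif_pos h]
  congr 1
  exact (P.xp_inj _ _ (Classical.choose_spec h).2).symm
lemma upd_of_ne {β : Type*} (f u : ℕ → β) (y : ℕ) (h : ∀ i < P.d, y ≠ P.xp i) :
    P.upd f u y = f y := by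
  unfold upd
  rw [dif_neg]
  push Not
  exact h

lemma pii_ge (J y : ℕ) (hJ : P.G ≤ J) (hy : y ∈ P.win (J + 1)) : P.pii y < J * P.d + P.k := by
  unfold win at hy
  rw [Finset.mem_Ico, add_mul] at hy
  have h : P.G * P.d ≤ J * P.d := Nat.mul_le_mul_right _ hJ
  have hk := P.hk
  have hq : P.q = P.G * P.d + P.l := rfl
  unfold pii
  split_ifs with h1 h2
  · omega
  · have := (P.xp_lt_q (y - P.q) (by omega)).1
    omega
  · omega

lemma pii_inj : Set.InjOn P.pii {y | P.G * P.d + P.d ≤ y} := by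
  intro y hy z hz h
  have hy' : P.G * P.d + P.d ≤ y := hy
  have hz' : P.G * P.d + P.d ≤ z := hz
  unfold pii at h
  have hx := fun i hi => P.xp_lt_q i hi
  split_ifs at h with h1 h2 h3 h4 h5 h6 h7 h8
  · exact h
  · have := (hx (z - P.q) (by omega)).2; omega
  · omega
  · have := (hx (y - P.q) (by omega)).2; omega
  · have := P.xp_inj _ _ h; omega
  · have := (hx (y - P.q) (by omega)).1; omega
  · omega
  · have := (hx (z - P.q) (by omega)).1; omega
  · omega

lemma win_card (J : ℕ) : (P.win J).card = P.k := by unfold win; simp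

lemma FeN_card (J : ℕ) : (P.FeN J).card = P.k := by
  unfold FeN
  split_ifs with h
  · rw [Finset.card_image_of_injOn, win_card]
    refine P.pii_inj.mono ?_
    intro y hy
    have : (J + 1) * P.d ≤ y := (Finset.mem_Ico.1 hy).1
    have h2 : (P.G + 1) * P.d ≤ (J + 1) * P.d := Nat.mul_le_mul_right _ (by omega)
    rw [add_mul] at h2
    show P.G * P.d + P.d ≤ y
    omega
  · exact P.win_card J

lemma FeN_lt (J y : ℕ) (hy : y ∈ P.FeN J) : y < J * P.d + P.k := by
  unfold FeN at hy
  split_ifs at hy with h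
  · obtain ⟨z, hz, rfl⟩ := Finset.mem_image.1 hy
    exact P.pii_ge J z h hz
  · exact (Finset.mem_Ico.1 hy).2

lemma FeN_new (J y : ℕ) (hy1 : J * P.d + P.l ≤ y) (hy2 : y < J * P.d + P.k) : y ∈ P.FeN J := by
  unfold FeN
  split_ifs with h
  · refine Finset.mem_image.2 ⟨y + P.d, ?_, ?_⟩
    · unfold win; rw [Finset.mem_Ico, add_mul]; have := P.hk; omega
    · have h2 : P.G * P.d ≤ J * P.d := Nat.mul_le_mul_right _ h
      have hq : P.q = P.G * P.d + P.l := rfl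
      unfold pii
      rw [if_neg (by omega), if_neg (by omega)]
      omega
  · unfold win; rw [Finset.mem_Ico]; omega

/-- any set of indices spans enough vertices -/
lemma FeN_union (J' : Finset ℕ) (h : J'.Nonempty) :
    J'.card * P.d + P.l ≤ (J'.biUnion P.FeN).card := by
  induction J' using Finset.induction_on_max with
  | empty => exact absurd h (by simp)
  | insert a s hs ih =>
    have ha : a ∉ s := fun h => lt_irrefl _ (hs a h)
    rw [Finset.card_insert_of_notMem ha, Finset.biUnion_insert]
    rcases s.eq_empty_or_nonempty with rfl | hne
    · have := P.FeN_card a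
      have := P.hk
      simp; omega
    · have ih' := ih hne
      have hsub : Finset.Ico (a * P.d + P.l) (a * P.d + P.k) ∪ s.biUnion P.FeN ⊆
          P.FeN a ∪ s.biUnion P.FeN := by
        refine Finset.union_subset_union ?_ subset_rfl
        intro y hy
        rw [Finset.mem_Ico] at hy
        exact P.FeN_new a y hy.1 hy.2
      have hdis : Disjoint (Finset.Ico (a * P.d + P.l) (a * P.d + P.k)) (s.biUnion P.FeN) := by
        rw [Finset.disjoint_left]
        intro y hy hy'
        obtain ⟨J, hJ, hyJ⟩ := Finset.mem_biUnion.1 hy'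
        have h1 := P.FeN_lt J y hyJ
        have h2 : (J + 1) * P.d ≤ a * P.d := Nat.mul_le_mul_right _ (hs J hJ)
        rw [add_mul] at h2
        rw [Finset.mem_Ico] at hy
        have := P.hk
        omega
      have h3 := Finset.card_le_card hsub
      rw [Finset.card_union_of_disjoint hdis] at h3
      simp only [Nat.card_Ico] at h3
      have := P.hk
      rw [add_mul]
      omega

lemma FeN_inj : Function.Injective P.FeN := by
  have key : ∀ a c, a < c → P.FeN a ≠ P.FeN c := by
    intro a c hac h
    have h1 : c * P.d + P.l ∈ P.FeN c := P.FeN_new c _ le_rfl (by have := P.hk; have := P.hd; omega)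
    rw [← h] at h1
    have h2 := P.FeN_lt a _ h1
    have h3 : (a + 1) * P.d ≤ c * P.d := Nat.mul_le_mul_right _ hac
    rw [add_mul] at h3
    have := P.hk
    omega
  intro a c h
  rcases lt_trichotomy a c with h' | h' | h'
  · exact absurd h (key a c h')
  · exact h'
  · exact absurd h.symm (key c a h')

/-- The special coincidence for `d = 1`. -/
lemma FeN_special (J : ℕ) (hJ : J < P.T - 1) (hm : J % P.t < P.m) : P.FeN J = P.win J := by
  by_cases h : P.G ≤ J
  · have hB : P.B ≤ J := by have : P.G = P.B + P.g := rfl; omega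
    have h1 := P.Jlast J hB (by omega)
    have hG : P.G = P.B + P.g := rfl
    rcases P.hgm with h2 | ⟨h2, h3⟩
    · omega
    · have hJG : J = P.G := by omega
      symm
      apply Finset.eq_of_subset_of_card_le _ (by rw [FeN_card, win_card])
      have hB0 : P.B = 0 := by unfold B; rw [h2]; simp
      intro y hy
      unfold win at hy
      rw [Finset.mem_Ico, h2] at hy
      by_cases hyG : y = J
      · unfold FeN
        rw [if_pos h]
        refine Finset.mem_image.2 ⟨P.q, ?_, ?_⟩
        · unfold win q; rw [Finset.mem_Ico, h2]; have := P.hk; have := P.hl; omega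
        · unfold pii
          rw [if_neg (lt_irrefl _), if_pos (by omega)]
          unfold xp
          rw [h2]; simp; omega
      · by_cases hy2 : J * P.d + P.l ≤ y
        · refine P.FeN_new J y hy2 ?_
          rw [h2]; exact hy.2
        · unfold FeN
          rw [if_pos h]
          refine Finset.mem_image.2 ⟨y, ?_, ?_⟩
          · unfold win; rw [Finset.mem_Ico, h2]; omega
          · unfold pii
            rw [if_pos]
            unfold q
            rw [← hJG]; omega
  · unfold FeN; rw [if_neg h]

end Par


/-- extension of a tuple to all naturals -/
def ev {n b : ℕ} (hb : 0 < b) (w : Fin b → Fin n) (y : ℕ) : Fin n := w ⟨min y (b - 1), by omega⟩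

lemma ev_val {n b : ℕ} (hb : 0 < b) (w : Fin b → Fin n) (y : Fin b) : ev hb w y = w y := by
  unfold ev
  congr 1
  ext
  have := y.isLt
  simp; omega

lemma img_fin {n b : ℕ} (w : Fin b → Fin n) (f : ℕ → Fin n) (hf : ∀ y : Fin b, w y = f y)
    (s : Finset ℕ) (hs : ∀ y ∈ s, y < b) :
    (Finset.univ.filter (fun m : Fin b => (m : ℕ) ∈ s)).image w = s.image f := by
  ext x
  simp only [mem_image, mem_filter, mem_univ, true_and]
  constructor
  · rintro ⟨y, hy, rfl⟩
    exact ⟨y, hy, (hf y).symm⟩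
  · rintro ⟨y, hy, rfl⟩
    exact ⟨⟨y, hs y hy⟩, hy, hf ⟨y, hs y hy⟩⟩

namespace Par
variable (P : Par)

lemma edgeIdx_eq (i : ℕ) : edgeIdx P.k (P.k - P.l) 0 i = P.win i := by
  have hk := P.hk
  have : P.k - P.l = P.d := by omega
  rw [this]
  unfold edgeIdx win
  ext x
  simp only [mem_image, mem_range, mem_Ico]
  constructor
  · rintro ⟨j, hj, rfl⟩; omega
  · intro h; exact ⟨x - i * P.d, by omega, by omega⟩

/-- random edges as subsets of `Fin b` -/
noncomputable def Fe (J : ℕ) : Finset (Fin P.b) := Finset.univ.filter (fun y => (y : ℕ) ∈ P.FeN J)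

/-- requirement on `H` -/
def Req {n : ℕ} (H : Finset (Finset (Fin n))) (f u : ℕ → Fin n) : Prop :=
  (∀ J < P.T - 1, P.HT J → (P.win J).image (P.upd f u) ∈ H) ∧
  (Finset.Ico (P.G * P.d) (P.G * P.d + P.l)).image (P.upd f u) ∪
    (Finset.range P.d).image (fun i => f (P.xp i)) ∈ H

/-- Template tuples for `W` -/
noncomputable def LL {n : ℕ} (H : Finset (Finset (Fin n))) (U W : Finset (Fin n)) :
    Finset (Fin P.b → Fin n) :=
  Finset.univ.filter (fun w => Function.Injective w ∧ (∀ y, w y ∉ U) ∧ (∀ y, w y ∉ W) ∧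
    ∃ u : ℕ → Fin n, (Finset.range P.d).image u = W ∧ P.Req H (ev P.bpos w) u)

lemma Fe_map (J : ℕ) (hJ : J < P.T - 1) : (P.Fe J).map Fin.valEmbedding = P.FeN J := by
  ext y
  simp only [Fe, mem_map, mem_filter, mem_univ, true_and, Fin.valEmbedding_apply]
  constructor
  · rintro ⟨z, hz, rfl⟩; exact hz
  · intro hy
    exact ⟨⟨y, (P.FeN_lt J y hy).trans_le (P.winlen J hJ)⟩, hy, rfl⟩

lemma JJ_lt {J : ℕ} (hJ : J ∈ P.JJ) : J < P.T - 1 :=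
  Finset.mem_range.1 (Finset.mem_filter.1 hJ).1

lemma JJ_card : P.JJ.card ≤ P.T - 1 := by
  have := Finset.card_filter_le (Finset.range (P.T - 1))
    (fun J => P.G ≤ J ∨ J % P.t < P.m ∨ ¬ P.HT J)
  simpa [JJ] using this

lemma JJ_ne : P.JJ.Nonempty := by
  refine ⟨0, ?_⟩
  unfold JJ
  rw [mem_filter, mem_range]
  have := P.T2; have := P.hm
  exact ⟨by omega, Or.inr (Or.inl (by simp; omega))⟩

lemma Fe_card (J : ℕ) (hJ : J ∈ P.JJ) : (P.Fe J).card = P.k := by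
  rw [← P.FeN_card J, ← P.Fe_map J (P.JJ_lt hJ), Finset.card_map]

lemma Fe_inj : Set.InjOn P.Fe P.JJ := by
  intro a ha c hc h
  apply P.FeN_inj
  rw [← P.Fe_map a (P.JJ_lt ha), ← P.Fe_map c (P.JJ_lt hc), h]

lemma Fe_union (J' : Finset ℕ) (hJ : J' ⊆ P.JJ) (h : J'.Nonempty) :
    J'.card * P.d + P.l ≤ (J'.biUnion P.Fe).card := by
  refine (P.FeN_union J' h).trans ?_
  have : J'.biUnion P.FeN = (J'.biUnion P.Fe).map Fin.valEmbedding := by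
    ext y
    simp only [mem_biUnion, mem_map]
    constructor
    · rintro ⟨a, ha, hy⟩
      rw [← P.Fe_map a (P.JJ_lt (hJ ha)), mem_map] at hy
      obtain ⟨z, hz, rfl⟩ := hy
      exact ⟨z, ⟨a, ha, hz⟩, rfl⟩
    · rintro ⟨z, ⟨a, ha, hz⟩, rfl⟩
      refine ⟨a, ha, ?_⟩
      rw [← P.Fe_map a (P.JJ_lt (hJ ha))]
      exact Finset.mem_map_of_mem _ hz
  rw [this, Finset.card_map]

lemma Rw_mem {n : ℕ} (E : Finset (Finset (Fin n))) (w : Fin P.b → Fin n)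
    (hR : Rw P.JJ P.Fe w ⊆ E) (J : ℕ) (hJ : J ∈ P.JJ) : (P.FeN J).image (ev P.bpos w) ∈ E := by
  rw [← img_fin w (ev P.bpos w) (fun y => (ev_val P.bpos w y).symm) (P.FeN J)
    (fun y hy => (P.FeN_lt J y hy).trans_le (P.winlen J (P.JJ_lt hJ)))]
  exact hR (Finset.mem_image_of_mem (fun J => (P.Fe J).image w) hJ)

lemma upd_img_eq {β : Type*} [DecidableEq β] (f u : ℕ → β) (J : ℕ) (h : P.m ≤ J % P.t) :
    (P.win J).image (P.upd f u) = (P.win J).image f := by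
  apply Finset.image_congr
  intro y hy
  apply P.upd_of_ne
  rintro i _ rfl
  have := (P.xp_win i J hy).2
  omega

lemma w_edge {n : ℕ} (H E : Finset (Finset (Fin n))) (w : Fin P.b → Fin n) (u : ℕ → Fin n)
    (hReq : P.Req H (ev P.bpos w) u)
    (hR : Rw P.JJ P.Fe w ⊆ E) (J : ℕ) (hJ : J < P.T - 1) :
    (P.win J).image (ev P.bpos w) ∈ H ∪ E := by
  by_cases hm : J % P.t < P.m
  · apply Finset.mem_union_right
    rw [← P.FeN_special J hJ hm]
    refine P.Rw_mem E w hR J ?_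
    exact Finset.mem_filter.2 ⟨Finset.mem_range.2 hJ, Or.inr (Or.inl hm)⟩
  · by_cases hH : P.HT J
    · apply Finset.mem_union_left
      rw [← P.upd_img_eq _ u J (by omega)]
      exact hReq.1 J hJ hH
    · apply Finset.mem_union_right
      have h1 : P.FeN J = P.win J := by
        unfold FeN
        rw [if_neg]
        intro hG
        exact hH (Or.inr (by have : P.G = P.B + P.g := rfl; omega))
      rw [← h1]
      refine P.Rw_mem E w hR J ?_
      exact Finset.mem_filter.2 ⟨Finset.mem_range.2 hJ, Or.inr (Or.inr hH)⟩

lemma spans_w {n : ℕ} (H E : Finset (Finset (Fin n))) (U W : Finset (Fin n))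
    (w : Fin P.b → Fin n) (hw : w ∈ P.LL H U W) (hR : Rw P.JJ P.Fe w ⊆ E) :
    SpansPath P.k P.l (P.T - 1) (H ∪ E) w := by
  obtain ⟨hi, hU, hW, u, hu, hReq⟩ := (Finset.mem_filter.1 hw).2
  refine ⟨hi, fun i hiT => ?_⟩
  rw [P.edgeIdx_eq]
  rw [img_fin w (ev P.bpos w) (fun y => (ev_val P.bpos w y).symm)]
  · exact P.w_edge H E w u hReq hR i hiT
  · intro y hy
    exact (Finset.mem_Ico.1 hy).2.trans_le (P.winlen i hiT)

lemma upd_big {β : Type*} (f u : ℕ → β) (y : ℕ) (hy : P.G * P.d + P.d ≤ y) :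
    P.upd f u y = f y := by
  apply P.upd_of_ne
  rintro i hi rfl
  have := (P.xp_lt_q i hi).2
  omega

lemma firstEnd_eq {n c : ℕ} (w : Fin c → Fin n) (f : ℕ → Fin n) (hf : ∀ y : Fin c, w y = f y)
    (l : ℕ) (hl : l ≤ c) : firstEnd l w = (Finset.range l).image f := by
  rw [← img_fin w f hf (Finset.range l) (fun y hy => (Finset.mem_range.1 hy).trans_le hl)]
  unfold firstEnd
  simp

lemma lastEnd_eq {n c : ℕ} (w : Fin c → Fin n) (f : ℕ → Fin n) (hf : ∀ y : Fin c, w y = f y)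
    (l : ℕ) : lastEnd l w = (Finset.Ico (c - l) c).image f := by
  rw [← img_fin w f hf (Finset.Ico (c - l) c) (fun y hy => (Finset.mem_Ico.1 hy).2)]
  unfold lastEnd
  simp

lemma ends_w {n : ℕ} (H : Finset (Finset (Fin n))) (U W : Finset (Fin n))
    (w : Fin P.b → Fin n) (hw : w ∈ P.LL H U W) :
    firstEnd P.l w ∈ shadowL P.l H ∧ lastEnd P.l w ∈ shadowL P.l H := by
  obtain ⟨hi, hU, hW, u, hu, hReq⟩ := (Finset.mem_filter.1 hw).2
  have hlb : P.l ≤ P.b := by unfold b; omega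
  have hT := P.T2
  have hk := P.hk
  constructor
  · refine Finset.mem_filter.2 ⟨Finset.mem_powersetCard.2 ⟨Finset.subset_univ _, ?_⟩, ?_⟩
    · unfold firstEnd
      rw [Finset.card_image_of_injective _ hi, Fin.card_filter_val_lt]
      omega
    · refine ⟨_, hReq.1 0 (by omega) (Or.inl (by simp)), ?_⟩
      rw [firstEnd_eq w (ev P.bpos w) (fun y => (ev_val P.bpos w y).symm) P.l hlb]
      intro x hx
      obtain ⟨y, hy, rfl⟩ := Finset.mem_image.1 hx
      rw [Finset.mem_range] at hy
      refine Finset.mem_image.2 ⟨y, ?_, ?_⟩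
      · unfold win; rw [Finset.mem_Ico]; omega
      · apply P.upd_of_ne
        rintro i _ rfl
        have := P.l_le_xp i
        omega
  · refine Finset.mem_filter.2 ⟨Finset.mem_powersetCard.2 ⟨Finset.subset_univ _, ?_⟩, ?_⟩
    · unfold lastEnd
      rw [Finset.card_image_of_injective _ hi]
      have h2 : (Finset.univ.filter (fun m : Fin P.b => P.b - P.l ≤ (m : ℕ))).map Fin.valEmbedding
          = Finset.Ico (P.b - P.l) P.b := by
        ext y
        simp only [mem_map, mem_filter, mem_univ, true_and, Fin.valEmbedding_apply, mem_Ico]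
        constructor
        · rintro ⟨z, hz, rfl⟩; exact ⟨hz, z.isLt⟩
        · rintro ⟨h1, h2⟩; exact ⟨⟨y, h2⟩, h1, rfl⟩
      have h3 := congrArg Finset.card h2
      rw [Finset.card_map, Nat.card_Ico] at h3
      omega
    · have hwl := P.win_last
      have hBT := P.BT
      have htp := P.htpos
      refine ⟨_, hReq.1 (P.T - 2) hwl.2 (Or.inr (by omega)), ?_⟩
      rw [lastEnd_eq w (ev P.bpos w) (fun y => (ev_val P.bpos w y).symm) P.l]
      intro x hx
      obtain ⟨y, hy, rfl⟩ := Finset.mem_image.1 hx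
      rw [Finset.mem_Ico] at hy
      refine Finset.mem_image.2 ⟨y, ?_, ?_⟩
      · unfold win; rw [Finset.mem_Ico]; omega
      · apply P.upd_of_ne
        rintro i hi' rfl
        have h1 := (P.xp_lt_q i hi').1
        have h2 := P.q_le.1
        have h3 : P.b = (P.T - 1) * P.d + P.l := rfl
        omega

/-- the absorbing path -/
noncomputable def abs' {β : Type*} (f u : ℕ → β) (y : ℕ) : β :=
  if y < P.q then P.upd f u y else if y < P.q + P.d then f (P.xp (y - P.q)) else f (y - P.d)

lemma abs'_pii {β : Type*} (f u : ℕ → β) (y : ℕ) (hy : P.G * P.d + P.d ≤ y) :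
    P.abs' f u y = f (P.pii y) := by
  unfold abs' pii
  split_ifs with h1 h2
  · exact P.upd_big f u y hy
  · rfl
  · rfl

lemma abs_edge {n : ℕ} (H E : Finset (Finset (Fin n))) (w : Fin P.b → Fin n) (u : ℕ → Fin n)
    (hReq : P.Req H (ev P.bpos w) u)
    (hR : Rw P.JJ P.Fe w ⊆ E) (J : ℕ) (hJ : J < P.T) :
    (P.win J).image (P.abs' (ev P.bpos w) u) ∈ H ∪ E := by
  have hk := P.hk
  have hq : P.q = P.G * P.d + P.l := rfl
  have hGT := P.q_le.2.1
  have hGB : P.G = P.B + P.g := rfl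
  set f := ev P.bpos w with hf
  rcases lt_trichotomy J P.G with hG | hG | hG
  · have h1 : (P.win J).image (P.abs' f u) = (P.win J).image (P.upd f u) := by
      apply Finset.image_congr
      intro y hy
      have hy := (Finset.mem_Ico.1 hy).2
      have : (J + 1) * P.d ≤ P.G * P.d := Nat.mul_le_mul_right _ hG
      rw [add_mul] at this
      unfold abs'
      rw [if_pos (by omega)]
    rw [h1]
    by_cases hH : P.HT J
    · exact Finset.mem_union_left _ (hReq.1 J (by omega) hH)
    · have hmod : P.g < J % P.t := by
        unfold HT at hH; push Not at hH; exact hH.1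
      rw [P.upd_img_eq f u J (by rcases P.hgm with h | h <;> omega)]
      exact P.w_edge H E w u hReq hR J (by omega)
  · apply Finset.mem_union_left
    have h2 := hReq.2
    convert h2 using 1
    subst hG
    have hsplit : P.win P.G = Finset.Ico (P.G * P.d) (P.G * P.d + P.l) ∪
        (Finset.range P.d).image (fun i => P.q + i) := by
      ext y
      simp only [win, mem_Ico, mem_union, mem_image, mem_range]
      constructor
      · intro h
        by_cases hy : y < P.G * P.d + P.l
        · left; omega
        · right; exact ⟨y - P.q, by omega, by omega⟩
      · rintro (h | ⟨i, hi, rfl⟩) <;> omega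
    rw [hsplit, Finset.image_union, Finset.image_image]
    congr 1
    · apply Finset.image_congr
      intro y hy
      have hy := Finset.mem_Ico.1 hy
      unfold abs'
      rw [if_pos (by omega)]
    · apply Finset.image_congr
      intro i hi
      have hi := Finset.mem_range.1 hi
      simp only [Function.comp]
      unfold abs'
      rw [if_neg (by omega), if_pos (by omega)]
      simp
  · apply Finset.mem_union_right
    obtain ⟨K, rfl⟩ : ∃ K, J = K + 1 := ⟨J - 1, by omega⟩
    have hKG : P.G ≤ K := by omega
    have h1 : (P.win (K + 1)).image (P.abs' f u) = (P.FeN K).image f := by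
      unfold FeN
      rw [if_pos hKG, Finset.image_image]
      apply Finset.image_congr
      intro y hy
      apply P.abs'_pii
      have hy := (Finset.mem_Ico.1 hy).1
      have : (P.G + 1) * P.d ≤ (K + 1) * P.d := Nat.mul_le_mul_right _ (by omega)
      rw [add_mul] at this
      omega
    rw [h1]
    refine P.Rw_mem E w hR K ?_
    exact Finset.mem_filter.2 ⟨Finset.mem_range.2 (by omega), Or.inl hKG⟩

lemma absorber_w {n : ℕ} (H E : Finset (Finset (Fin n))) (U W : Finset (Fin n))
    (w : Fin P.b → Fin n) (hw : w ∈ P.LL H U W) (hR : Rw P.JJ P.Fe w ⊆ E) (hWc : W.card = P.d) :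
    IsAbsorber P.k P.l (P.T - 1) (H ∪ E) w W := by
  obtain ⟨hi, hU, hW, u, hu, hReq⟩ := (Finset.mem_filter.1 hw).2
  refine ⟨hW, fun y => P.abs' (ev P.bpos w) u y, ?_⟩
  set f := ev P.bpos w with hf
  have hfv : ∀ y : Fin P.b, w y = f y := fun y => (ev_val P.bpos w y).symm
  have hk := P.hk
  have hq : P.q = P.G * P.d + P.l := rfl
  have hql := P.q_le
  have hT := P.T2
  have hb : P.b = (P.T - 1) * P.d + P.l := rfl
  have hTd : (P.T - 1) * P.d + P.d = P.T * P.d := by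
    rw [← Nat.succ_mul]; congr 1; omega
  have himg : Finset.image (fun y : Fin (P.b + W.card) => P.abs' f u y) Finset.univ
      = Finset.image w Finset.univ ∪ W := by
    apply Finset.Subset.antisymm
    · intro x hx
      obtain ⟨y, _, rfl⟩ := Finset.mem_image.1 hx
      have hy := y.isLt
      have hwin : ∀ z, z < P.b → f z ∈ Finset.image w Finset.univ ∪ W := fun z hz =>
        Finset.mem_union_left _ (Finset.mem_image.2 ⟨⟨z, hz⟩, Finset.mem_univ _, hfv ⟨z, hz⟩⟩)
      simp only [abs']
      split_ifs with h1 h2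
      · by_cases hx : ∃ i, i < P.d ∧ (y : ℕ) = P.xp i
        · obtain ⟨i, hi, hxi⟩ := hx
          rw [hxi, P.upd_xp f u i hi]
          apply Finset.mem_union_right
          rw [← hu]
          exact Finset.mem_image_of_mem _ (Finset.mem_range.2 hi)
        · push Not at hx
          rw [P.upd_of_ne f u y hx]
          exact hwin _ (by omega)
      · exact hwin _ (P.xp_lt_b _ (by omega))
      · exact hwin _ (by omega)
    · intro x hx
      rcases Finset.mem_union.1 hx with hx | hx
      · obtain ⟨y, _, rfl⟩ := Finset.mem_image.1 hx
        have hy := y.isLt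
        by_cases hyq : P.q ≤ y
        · refine Finset.mem_image.2 ⟨⟨y + P.d, by omega⟩, Finset.mem_univ _, ?_⟩
          simp only [abs']
          rw [if_neg (by omega), if_neg (by omega), hfv]
          congr 1; omega
        · by_cases hx : ∃ i, i < P.d ∧ (y : ℕ) = P.xp i
          · obtain ⟨i, hi, hxi⟩ := hx
            refine Finset.mem_image.2 ⟨⟨P.q + i, by omega⟩, Finset.mem_univ _, ?_⟩
            simp only [abs']
            rw [if_neg (by omega), if_pos (by omega), hfv, hxi]
            congr 2; omega
          · push Not at hx
            refine Finset.mem_image.2 ⟨⟨y, by omega⟩, Finset.mem_univ _, ?_⟩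
            simp only [abs']
            rw [if_pos (by omega), P.upd_of_ne f u y hx, hfv]
      · rw [← hu] at hx
        obtain ⟨i, hi, rfl⟩ := Finset.mem_image.1 hx
        have hi := Finset.mem_range.1 hi
        have h1 := P.xp_lt_q i hi
        refine Finset.mem_image.2 ⟨⟨P.xp i, by have := P.xp_lt_b i hi; omega⟩, Finset.mem_univ _, ?_⟩
        simp only [abs']
        rw [if_pos h1.1, P.upd_xp f u i hi]
  refine ⟨⟨?_, ?_⟩, himg, ?_, ?_⟩
  · have hc : (Finset.image (fun y : Fin (P.b + W.card) => P.abs' f u y) Finset.univ).card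
        = (Finset.univ : Finset (Fin (P.b + W.card))).card := by
      rw [himg, Finset.card_union_of_disjoint, Finset.card_image_of_injective _ hi]
      · simp
      · rw [Finset.disjoint_left]
        intro x hx hx'
        obtain ⟨y, _, rfl⟩ := Finset.mem_image.1 hx
        exact hW y hx'
    have := Finset.card_image_iff.1 hc
    simpa [Set.injOn_univ] using this
  · intro i hiT
    rw [P.edgeIdx_eq, img_fin _ (P.abs' f u) (fun y => rfl)]
    · exact P.abs_edge H E w u hReq hR i (by omega)
    · intro y hy
      have hy := (Finset.mem_Ico.1 hy).2
      have : (i + 1) * P.d ≤ P.T * P.d := Nat.mul_le_mul_right _ (by omega)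
      rw [add_mul] at this
      omega
  · rw [firstEnd_eq _ (P.abs' f u) (fun y => rfl) P.l (by omega),
      firstEnd_eq w f hfv P.l (by omega)]
    apply Finset.image_congr
    intro y hy
    have hy := Finset.mem_range.1 hy
    simp only [abs']
    rw [if_pos (by omega)]
    apply P.upd_of_ne
    rintro i _ rfl
    have := P.l_le_xp i
    omega
  · rw [lastEnd_eq _ (P.abs' f u) (fun y => rfl) P.l, lastEnd_eq w f hfv P.l]
    ext x
    simp only [mem_image, mem_Ico]
    constructor
    · rintro ⟨y, hy, rfl⟩
      refine ⟨y - P.d, by omega, ?_⟩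
      simp only [abs']
      rw [if_neg (by omega), if_neg (by omega)]
    · rintro ⟨y, hy, rfl⟩
      refine ⟨y + P.d, by omega, ?_⟩
      simp only [abs']
      rw [if_neg (by omega), if_neg (by omega)]
      congr 1; omega

end Par


lemma card_sets_mem {n d : ℕ} (x : Fin n) :
    ((Finset.univ.powersetCard d).filter (fun D : Finset (Fin n) => x ∈ D)).card ≤ n ^ (d - 1) := by
  have h : ((Finset.univ.powersetCard d).filter (fun D : Finset (Fin n) => x ∈ D)).card ≤
      ((Finset.univ : Finset (Fin n)).powersetCard (d - 1)).card := by
    refine Finset.card_le_card_of_injOn (fun D => D.erase x) ?_ ?_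
    · intro D hD
      simp only [coe_filter, mem_powersetCard, subset_univ, true_and, Set.mem_ofPred_eq] at hD
      simp only [mem_coe, mem_powersetCard, subset_univ, true_and]
      rw [Finset.card_erase_of_mem hD.2, hD.1]
    · intro D hD D' hD' h
      simp only [coe_filter, mem_powersetCard, subset_univ, true_and, Set.mem_ofPred_eq] at hD hD'
      rw [← Finset.insert_erase hD.2, ← Finset.insert_erase hD'.2]
      exact congrArg (insert x) h
  refine h.trans ?_
  rw [Finset.card_powersetCard, Finset.card_univ, Fintype.card_fin]
  exact Nat.choose_le_pow n (d - 1)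

lemma hit_count {n d : ℕ} (U : Finset (Fin n)) :
    ((Finset.univ.powersetCard d).filter (fun D : Finset (Fin n) => ¬ Disjoint D U)).card
      ≤ U.card * n ^ (d - 1) := by
  have h : (Finset.univ.powersetCard d).filter (fun D : Finset (Fin n) => ¬ Disjoint D U) ⊆
      U.biUnion (fun x => (Finset.univ.powersetCard d).filter (fun D : Finset (Fin n) => x ∈ D)) := by
    intro D hD
    rw [mem_filter] at hD
    obtain ⟨x, hx, hxU⟩ := Finset.not_disjoint_iff.1 hD.2
    exact Finset.mem_biUnion.2 ⟨x, hxU, Finset.mem_filter.2 ⟨hD.1, hx⟩⟩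
  exact (Finset.card_le_card h).trans
    (Finset.card_biUnion_le_card_mul _ _ _ fun x _ => card_sets_mem x)

/-- Extensions of `S` -/
noncomputable def ExtS {n : ℕ} (H : Finset (Finset (Fin n))) (U S : Finset (Fin n)) (d : ℕ) :
    Finset (Finset (Fin n)) :=
  (Finset.univ.powersetCard d).filter (fun D => Disjoint D S ∧ Disjoint D U ∧ S ∪ D ∈ H)

lemma ext_count {n k d l : ℕ} (hd : 1 ≤ d) (hk : k = d + l) (η : ℝ) (hη : 0 < η)
    (H : Finset (Finset (Fin n))) (hH : H ⊆ kSets n k) (U : Finset (Fin n))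
    (hU : (U.card : ℝ) ≤ η * n / 3)
    (hdeg : ∀ S : Finset (Fin n), S.card = l →
        degOf H S = 0 ∨ η * (n : ℝ) ^ d ≤ (degOf H S : ℝ))
    (S e : Finset (Fin n)) (hS : S.card = l) (he : e ∈ H) (hSe : S ⊆ e) :
    2 * η / 3 * (n : ℝ) ^ d ≤ (ExtS H U S d).card := by
  have h1 : η * (n : ℝ) ^ d ≤ (degOf H S : ℝ) := by
    rcases hdeg S hS with h | h
    · exfalso
      unfold degOf at h
      rw [Finset.card_eq_zero] at h
      have : e ∈ H.filter (fun e => S ⊆ e) := Finset.mem_filter.2 ⟨he, hSe⟩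
      rw [h] at this
      simp at this
    · exact h
  have h2 : degOf H S ≤ (ExtS H U S d).card +
      ((Finset.univ.powersetCard d).filter (fun D : Finset (Fin n) => ¬ Disjoint D U)).card := by
    refine le_trans ?_ (Finset.card_union_le _ _)
    unfold degOf
    refine Finset.card_le_card_of_injOn (fun e => e \ S) ?_ ?_
    · intro f hf
      rw [mem_coe, mem_filter] at hf
      have hfk : f.card = k := (Finset.mem_powersetCard.1 (hH hf.1)).2
      have hc : (f \ S).card = d := by
        rw [Finset.card_sdiff_of_subset hf.2, hfk, hS]; omega
      have hp : f \ S ∈ (Finset.univ : Finset (Fin n)).powersetCard d :=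
        Finset.mem_powersetCard.2 ⟨Finset.subset_univ _, hc⟩
      rw [mem_coe, mem_union]
      by_cases hdis : Disjoint (f \ S) U
      · left
        refine Finset.mem_filter.2 ⟨hp, Finset.sdiff_disjoint, hdis, ?_⟩
        rw [Finset.union_sdiff_of_subset hf.2]; exact hf.1
      · right
        exact Finset.mem_filter.2 ⟨hp, hdis⟩
    · intro f hf f' hf' h
      rw [mem_coe, mem_filter] at hf hf'
      simp only at h
      rw [← Finset.union_sdiff_of_subset hf.2, ← Finset.union_sdiff_of_subset hf'.2, h]
  have h3 := hit_count (d := d) U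
  have h4 : (degOf H S : ℝ) ≤ (ExtS H U S d).card + (U.card : ℝ) * (n : ℝ) ^ (d - 1) := by
    exact_mod_cast h2.trans (Nat.add_le_add_left h3 _)
  have h5 : (U.card : ℝ) * (n : ℝ) ^ (d - 1) ≤ η * n / 3 * (n : ℝ) ^ (d - 1) :=
    mul_le_mul_of_nonneg_right hU (by positivity)
  have h6 : η * n / 3 * (n : ℝ) ^ (d - 1) = η / 3 * (n : ℝ) ^ d := by
    obtain ⟨f, rfl⟩ : ∃ f, d = f + 1 := ⟨d - 1, by omega⟩
    simp only [Nat.add_sub_cancel, pow_succ]; ring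
  linarith

/-- real double counting -/
lemma dc {α β : Type*} (s : Finset α) (t : Finset β) (r : α → β → Prop) [∀ x y, Decidable (r x y)] (a c : ℝ)
    (h1 : ∀ x ∈ s, a ≤ ((t.filter (fun y => r x y)).card : ℝ))
    (h2 : ∀ y ∈ t, ((s.filter (fun x => r x y)).card : ℝ) ≤ c) :
    a * s.card ≤ c * t.card := by
  have h := Finset.sum_card_bipartiteAbove_eq_sum_card_bipartiteBelow (s := s) (t := t) r
  have h' : (∑ x ∈ s, ((t.filter (fun y => r x y)).card : ℝ))
      = ∑ y ∈ t, ((s.filter (fun x => r x y)).card : ℝ) := by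
    have := congrArg (Nat.cast : ℕ → ℝ) h
    push_cast at this
    simpa [Finset.bipartiteAbove, Finset.bipartiteBelow] using this
  have e1 := Finset.sum_le_sum h1
  have e2 := Finset.sum_le_sum h2
  rw [Finset.sum_const, nsmul_eq_mul] at e1 e2
  linarith

/-- edges at `v` with few other vertices in `U` -/
noncomputable def EU {n : ℕ} (H : Finset (Finset (Fin n))) (U : Finset (Fin n)) (v : Fin n) (j : ℕ) :
    Finset (Finset (Fin n)) := H.filter (fun e => v ∈ e ∧ ((e.erase v) ∩ U).card ≤ j)

lemma EU_step {n k d l : ℕ} (hd : 1 ≤ d) (hl : 1 ≤ l) (hk : k = d + l) (η : ℝ) (hη : 0 < η)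
    (hn : 0 < n)
    (H : Finset (Finset (Fin n))) (hH : H ⊆ kSets n k) (U : Finset (Fin n))
    (hU : (U.card : ℝ) ≤ η * n / 3)
    (hdeg : ∀ S : Finset (Fin n), S.card = l →
        degOf H S = 0 ∨ η * (n : ℝ) ^ d ≤ (degOf H S : ℝ)) (v : Fin n) (j : ℕ) :
    2 * η / 3 / 2 ^ k * (EU H U v (j + 1)).card ≤ (EU H U v j).card := by
  have hkc : ∀ e ∈ H, e.card = k := fun e he => (Finset.mem_powersetCard.1 (hH he)).2
  have key := dc (EU H U v (j + 1)) (EU H U v j)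
    (fun e e' => ∃ S : Finset (Fin n), S.card = l ∧ S ⊆ e ∧ S ⊆ e')
    (2 * η / 3 * (n : ℝ) ^ d) (2 ^ k * (n : ℝ) ^ d) ?_ ?_
  · have hnp : (0 : ℝ) < (n : ℝ) ^ d := by positivity
    have h2 : (0 : ℝ) < 2 ^ k := by positivity
    rw [div_mul_eq_mul_div, div_le_iff₀ h2]
    have : (2 * η / 3 * (EU H U v (j + 1)).card) * (n : ℝ) ^ d
        ≤ ((EU H U v j).card * 2 ^ k) * (n : ℝ) ^ d := by linarith
    exact le_of_mul_le_mul_right this hnp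
  · intro e he
    obtain ⟨heH, hve, hej⟩ := Finset.mem_filter.1 he
    have hcard := hkc e heH
    -- choose a vertex to drop
    obtain ⟨x, hx, hxU⟩ : ∃ x ∈ e.erase v, ((e.erase v).erase x ∩ U).card ≤ j := by
      by_cases hne : ((e.erase v) ∩ U).Nonempty
      · obtain ⟨x, hx⟩ := hne
        refine ⟨x, (Finset.mem_inter.1 hx).1, ?_⟩
        rw [Finset.erase_inter, Finset.card_erase_of_mem hx]
        omega
      · have hne' : (e.erase v).Nonempty := by
          rw [← Finset.card_pos, Finset.card_erase_of_mem hve]; omega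
        obtain ⟨x, hx⟩ := hne'
        refine ⟨x, hx, ?_⟩
        rw [Finset.not_nonempty_iff_eq_empty] at hne
        rw [Finset.erase_inter, hne]; simp
    have hvx : v ∈ e.erase x := by
      have := (Finset.mem_erase.1 hx).1
      exact Finset.mem_erase.2 ⟨fun h => this h.symm, hve⟩
    obtain ⟨S, hvS, hSe, hSl⟩ := Finset.exists_subsuperset_card_eq
      (s := {v}) (t := e.erase x) (n := l) (Finset.singleton_subset_iff.2 hvx) (by simpa using hl)
      (by rw [Finset.card_erase_of_mem (Finset.mem_of_mem_erase hx)]; omega)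
    have hvS := Finset.singleton_subset_iff.1 hvS
    have hSe' : S ⊆ e := hSe.trans (Finset.erase_subset _ _)
    refine (ext_count hd hk η hη H hH U hU hdeg S e hSl heH hSe').trans ?_
    have : (ExtS H U S d).card ≤ ((EU H U v j).filter (fun e' =>
        ∃ S : Finset (Fin n), S.card = l ∧ S ⊆ e ∧ S ⊆ e')).card := by
      refine Finset.card_le_card_of_injOn (fun D => S ∪ D) ?_ ?_
      · intro D hD
        obtain ⟨hDc, hDS, hDU, hDH⟩ := Finset.mem_filter.1 hD
        rw [mem_coe, mem_filter]
        refine ⟨Finset.mem_filter.2 ⟨hDH, Finset.mem_union_left _ hvS, ?_⟩,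
          S, hSl, hSe', Finset.subset_union_left⟩
        refine le_trans (Finset.card_le_card ?_) hxU
        intro y hy
        rw [mem_inter, mem_erase, mem_union] at hy
        obtain ⟨⟨hyv, hySD⟩, hyU⟩ := hy
        have hyS : y ∈ S := by
          rcases hySD with h | h
          · exact h
          · exact absurd hyU (Finset.disjoint_left.1 hDU h)
        have := Finset.mem_erase.1 (hSe hyS)
        exact Finset.mem_inter.2 ⟨Finset.mem_erase.2 ⟨this.1, Finset.mem_erase.2 ⟨hyv, this.2⟩⟩, hyU⟩
      · intro D hD D' hD' h
        obtain ⟨_, hDS, _⟩ := Finset.mem_filter.1 hD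
        obtain ⟨_, hDS', _⟩ := Finset.mem_filter.1 hD'
        simp only at h
        have e1 : (S ∪ D) \ S = D := by
          rw [Finset.union_sdiff_left]; exact Finset.sdiff_eq_self_of_disjoint hDS
        have e2 : (S ∪ D') \ S = D' := by
          rw [Finset.union_sdiff_left]; exact Finset.sdiff_eq_self_of_disjoint hDS'
        rw [← e1, ← e2, h]
    exact_mod_cast this
  · intro e' he'
    obtain ⟨heH, _⟩ := Finset.mem_filter.1 he'
    have hcard := hkc e' heH
    have : ((EU H U v (j + 1)).filter (fun e =>
        ∃ S : Finset (Fin n), S.card = l ∧ S ⊆ e ∧ S ⊆ e')).card ≤ 2 ^ k * n ^ d := by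
      have hsub : (EU H U v (j + 1)).filter (fun e =>
          ∃ S : Finset (Fin n), S.card = l ∧ S ⊆ e ∧ S ⊆ e') ⊆
          (e'.powerset.filter (fun S => S.card = l)).biUnion (fun S =>
            (Finset.univ.powersetCard d).image (fun D => S ∪ D)) := by
        intro e he
        obtain ⟨he1, S, hSl, hSe, hSe'⟩ := Finset.mem_filter.1 he
        have heH2 := (Finset.mem_filter.1 he1).1
        refine Finset.mem_biUnion.2 ⟨S, Finset.mem_filter.2 ⟨Finset.mem_powerset.2 hSe', hSl⟩, ?_⟩
        refine Finset.mem_image.2 ⟨e \ S, Finset.mem_powersetCard.2 ⟨Finset.subset_univ _, ?_⟩, ?_⟩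
        · rw [Finset.card_sdiff_of_subset hSe, hkc e heH2, hSl]; omega
        · exact Finset.union_sdiff_of_subset hSe
      refine (Finset.card_le_card hsub).trans ?_
      refine (Finset.card_biUnion_le_card_mul _ _ (n ^ d) fun S _ => ?_).trans ?_
      · refine Finset.card_image_le.trans ?_
        rw [Finset.card_powersetCard, Finset.card_univ, Fintype.card_fin]
        exact Nat.choose_le_pow n d
      · refine Nat.mul_le_mul_right _ ?_
        refine (Finset.card_filter_le _ _).trans ?_
        rw [Finset.card_powerset, hcard]
    exact_mod_cast this

lemma lemmaA {n k d l : ℕ} (hd : 1 ≤ d) (hl : 1 ≤ l) (hk : k = d + l) (η α : ℝ) (hη : 0 < η)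
    (hn : 0 < n)
    (H : Finset (Finset (Fin n))) (hH : H ⊆ kSets n k) (U : Finset (Fin n))
    (hU : (U.card : ℝ) ≤ η * n / 3)
    (hdeg : ∀ S : Finset (Fin n), S.card = l →
        degOf H S = 0 ∨ η * (n : ℝ) ^ d ≤ (degOf H S : ℝ)) (v : Fin n)
    (hv : α * (n : ℝ) ^ (k - 1) ≤ (degOf H {v} : ℝ)) :
    (2 * η / 3 / 2 ^ k) ^ k * α * (n : ℝ) ^ (k - 1) ≤ (EU H U v 0).card := by
  have hind : ∀ j, (2 * η / 3 / 2 ^ k) ^ j * ((EU H U v j).card : ℝ) ≤ (EU H U v 0).card := by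
    intro j
    induction j with
    | zero => simp
    | succ j ih =>
      refine le_trans ?_ ih
      rw [pow_succ, mul_assoc]
      exact mul_le_mul_of_nonneg_left (EU_step hd hl hk η hη hn H hH U hU hdeg v j) (by positivity)
  have hall : (degOf H {v} : ℝ) ≤ (EU H U v k).card := by
    have : degOf H {v} ≤ (EU H U v k).card := by
      unfold degOf
      refine Finset.card_le_card ?_
      intro e he
      obtain ⟨heH, hve⟩ := Finset.mem_filter.1 he
      refine Finset.mem_filter.2 ⟨heH, Finset.singleton_subset_iff.1 hve, ?_⟩
      have h1 : e.card = k := (Finset.mem_powersetCard.1 (hH heH)).2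
      rw [← h1]
      exact Finset.card_le_card (Finset.inter_subset_left.trans (Finset.erase_subset _ _))
    exact_mod_cast this
  refine le_trans ?_ (hind k)
  rw [mul_assoc]
  exact mul_le_mul_of_nonneg_left (hv.trans hall) (by positivity)

/-- tuples agreeing with `w` off `Q` -/
noncomputable def cl {n b : ℕ} (Q : Finset (Fin b)) (w : Fin b → Fin n) : Finset (Fin b → Fin n) :=
  Finset.univ.filter (fun w' => ∀ y, y ∉ Q → w' y = w y)

lemma cl_filter_card {n b : ℕ} (Q : Finset (Fin b)) (w : Fin b → Fin n) (A : Finset (Fin n)) :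
    ((cl Q w).filter (fun w' => ∀ y ∈ Q, w' y ∈ A)).card = A.card ^ Q.card := by
  have h : (cl Q w).filter (fun w' => ∀ y ∈ Q, w' y ∈ A)
      = Fintype.piFinset (fun y => if y ∈ Q then A else {w y}) := by
    ext w'
    simp only [cl, mem_filter, mem_univ, true_and, Fintype.mem_piFinset]
    constructor
    · rintro ⟨h1, h2⟩ y
      split_ifs with hy
      · exact h2 y hy
      · exact Finset.mem_singleton.2 (h1 y hy)
    · intro h
      refine ⟨fun y hy => ?_, fun y hy => ?_⟩
      · have := h y; rw [if_neg hy] at this; exact Finset.mem_singleton.1 this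
      · have := h y; rw [if_pos hy] at this; exact this
  rw [h, Fintype.card_piFinset]
  have h2 : ∀ y : Fin b, (if y ∈ Q then A else {w y}).card = if y ∈ Q then A.card else 1 := by
    intro y; split_ifs <;> simp
  simp only [h2]
  rw [Finset.prod_ite]
  simp

lemma cl_card {n b : ℕ} (Q : Finset (Fin b)) (w : Fin b → Fin n) : (cl Q w).card = n ^ Q.card := by
  have := cl_filter_card Q w Finset.univ
  simpa using this

lemma seq_count {n b : ℕ} (hn : 0 < n) (c : ℝ) (hc : 0 ≤ c) (Pos : ℕ → Finset (Fin b))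
    (Bp : ℕ → (Fin b → Fin n) → Prop) (S : ℕ)
    (hinv : ∀ s < S, ∀ r < s, ∀ w w', w' ∈ cl (Pos s) w → Bp r w → Bp r w')
    (hstep : ∀ s < S, ∀ w, (∀ r < s, Bp r w) →
      c * (n : ℝ) ^ (Pos s).card ≤ (((cl (Pos s) w).filter (fun w' => Bp s w')).card : ℝ)) :
    c ^ S * (n : ℝ) ^ b ≤
      ((Finset.univ.filter (fun w : Fin b → Fin n => ∀ s < S, Bp s w)).card : ℝ) := by
  induction S with
  | zero => simp
  | succ S ih =>
    have ih' := ih (fun s hs => hinv s (by omega)) (fun s hs => hstep s (by omega))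
    have key := dc (Finset.univ.filter (fun w : Fin b → Fin n => ∀ s < S, Bp s w))
      (Finset.univ.filter (fun w : Fin b → Fin n => ∀ s < S + 1, Bp s w))
      (fun w w' => w' ∈ cl (Pos S) w) (c * (n : ℝ) ^ (Pos S).card) ((n : ℝ) ^ (Pos S).card) ?_ ?_
    · have hnp : (0 : ℝ) < (n : ℝ) ^ (Pos S).card := by positivity
      have h1 : c * ((Finset.univ.filter (fun w : Fin b → Fin n => ∀ s < S, Bp s w)).card : ℝ) ≤
          ((Finset.univ.filter (fun w : Fin b → Fin n => ∀ s < S + 1, Bp s w)).card : ℝ) := by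
        refine le_of_mul_le_mul_right ?_ hnp
        linarith
      refine le_trans ?_ h1
      rw [pow_succ']
      rw [mul_assoc]
      exact mul_le_mul_of_nonneg_left ih' hc
    · intro w hw
      have hw := (Finset.mem_filter.1 hw).2
      refine (hstep S (by omega) w hw).trans ?_
      have : ((cl (Pos S) w).filter (fun w' => Bp S w')).card ≤
        ((Finset.univ.filter (fun w : Fin b → Fin n => ∀ s < S + 1, Bp s w)).filter
          (fun w' => w' ∈ cl (Pos S) w)).card := by
        refine Finset.card_le_card ?_
        intro w' hw'
        obtain ⟨h1, h2⟩ := Finset.mem_filter.1 hw'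
        refine Finset.mem_filter.2 ⟨Finset.mem_filter.2 ⟨Finset.mem_univ _, fun s hs => ?_⟩, h1⟩
        rcases Nat.lt_succ_iff_lt_or_eq.1 hs with h | h
        · exact hinv S (by omega) s h w w' h1 (hw s h)
        · rw [h]; exact h2
      exact_mod_cast this
    · intro w' _
      have h := cl_card (Pos S) w'
      have : ((Finset.univ.filter (fun w : Fin b → Fin n => ∀ s < S, Bp s w)).filter
          (fun w => w' ∈ cl (Pos S) w)).card ≤ n ^ (Pos S).card := by
        rw [← h]
        refine Finset.card_le_card ?_
        intro w hw
        have h2 := (Finset.mem_filter.1 (Finset.mem_filter.1 hw).2).2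
        exact Finset.mem_filter.2 ⟨Finset.mem_univ _, fun y hy => (h2 y hy).symm⟩
      exact_mod_cast this

lemma set_tuple {n b : ℕ} (Q : Finset (Fin b)) (w : Fin b → Fin n)
    (𝒟 : Finset (Finset (Fin n))) (h𝒟 : ∀ D ∈ 𝒟, D.card = Q.card) :
    𝒟.card ≤ ((cl Q w).filter (fun w' => Q.image w' ∈ 𝒟)).card := by
  refine Finset.card_le_card_of_surjOn (fun w' => Q.image w') ?_
  intro D hD
  have hD' : D ∈ 𝒟 := hD
  have e : Q ≃ D := Finset.equivOfCardEq (h𝒟 D hD').symm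
  have hw' : Q.image (fun y => if h : y ∈ Q then ((e ⟨y, h⟩ : D) : Fin n) else w y) = D := by
    ext x
    simp only [mem_image]
    constructor
    · rintro ⟨y, hy, rfl⟩
      rw [dif_pos hy]
      exact (e ⟨y, hy⟩).2
    · intro hx
      refine ⟨(e.symm ⟨x, hx⟩ : Q), (e.symm ⟨x, hx⟩).2, ?_⟩
      rw [dif_pos (e.symm ⟨x, hx⟩).2]
      simp
  refine ⟨fun y => if h : y ∈ Q then ((e ⟨y, h⟩ : D) : Fin n) else w y, ?_, hw'⟩
  rw [mem_coe, mem_filter]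
  refine ⟨Finset.mem_filter.2 ⟨Finset.mem_univ _, fun y hy => dif_neg hy⟩, ?_⟩
  rw [hw']; exact hD'


lemma hit_tuples {n b : ℕ} (A : Finset (Fin n)) :
    (Finset.univ.filter (fun w : Fin b → Fin n => ∃ y, w y ∈ A)).card ≤ b * (A.card * n ^ (b - 1)) := by
  have h : Finset.univ.filter (fun w : Fin b → Fin n => ∃ y, w y ∈ A) ⊆
      (Finset.univ : Finset (Fin b)).biUnion (fun y =>
        Finset.univ.filter (fun w : Fin b → Fin n => ∀ z ∈ ({y} : Finset (Fin b)), w z ∈ A)) := by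
    intro w hw
    obtain ⟨y, hy⟩ := (Finset.mem_filter.1 hw).2
    refine Finset.mem_biUnion.2 ⟨y, Finset.mem_univ _, Finset.mem_filter.2 ⟨Finset.mem_univ _, ?_⟩⟩
    intro z hz
    rw [Finset.mem_singleton.1 hz]; exact hy
  refine (Finset.card_le_card h).trans ?_
  refine (Finset.card_biUnion_le_card_mul _ _ (A.card * n ^ (b - 1)) fun y _ => ?_).trans ?_
  · rw [card_maps_into]; simp
  · simp

lemma eq_tuples {n b : ℕ} (hn : 0 < n) (y z : Fin b) (hyz : y ≠ z) :
    ((Finset.univ.filter (fun w : Fin b → Fin n => w y = w z)).card : ℝ) ≤ (n : ℝ) ^ (b - 1) := by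
  have hb : 0 < b := y.pos
  have key := dc (Finset.univ.filter (fun w : Fin b → Fin n => w y = w z))
    (Finset.univ : Finset (Fin b → Fin n)) (fun w w' => w' ∈ cl {y} w) (n : ℝ) 1 ?_ ?_
  · simp only [Finset.card_univ, Fintype.card_fun, Fintype.card_fin, one_mul] at key
    push_cast at key
    have hnp : (0 : ℝ) < n := by exact_mod_cast hn
    refine le_of_mul_le_mul_left (key.trans (le_of_eq ?_)) hnp
    rw [← pow_succ']; congr 1; omega
  · intro w _
    have h := cl_card {y} w
    have h2 : (Finset.univ.filter (fun w' => w' ∈ cl {y} w)) = cl {y} w := by ext; simp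
    rw [h2, h]; simp
  · intro w' _
    have : ((Finset.univ.filter (fun w : Fin b → Fin n => w y = w z)).filter
        (fun w => w' ∈ cl {y} w)).card ≤ 1 := by
      rw [Finset.card_le_one]
      intro w1 h1 w2 h2
      obtain ⟨a1, c1⟩ := Finset.mem_filter.1 h1
      obtain ⟨a2, c2⟩ := Finset.mem_filter.1 h2
      have a1 := (Finset.mem_filter.1 a1).2
      have a2 := (Finset.mem_filter.1 a2).2
      have c1 := (Finset.mem_filter.1 c1).2
      have c2 := (Finset.mem_filter.1 c2).2
      have hoff : ∀ x, x ≠ y → w1 x = w2 x := fun x hx => by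
        have hx' : x ∉ ({y} : Finset (Fin b)) := by simpa using hx
        rw [← c1 x hx', ← c2 x hx']
      funext x
      by_cases hx : x = y
      · rw [hx, a1, a2]; exact hoff z (Ne.symm hyz)
      · exact hoff x hx
    exact_mod_cast this

lemma noninj_tuples {n b : ℕ} (hn : 0 < n) :
    ((Finset.univ.filter (fun w : Fin b → Fin n => ¬ Function.Injective w)).card : ℝ)
      ≤ (b : ℝ) ^ 2 * (n : ℝ) ^ (b - 1) := by
  have h : Finset.univ.filter (fun w : Fin b → Fin n => ¬ Function.Injective w) ⊆
      (Finset.univ.filter (fun p : Fin b × Fin b => p.1 ≠ p.2)).biUnion (fun p =>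
        Finset.univ.filter (fun w : Fin b → Fin n => w p.1 = w p.2)) := by
    intro w hw
    have hw := (Finset.mem_filter.1 hw).2
    unfold Function.Injective at hw
    push Not at hw
    obtain ⟨y, z, h1, h2⟩ := hw
    exact Finset.mem_biUnion.2 ⟨(y, z), Finset.mem_filter.2 ⟨Finset.mem_univ _, h2⟩,
      Finset.mem_filter.2 ⟨Finset.mem_univ _, h1⟩⟩
  have h2 : (Finset.univ.filter (fun w : Fin b → Fin n => ¬ Function.Injective w)).card ≤
      b ^ 2 * n ^ (b - 1) := by
    refine (Finset.card_le_card h).trans ?_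
    refine (Finset.card_biUnion_le_card_mul _ _ (n ^ (b - 1)) fun p hp => ?_).trans ?_
    · have := eq_tuples hn p.1 p.2 (Finset.mem_filter.1 hp).2
      exact_mod_cast this
    · refine Nat.mul_le_mul_right _ ((Finset.card_filter_le _ _).trans ?_)
      simp [sq]
  exact_mod_cast h2

namespace Par
variable (P : Par)

lemma upd_congr {β : Type*} (f f' u : ℕ → β) (y : ℕ)
    (h : (∀ i < P.d, y ≠ P.xp i) → f y = f' y) : P.upd f u y = P.upd f' u y := by
  by_cases hx : ∃ i, i < P.d ∧ y = P.xp i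
  · obtain ⟨i, hi, rfl⟩ := hx
    rw [P.upd_xp _ _ i hi, P.upd_xp _ _ i hi]
  · push Not at hx
    rw [P.upd_of_ne _ _ y hx, P.upd_of_ne _ _ y hx, h hx]

/-- positions chosen in step `s` -/
noncomputable def posN (s : ℕ) : Finset ℕ :=
  if s < P.T - 1 then
    if P.HT s then
      if s % P.t = 0 then (P.win s).filter (fun y => ∀ i < P.d, y ≠ P.xp i)
      else Finset.Ico (s * P.d + P.l) (s * P.d + P.k)
    else ∅
  else if s = P.T - 1 then
    (Finset.range P.b).filter (fun y => (∀ i < P.d, y ≠ P.xp i) ∧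
      ∀ J < P.T - 1, P.HT J → y ∉ P.win J)
  else (Finset.range P.d).image P.xp

/-- condition checked in step `s` -/
def BpN {n : ℕ} (H : Finset (Finset (Fin n))) (U : Finset (Fin n)) (u : ℕ → Fin n) (s : ℕ)
    (f : ℕ → Fin n) : Prop :=
  if s < P.T - 1 then
    P.HT s → (∀ y ∈ P.win s, (∀ i < P.d, y ≠ P.xp i) → f y ∉ U) ∧
      (P.win s).image (P.upd f u) ∈ H
  else if s = P.T - 1 then
    ∀ y < P.b, (∀ i < P.d, y ≠ P.xp i) → (∀ J < P.T - 1, P.HT J → y ∉ P.win J) → f y ∉ U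
  else (∀ i < P.d, f (P.xp i) ∉ U) ∧
    (Finset.Ico (P.G * P.d) (P.G * P.d + P.l)).image (P.upd f u) ∪
    (Finset.range P.d).image (fun i => f (P.xp i)) ∈ H

/-- positions as `Fin` -/
noncomputable def posF (s : ℕ) : Finset (Fin P.b) :=
  Finset.univ.filter (fun y => (y : ℕ) ∈ P.posN s)

lemma posN_lt (s y : ℕ) (hy : y ∈ P.posN s) : y < P.b := by
  unfold posN at hy
  split_ifs at hy with h1 h2 h3 h4
  · have := P.winlen s h1
    have := (Finset.mem_Ico.1 (Finset.mem_filter.1 hy).1).2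
    omega
  · have := P.winlen s h1
    have := (Finset.mem_Ico.1 hy).2
    omega
  · simp at hy
  · exact Finset.mem_range.1 (Finset.mem_filter.1 hy).1
  · obtain ⟨i, hi, rfl⟩ := Finset.mem_image.1 hy
    exact P.xp_lt_b i (Finset.mem_range.1 hi)

lemma posF_img {n : ℕ} (s : ℕ) (w : Fin P.b → Fin n) :
    (P.posF s).image w = (P.posN s).image (ev P.bpos w) :=
  img_fin w (ev P.bpos w) (fun y => (ev_val P.bpos w y).symm) (P.posN s) (fun y hy => P.posN_lt s y hy)

lemma posF_card (s : ℕ) : (P.posF s).card = (P.posN s).card := by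
  have : (P.posF s).map Fin.valEmbedding = P.posN s := by
    ext y
    simp only [posF, mem_map, mem_filter, mem_univ, true_and, Fin.valEmbedding_apply]
    constructor
    · rintro ⟨z, hz, rfl⟩; exact hz
    · intro hy; exact ⟨⟨y, P.posN_lt s y hy⟩, hy, rfl⟩
  rw [← this, Finset.card_map]

lemma cl_ev {n : ℕ} (s : ℕ) (w w' : Fin P.b → Fin n) (h : w' ∈ cl (P.posF s) w) (y : ℕ)
    (hy : y < P.b) (hyn : y ∉ P.posN s) : ev P.bpos w' y = ev P.bpos w y := by
  have h := (Finset.mem_filter.1 h).2 ⟨y, hy⟩ (by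
    intro hh; exact hyn (Finset.mem_filter.1 hh).2)
  have e1 := ev_val P.bpos w ⟨y, hy⟩
  have e2 := ev_val P.bpos w' ⟨y, hy⟩
  simp only at e1 e2
  rw [e1, e2, h]

lemma pos_disj (r s y : ℕ) (hrs : r < s) (hr : r < P.T - 1) (hH : P.HT r)
    (hy : y ∈ P.win r) (hyx : ∀ i < P.d, y ≠ P.xp i) : y ∉ P.posN s := by
  intro hys
  have hk := P.hk
  have hyw := Finset.mem_Ico.1 hy
  unfold posN at hys
  split_ifs at hys with h1 h2 h3 h4
  · have hys := (Finset.mem_Ico.1 (Finset.mem_filter.1 hys).1).1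
    have e1 := P.Jd r
    have e2 := P.Jd s
    rw [h3] at e2
    have hB : r % P.t ≤ P.g := by
      rcases hH with h | h
      · exact h
      · have := P.Jlast s (by omega) (by omega)
        omega
    have hlt : r / P.t < s / P.t := by
      by_contra hge
      push Not at hge
      have a1 := Nat.div_add_mod r P.t
      have a2 := Nat.div_add_mod s P.t
      have := Nat.mul_le_mul_left P.t hge
      omega
    have a3 : (r / P.t + 1) * P.T ≤ s / P.t * P.T := Nat.mul_le_mul_right _ hlt
    rw [add_mul] at a3
    have a4 : r % P.t * P.d ≤ P.g * P.d := Nat.mul_le_mul_right _ hB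
    have a5 := P.tT
    have a6 := P.h3
    omega
  · have hys := (Finset.mem_Ico.1 hys).1
    have : (r + 1) * P.d ≤ s * P.d := Nat.mul_le_mul_right _ hrs
    rw [add_mul] at this
    omega
  · simp at hys
  · exact (Finset.mem_filter.1 hys).2.2 r hr hH hy
  · obtain ⟨i, hi, rfl⟩ := Finset.mem_image.1 hys
    exact hyx i (Finset.mem_range.1 hi) rfl

lemma win_lt_b (J y : ℕ) (hJ : J < P.T - 1) (hy : y ∈ P.win J) : y < P.b :=
  (Finset.mem_Ico.1 hy).2.trans_le (P.winlen J hJ)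

lemma Bp_inv {n : ℕ} (H : Finset (Finset (Fin n))) (U : Finset (Fin n)) (u : ℕ → Fin n)
    (r s : ℕ) (hrs : r < s) (hs : s < P.T + 1) (w w' : Fin P.b → Fin n)
    (h : w' ∈ cl (P.posF s) w) (hB : P.BpN H U u r (ev P.bpos w)) :
    P.BpN H U u r (ev P.bpos w') := by
  unfold BpN at hB ⊢
  split_ifs at hB ⊢ with h1 h2
  · intro hH
    have hB := hB hH
    have heq : ∀ y ∈ P.win r, (∀ i < P.d, y ≠ P.xp i) → ev P.bpos w' y = ev P.bpos w y :=
      fun y hy hyx => P.cl_ev s w w' h y (P.win_lt_b r y h1 hy) (P.pos_disj r s y hrs h1 hH hy hyx)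
    refine ⟨fun y hy hyx => ?_, ?_⟩
    · rw [heq y hy hyx]; exact hB.1 y hy hyx
    · have : (P.win r).image (P.upd (ev P.bpos w') u) = (P.win r).image (P.upd (ev P.bpos w) u) :=
        Finset.image_congr fun y hy => P.upd_congr _ _ u y (heq y hy)
      rw [this]; exact hB.2
  · intro y hy hyx hyJ
    rw [P.cl_ev s w w' h y hy ?_]
    · exact hB y hy hyx hyJ
    · intro hys
      unfold posN at hys
      rw [if_neg (by omega), if_neg (by omega)] at hys
      obtain ⟨i, hi, rfl⟩ := Finset.mem_image.1 hys
      exact hyx i (Finset.mem_range.1 hi) rfl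
  · omega

/-- the `ℓ`-set inside an edge -/
lemma sub_card {n : ℕ} (H : Finset (Finset (Fin n))) (hH : H ⊆ kSets n P.k) (h : ℕ → Fin n) (J : ℕ)
    (hJ : (P.win J).image h ∈ H) (s : Finset ℕ) (hs : s ⊆ P.win J) : (s.image h).card = s.card := by
  have hc : ((P.win J).image h).card = (P.win J).card := by
    rw [P.win_card]; exact (Finset.mem_powersetCard.1 (hH hJ)).2
  have hi := Finset.card_image_iff.1 hc
  exact Finset.card_image_of_injOn (hi.mono (by exact_mod_cast hs))

end Par


namespace Par
variable (P : Par)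

lemma step_set {n : ℕ} (H : Finset (Finset (Fin n))) (U : Finset (Fin n)) (u : ℕ → Fin n) (s : ℕ)
    (w : Fin P.b → Fin n) (𝒟 : Finset (Finset (Fin n))) (c : ℝ)
    (h1 : ∀ D ∈ 𝒟, D.card = (P.posN s).card)
    (h2 : c * (n : ℝ) ^ (P.posN s).card ≤ 𝒟.card)
    (h3 : ∀ w' ∈ cl (P.posF s) w, (P.posN s).image (ev P.bpos w') ∈ 𝒟 →
      P.BpN H U u s (ev P.bpos w')) :
    c * (n : ℝ) ^ (P.posF s).card ≤
      ((cl (P.posF s) w).filter (fun w' => P.BpN H U u s (ev P.bpos w'))).card := by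
  rw [P.posF_card]
  refine h2.trans ?_
  have h := set_tuple (P.posF s) w 𝒟 (fun D hD => by rw [P.posF_card]; exact h1 D hD)
  refine (Nat.cast_le.2 h).trans (Nat.cast_le.2 (Finset.card_le_card ?_))
  intro w' hw'
  obtain ⟨a1, a2⟩ := Finset.mem_filter.1 hw'
  rw [P.posF_img] at a2
  exact Finset.mem_filter.2 ⟨a1, h3 w' a1 a2⟩

lemma step_special {n : ℕ} (η α : ℝ) (hη : 0 < η) (hn : 0 < n)
    (H : Finset (Finset (Fin n))) (hH : H ⊆ kSets n P.k) (U : Finset (Fin n))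
    (hU : (U.card : ℝ) ≤ η * n / 3)
    (hdeg : ∀ S : Finset (Fin n), S.card = P.l →
        degOf H S = 0 ∨ η * (n : ℝ) ^ P.d ≤ (degOf H S : ℝ))
    (u : ℕ → Fin n) (hv : ∀ i < P.d, α * (n : ℝ) ^ (P.k - 1) ≤ (degOf H {u i} : ℝ))
    (s : ℕ) (hs : s < P.T - 1) (hs0 : s % P.t = 0) (w : Fin P.b → Fin n) :
    (2 * η / 3 / 2 ^ P.k) ^ P.k * α * (n : ℝ) ^ (P.posF s).card ≤
      ((cl (P.posF s) w).filter (fun w' => P.BpN H U u s (ev P.bpos w'))).card := by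
  have hHT : P.HT s := Or.inl (by omega)
  have hi : s / P.t < P.d := by
    rw [Nat.div_lt_iff_lt_mul (by have := P.htpos; omega)]
    have : P.T = P.t * P.d := rfl
    rw [mul_comm]; omega
  set i := s / P.t with hidef
  have hpos : P.posN s = (P.win s).erase (P.xp i) := by
    unfold posN
    rw [if_pos hs, if_pos hHT, if_pos hs0]
    ext y
    simp only [mem_filter, mem_erase]
    constructor
    · rintro ⟨h1, h2⟩; exact ⟨h2 i hi, h1⟩
    · rintro ⟨h1, h2⟩
      refine ⟨h2, ?_⟩
      rintro j hj rfl
      have := (P.xp_win j s h2).1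
      rw [← this] at h1
      exact h1 rfl
  have hxi : P.xp i ∈ P.win s := by
    unfold win xp
    rw [Finset.mem_Ico, P.Jd s, hs0, ← hidef]
    have := P.hmd1; have := P.h1
    omega
  have hcard : (P.posN s).card = P.k - 1 := by
    rw [hpos, Finset.card_erase_of_mem hxi, P.win_card]
  have hA := lemmaA P.hd P.hl P.hk η α hη hn H hH U hU hdeg (u i) (hv i hi)
  have hinj : Set.InjOn (fun e : Finset (Fin n) => e.erase (u i)) (EU H U (u i) 0) := by
    intro e he e' he' hee
    have m1 := (Finset.mem_filter.1 (Finset.mem_coe.1 he)).2.1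
    have m2 := (Finset.mem_filter.1 (Finset.mem_coe.1 he')).2.1
    have hee : e.erase (u i) = e'.erase (u i) := hee
    rw [← Finset.insert_erase m1, ← Finset.insert_erase m2, hee]
  refine P.step_set H U u s w ((EU H U (u i) 0).image (fun e => e.erase (u i))) _ ?_ ?_ ?_
  · intro D hD
    obtain ⟨e, he, rfl⟩ := Finset.mem_image.1 hD
    have he := Finset.mem_filter.1 he
    rw [Finset.card_erase_of_mem he.2.1, hcard, (Finset.mem_powersetCard.1 (hH he.1)).2]
  · rw [Finset.card_image_of_injOn hinj, hcard]; exact hA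
  · intro w' _ hD
    obtain ⟨e, he, heq⟩ := Finset.mem_image.1 hD
    have he := Finset.mem_filter.1 he
    have hdis : (e.erase (u i)) ∩ U = ∅ := by
      rw [← Finset.card_eq_zero]; have := he.2.2; omega
    rw [hpos] at heq
    unfold BpN
    rw [if_pos hs]
    intro _
    constructor
    · intro y hy hyx hyU
      have : ev P.bpos w' y ∈ e.erase (u i) := by
        rw [heq]
        exact Finset.mem_image_of_mem _ (Finset.mem_erase.2 ⟨hyx i hi, hy⟩)
      have : ev P.bpos w' y ∈ (e.erase (u i)) ∩ U := Finset.mem_inter.2 ⟨this, hyU⟩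
      rw [hdis] at this
      simp at this
    · have : (P.win s).image (P.upd (ev P.bpos w') u) = e := by
        rw [← Finset.insert_erase hxi, Finset.image_insert, P.upd_xp _ _ i hi,
          ← Finset.insert_erase he.2.1, heq]
        congr 1
        apply Finset.image_congr
        intro y hy
        obtain ⟨hy1, hy2⟩ := Finset.mem_erase.1 hy
        apply P.upd_of_ne
        rintro j hj rfl
        apply hy1
        rw [← (P.xp_win j s hy2).1]
      rw [this]; exact he.1

lemma step_ext {n : ℕ} (η : ℝ) (hη : 0 < η)
    (H : Finset (Finset (Fin n))) (hH : H ⊆ kSets n P.k) (U : Finset (Fin n))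
    (hU : (U.card : ℝ) ≤ η * n / 3)
    (hdeg : ∀ S : Finset (Fin n), S.card = P.l →
        degOf H S = 0 ∨ η * (n : ℝ) ^ P.d ≤ (degOf H S : ℝ))
    (u : ℕ → Fin n)
    (s : ℕ) (hs : s < P.T - 1) (hHT : P.HT s) (hs0 : s % P.t ≠ 0) (w : Fin P.b → Fin n)
    (hB : ∀ r < s, P.BpN H U u r (ev P.bpos w)) :
    2 * η / 3 * (n : ℝ) ^ (P.posF s).card ≤
      ((cl (P.posF s) w).filter (fun w' => P.BpN H U u s (ev P.bpos w'))).card := by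
  have hk := P.hk
  have hsp : 1 ≤ s := by
    by_contra h
    have : s = 0 := by omega
    rw [this] at hs0; simp at hs0
  obtain ⟨r, rfl⟩ : ∃ r, s = r + 1 := ⟨s - 1, by omega⟩
  have hmod : (r + 1) % P.t = r % P.t + 1 := by
    have ht := P.htpos
    rw [Nat.add_mod] at hs0 ⊢
    have h1 : 1 % P.t = 1 := Nat.mod_eq_of_lt (by omega)
    rw [h1] at hs0 ⊢
    have hr := P.modlt r
    by_cases h : r % P.t + 1 = P.t
    · rw [h] at hs0; simp at hs0
    · exact Nat.mod_eq_of_lt (by omega)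
  have hHr : P.HT r := by
    rcases hHT with h | h
    · left; omega
    · right
      by_contra hlt
      have : r + 1 = P.B := by omega
      rw [this] at hs0
      simp [B] at hs0
  have hBr := hB r (by omega)
  have hpos : P.posN (r + 1) = Finset.Ico ((r + 1) * P.d + P.l) ((r + 1) * P.d + P.k) := by
    unfold posN
    rw [if_pos hs, if_pos hHT, if_neg hs0]
  have hcard : (P.posN (r + 1)).card = P.d := by
    rw [hpos, Nat.card_Ico]; omega
  have hBr' := hBr
  unfold BpN at hBr
  rw [if_pos (by omega)] at hBr
  obtain ⟨hav, hed⟩ := hBr hHr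
  set f := ev P.bpos w with hf
  set I := Finset.Ico ((r + 1) * P.d) ((r + 1) * P.d + P.l) with hI
  have hIw : I ⊆ P.win r := by
    intro y hy
    have := Finset.mem_Ico.1 hy
    rw [add_mul] at this
    exact Finset.mem_Ico.2 (by omega)
  have hSc : (I.image (P.upd f u)).card = P.l := by
    rw [P.sub_card H hH (P.upd f u) r hed I hIw, hI, Nat.card_Ico]; omega
  have hE := ext_count P.hd P.hk η hη H hH U hU hdeg (I.image (P.upd f u)) _ hSc hed
    (Finset.image_subset_image hIw)
  have hnox : ∀ y ∈ P.posN (r + 1), ∀ i < P.d, y ≠ P.xp i := by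
    rintro y hy i hi rfl
    rw [hpos] at hy
    have hy' := Finset.mem_Ico.1 hy
    have h1 := P.xp_win i (r + 1) (Finset.mem_Ico.2 (by omega))
    have h2 := P.Jd (r + 1)
    rw [h1.1, hmod, add_mul (r % P.t)] at h2
    have := P.h1
    have h3 : P.xp i = i * P.T + (P.m * P.d - 1) := rfl
    have := P.hmd1; have := P.hd; omega
  have hwin : P.win (r + 1) = I ∪ P.posN (r + 1) := by
    rw [hpos, hI]
    unfold win
    rw [Finset.Ico_union_Ico_eq_Ico (by omega) (by omega)]
  refine P.step_set H U u (r + 1) w (ExtS H U (I.image (P.upd f u)) P.d) _ ?_ ?_ ?_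
  · intro D hD
    rw [hcard]
    exact (Finset.mem_powersetCard.1 (Finset.mem_filter.1 hD).1).2
  · rw [hcard]; exact hE
  · intro w' hw' hD
    have hD := (Finset.mem_filter.1 hD).2
    have hIeq : ∀ y ∈ I, (∀ i < P.d, y ≠ P.xp i) → ev P.bpos w' y = f y := by
      intro y hy hyx
      exact P.cl_ev (r + 1) w w' hw' y (P.win_lt_b r y (by omega) (hIw hy))
        (P.pos_disj r (r + 1) y (by omega) (by omega) hHr (hIw hy) hyx)
    unfold BpN
    rw [if_pos hs]
    intro _
    constructor
    · intro y hy hyx hyU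
      rw [hwin] at hy
      rcases Finset.mem_union.1 hy with h | h
      · rw [hIeq y h hyx] at hyU
        exact hav y (hIw h) hyx hyU
      · exact Finset.disjoint_left.1 hD.2.1 (Finset.mem_image_of_mem _ h) hyU
    · have e1 : I.image (P.upd (ev P.bpos w') u) = I.image (P.upd f u) :=
        Finset.image_congr fun y hy => P.upd_congr _ _ u y (hIeq y hy)
      have e2 : (P.posN (r + 1)).image (P.upd (ev P.bpos w') u) =
          (P.posN (r + 1)).image (ev P.bpos w') :=
        Finset.image_congr fun y hy => P.upd_of_ne _ _ y (hnox y hy)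
      rw [hwin, Finset.image_union, e1, e2]
      exact hD.2.2

lemma step_final {n : ℕ} (η : ℝ) (hη : 0 < η)
    (H : Finset (Finset (Fin n))) (hH : H ⊆ kSets n P.k) (U : Finset (Fin n))
    (hU : (U.card : ℝ) ≤ η * n / 3)
    (hdeg : ∀ S : Finset (Fin n), S.card = P.l →
        degOf H S = 0 ∨ η * (n : ℝ) ^ P.d ≤ (degOf H S : ℝ))
    (u : ℕ → Fin n) (w : Fin P.b → Fin n)
    (hB : ∀ r < P.T, P.BpN H U u r (ev P.bpos w)) :
    2 * η / 3 * (n : ℝ) ^ (P.posF P.T).card ≤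
      ((cl (P.posF P.T) w).filter (fun w' => P.BpN H U u P.T (ev P.bpos w'))).card := by
  have hk := P.hk
  have hT2 := P.T2
  have hG := P.q_le.2.1
  have hBr := hB P.G (by omega)
  have hHG : P.HT P.G := Or.inr (by unfold G; omega)
  have hpos : P.posN P.T = (Finset.range P.d).image P.xp := by
    unfold posN
    rw [if_neg (by omega), if_neg (by omega)]
  have hcard : (P.posN P.T).card = P.d := by
    rw [hpos, Finset.card_image_of_injective _ (fun i j h => P.xp_inj i j h), Finset.card_range]
  unfold BpN at hBr
  rw [if_pos hG] at hBr
  obtain ⟨hav, hed⟩ := hBr hHG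
  set f := ev P.bpos w with hf
  set I := Finset.Ico (P.G * P.d) (P.G * P.d + P.l) with hI
  have hIw : I ⊆ P.win P.G := by
    intro y hy
    have := Finset.mem_Ico.1 hy
    exact Finset.mem_Ico.2 (by omega)
  have hSc : (I.image (P.upd f u)).card = P.l := by
    rw [P.sub_card H hH (P.upd f u) P.G hed I hIw, hI, Nat.card_Ico]; omega
  have hE := ext_count P.hd P.hk η hη H hH U hU hdeg (I.image (P.upd f u)) _ hSc hed
    (Finset.image_subset_image hIw)
  refine P.step_set H U u P.T w (ExtS H U (I.image (P.upd f u)) P.d) _ ?_ ?_ ?_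
  · intro D hD
    rw [hcard]
    exact (Finset.mem_powersetCard.1 (Finset.mem_filter.1 hD).1).2
  · rw [hcard]; exact hE
  · intro w' hw' hD
    have hD := (Finset.mem_filter.1 hD).2
    rw [hpos, Finset.image_image] at hD
    unfold BpN
    rw [if_neg (by omega), if_neg (by omega)]
    constructor
    · intro i hi
      exact Finset.disjoint_left.1 hD.2.1
        (Finset.mem_image.2 ⟨i, Finset.mem_range.2 hi, rfl⟩)
    · have e1 : I.image (P.upd (ev P.bpos w') u) = I.image (P.upd f u) :=
        Finset.image_congr fun y hy => P.upd_congr _ _ u y (fun hyx =>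
          P.cl_ev P.T w w' hw' y (P.win_lt_b P.G y hG (hIw hy))
            (P.pos_disj P.G P.T y (by omega) hG hHG (hIw hy) hyx))
      rw [← hI, e1]
      exact hD.2.2

lemma step_free {n : ℕ} (H : Finset (Finset (Fin n))) (U : Finset (Fin n))
    (hU : (U.card : ℝ) ≤ (n : ℝ) / 2) (u : ℕ → Fin n) (w : Fin P.b → Fin n) :
    (1 / 2 : ℝ) ^ P.b * (n : ℝ) ^ (P.posF (P.T - 1)).card ≤
      ((cl (P.posF (P.T - 1)) w).filter (fun w' => P.BpN H U u (P.T - 1) (ev P.bpos w'))).card := by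
  have h := cl_filter_card (P.posF (P.T - 1)) w Uᶜ
  have hsub : (cl (P.posF (P.T - 1)) w).filter (fun w' => ∀ y ∈ P.posF (P.T - 1), w' y ∈ Uᶜ) ⊆
      (cl (P.posF (P.T - 1)) w).filter (fun w' => P.BpN H U u (P.T - 1) (ev P.bpos w')) := by
    intro w' hw'
    obtain ⟨a1, a2⟩ := Finset.mem_filter.1 hw'
    refine Finset.mem_filter.2 ⟨a1, ?_⟩
    unfold BpN
    rw [if_neg (by omega), if_pos rfl]
    intro y hy hyx hyJ
    have := a2 ⟨y, hy⟩ (by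
      refine Finset.mem_filter.2 ⟨Finset.mem_univ _, ?_⟩
      unfold posN
      rw [if_neg (by omega), if_pos rfl]
      exact Finset.mem_filter.2 ⟨Finset.mem_range.2 hy, hyx, hyJ⟩)
    have e := ev_val P.bpos w' ⟨y, hy⟩
    simp only at e
    rw [e]
    exact Finset.mem_compl.1 this
  refine le_trans ?_ (Nat.cast_le.2 (Finset.card_le_card hsub))
  rw [h]
  push_cast
  have hc : ((Uᶜ.card : ℕ) : ℝ) = n - U.card := by
    rw [Finset.card_compl, Nat.cast_sub (Finset.card_le_univ U)]; simp
  rw [hc]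
  have hqb : (P.posF (P.T - 1)).card ≤ P.b := by
    have := Finset.card_le_univ (P.posF (P.T - 1)); simpa using this
  have h2 : (1 / 2 : ℝ) ^ P.b ≤ (1 / 2 : ℝ) ^ (P.posF (P.T - 1)).card :=
    pow_le_pow_of_le_one (by norm_num) (by norm_num) hqb
  calc (1 / 2 : ℝ) ^ P.b * (n : ℝ) ^ (P.posF (P.T - 1)).card
      ≤ (1 / 2 : ℝ) ^ (P.posF (P.T - 1)).card * (n : ℝ) ^ (P.posF (P.T - 1)).card := by gcongr
    _ = ((n : ℝ) / 2) ^ (P.posF (P.T - 1)).card := by rw [← mul_pow]; congr 1; ring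
    _ ≤ _ := by gcongr; linarith

lemma eta_le {n : ℕ} (η α : ℝ) (hη : 0 < η) (hα : 0 < α) (hn : 0 < n)
    (H : Finset (Finset (Fin n))) (hH : H ⊆ kSets n P.k) (U : Finset (Fin n))
    (hU : (U.card : ℝ) ≤ η * n / 3)
    (hdeg : ∀ S : Finset (Fin n), S.card = P.l →
        degOf H S = 0 ∨ η * (n : ℝ) ^ P.d ≤ (degOf H S : ℝ))
    (v : Fin n) (hv : α * (n : ℝ) ^ (P.k - 1) ≤ (degOf H {v} : ℝ)) : (U.card : ℝ) ≤ (n : ℝ) / 2 := by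
  have hnp : (0 : ℝ) < n := by exact_mod_cast hn
  have h1 : 0 < (degOf H {v} : ℝ) := lt_of_lt_of_le (by positivity) hv
  have h2 : 0 < degOf H {v} := by exact_mod_cast h1
  obtain ⟨e, he⟩ := Finset.card_pos.1 h2
  have he := (Finset.mem_filter.1 he).1
  have hec := (Finset.mem_powersetCard.1 (hH he)).2
  obtain ⟨S, hSe, hS⟩ := Finset.exists_subset_card_eq (s := e) (n := P.l) (by have := P.hk; omega)
  have hE := ext_count P.hd P.hk η hη H hH U hU hdeg S e hS he hSe
  have h3 : ((ExtS H U S P.d).card : ℝ) ≤ (n : ℝ) ^ P.d := by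
    have a := Finset.card_filter_le (Finset.univ.powersetCard P.d)
      (fun D => Disjoint D S ∧ Disjoint D U ∧ S ∪ D ∈ H)
    rw [Finset.card_powersetCard, Finset.card_univ, Fintype.card_fin] at a
    have := a.trans (Nat.choose_le_pow n P.d)
    exact_mod_cast this
  have h4 : 2 * η / 3 ≤ 1 := by
    have : 2 * η / 3 * (n : ℝ) ^ P.d ≤ 1 * (n : ℝ) ^ P.d := by linarith
    exact le_of_mul_le_mul_right this (by positivity)
  nlinarith

/-- step constant -/
noncomputable def c0 (η α : ℝ) : ℝ :=
  min (min ((2 * η / 3 / 2 ^ P.k) ^ P.k * α) (2 * η / 3)) ((1 / 2 : ℝ) ^ P.b)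

lemma c0_pos (η α : ℝ) (hη : 0 < η) (hα : 0 < α) : 0 < P.c0 η α := by
  unfold c0
  refine lt_min (lt_min ?_ ?_) ?_ <;> positivity

lemma count_B {n : ℕ} (η α : ℝ) (hη : 0 < η) (hα : 0 < α) (hn : 0 < n)
    (H : Finset (Finset (Fin n))) (hH : H ⊆ kSets n P.k) (U : Finset (Fin n))
    (hU : (U.card : ℝ) ≤ η * n / 3)
    (hdeg : ∀ S : Finset (Fin n), S.card = P.l →
        degOf H S = 0 ∨ η * (n : ℝ) ^ P.d ≤ (degOf H S : ℝ))
    (u : ℕ → Fin n) (hv : ∀ i < P.d, α * (n : ℝ) ^ (P.k - 1) ≤ (degOf H {u i} : ℝ)) :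
    P.c0 η α ^ (P.T + 1) * (n : ℝ) ^ P.b ≤
      (Finset.univ.filter (fun w : Fin P.b → Fin n =>
        ∀ s < P.T + 1, P.BpN H U u s (ev P.bpos w))).card := by
  have hT2 := P.T2
  have hc := P.c0_pos η α hη hα
  refine seq_count hn _ hc.le P.posF (fun s w => P.BpN H U u s (ev P.bpos w)) (P.T + 1) ?_ ?_
  · intro s hs r hr w w' hw' hB
    exact P.Bp_inv H U u r s hr hs w w' hw' hB
  · intro s hs w hB
    by_cases h1 : s < P.T - 1
    · by_cases hH' : P.HT s
      · by_cases h0 : s % P.t = 0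
        · refine le_trans ?_ (P.step_special η α hη hn H hH U hU hdeg u hv s h1 h0 w)
          gcongr
          exact (min_le_left _ _).trans (min_le_left _ _)
        · refine le_trans ?_ (P.step_ext η hη H hH U hU hdeg u s h1 hH' h0 w hB)
          gcongr
          exact (min_le_left _ _).trans (min_le_right _ _)
      · have hall : (cl (P.posF s) w).filter (fun w' => P.BpN H U u s (ev P.bpos w')) =
            cl (P.posF s) w := by
          apply Finset.filter_true_of_mem
          intro w' _
          unfold BpN
          rw [if_pos h1]
          intro h; exact absurd h hH'
        rw [hall, cl_card]
        push_cast
        have : P.c0 η α ≤ 1 := (min_le_right _ _).trans (pow_le_one₀ (by norm_num) (by norm_num))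
        have h2 : (0 : ℝ) ≤ (n : ℝ) ^ (P.posF s).card := by positivity
        nlinarith
    · by_cases h2 : s = P.T - 1
      · rw [h2]
        refine le_trans ?_ (P.step_free H U
          (P.eta_le η α hη hα hn H hH U hU hdeg (u 0) (hv 0 P.hd)) u w)
        gcongr
        exact min_le_right _ _
      · have h3 : s = P.T := by omega
        subst h3
        refine le_trans ?_ (P.step_final η hη H hH U hU hdeg u w hB)
        gcongr
        exact (min_le_left _ _).trans (min_le_right _ _)

lemma B_all {n : ℕ} (H : Finset (Finset (Fin n))) (U : Finset (Fin n)) (u : ℕ → Fin n)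
    (w : Fin P.b → Fin n) (hB : ∀ s < P.T + 1, P.BpN H U u s (ev P.bpos w)) :
    (∀ y, w y ∉ U) ∧ P.Req H (ev P.bpos w) u := by
  have hT2 := P.T2
  have hlast := hB P.T (by omega)
  unfold BpN at hlast
  rw [if_neg (by omega), if_neg (by omega)] at hlast
  refine ⟨?_, ?_, hlast.2⟩
  · intro y
    rw [← ev_val P.bpos w y]
    by_cases hx : ∃ i, i < P.d ∧ (y : ℕ) = P.xp i
    · obtain ⟨i, hi, h⟩ := hx
      rw [h]; exact hlast.1 i hi
    · push Not at hx
      by_cases hJ : ∃ J, J < P.T - 1 ∧ P.HT J ∧ (y : ℕ) ∈ P.win J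
      · obtain ⟨J, h1, h2, h3⟩ := hJ
        have h := hB J (by omega)
        unfold BpN at h
        rw [if_pos h1] at h
        exact (h h2).1 y h3 hx
      · push Not at hJ
        have h := hB (P.T - 1) (by omega)
        unfold BpN at h
        rw [if_neg (by omega), if_pos rfl] at h
        exact h y y.isLt hx hJ
  · intro J hJ hH
    have h := hB J (by omega)
    unfold BpN at h
    rw [if_pos hJ] at h
    exact (h hH).2

lemma LL_card {n : ℕ} (η α : ℝ) (hη : 0 < η) (hα : 0 < α) (hn : 0 < n)
    (hnb : 2 * ((P.b : ℝ) ^ 2 + P.b * P.d) ≤ P.c0 η α ^ (P.T + 1) * n)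
    (H : Finset (Finset (Fin n))) (hH : H ⊆ kSets n P.k) (U W : Finset (Fin n))
    (hU : (U.card : ℝ) ≤ η * n / 3)
    (hdeg : ∀ S : Finset (Fin n), S.card = P.l →
        degOf H S = 0 ∨ η * (n : ℝ) ^ P.d ≤ (degOf H S : ℝ))
    (hW : W.card = P.d)
    (hv : ∀ v ∈ W, α * (n : ℝ) ^ (P.k - 1) ≤ (degOf H {v} : ℝ)) :
    P.c0 η α ^ (P.T + 1) / 2 * (n : ℝ) ^ P.b ≤ (P.LL H U W).card := by
  have hd := P.hd
  obtain ⟨u, hu⟩ : ∃ u : ℕ → Fin n, (Finset.range P.d).image u = W := by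
    let e := W.equivFinOfCardEq hW
    refine ⟨fun i => (e.symm ⟨min i (P.d - 1), by omega⟩ : Fin n), ?_⟩
    ext x
    simp only [mem_image, mem_range]
    constructor
    · rintro ⟨i, _, rfl⟩; exact (e.symm _).2
    · intro hx
      refine ⟨e ⟨x, hx⟩, (e ⟨x, hx⟩).isLt, ?_⟩
      have : (⟨min (e ⟨x, hx⟩ : ℕ) (P.d - 1), by omega⟩ : Fin P.d) = e ⟨x, hx⟩ := by
        ext
        have := (e ⟨x, hx⟩).isLt
        simp; omega
      rw [this]; simp
  have hcnt := P.count_B η α hη hα hn H hH U hU hdeg u (fun i hi => hv _ (by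
    rw [← hu]; exact Finset.mem_image_of_mem _ (Finset.mem_range.2 hi)))
  have hni := noninj_tuples (b := P.b) hn
  have hhit := hit_tuples (b := P.b) W
  have hsub : Finset.univ.filter (fun w : Fin P.b → Fin n =>
        ∀ s < P.T + 1, P.BpN H U u s (ev P.bpos w)) ⊆
      P.LL H U W ∪ (Finset.univ.filter (fun w : Fin P.b → Fin n => ¬ Function.Injective w) ∪
        Finset.univ.filter (fun w : Fin P.b → Fin n => ∃ y, w y ∈ W)) := by
    intro w hw
    have hw := (Finset.mem_filter.1 hw).2
    obtain ⟨a1, a2⟩ := P.B_all H U u w hw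
    by_cases h1 : Function.Injective w
    · by_cases h2 : ∃ y, w y ∈ W
      · exact Finset.mem_union_right _ (Finset.mem_union_right _
          (Finset.mem_filter.2 ⟨Finset.mem_univ _, h2⟩))
      · push Not at h2
        exact Finset.mem_union_left _ (Finset.mem_filter.2 ⟨Finset.mem_univ _, h1, a1, h2, u, hu, a2⟩)
    · exact Finset.mem_union_right _ (Finset.mem_union_left _
          (Finset.mem_filter.2 ⟨Finset.mem_univ _, h1⟩))
  have hc := (Finset.card_le_card hsub).trans ((Finset.card_union_le _ _).trans
    (Nat.add_le_add_left (Finset.card_union_le _ _) _))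
  have hc' : ((Finset.univ.filter (fun w : Fin P.b → Fin n =>
        ∀ s < P.T + 1, P.BpN H U u s (ev P.bpos w))).card : ℝ) ≤ (P.LL H U W).card +
      (((Finset.univ.filter (fun w : Fin P.b → Fin n => ¬ Function.Injective w)).card : ℝ) +
        (Finset.univ.filter (fun w : Fin P.b → Fin n => ∃ y, w y ∈ W)).card) := by
    exact_mod_cast hc
  have hhit' : ((Finset.univ.filter (fun w : Fin P.b → Fin n => ∃ y, w y ∈ W)).card : ℝ) ≤
      P.b * (P.d * (n : ℝ) ^ (P.b - 1)) := by
    rw [hW] at hhit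
    exact_mod_cast hhit
  have hpw : (n : ℝ) ^ P.b = n * (n : ℝ) ^ (P.b - 1) := by
    rw [← pow_succ']; congr 1; have := P.bpos; omega
  have hp : (0 : ℝ) ≤ (n : ℝ) ^ (P.b - 1) := by positivity
  have := mul_le_mul_of_nonneg_right hnb hp
  rw [hpw] at hcnt ⊢
  nlinarith

end Par


lemma gProb_ge {n k : ℕ} (p : ℝ) (hp0 : 0 ≤ p) (hp1 : p ≤ 1)
    (A : Finset (Finset (Fin n)) → Prop) (f : Finset (Finset (Fin n)) → ℝ) (z : ℝ)
    (hf0 : ∀ E, 0 ≤ f E) (hf : ∀ E, ¬ A E → 1 ≤ f E) (hz : bE (kSets n k) p f ≤ z) :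
    1 - z ≤ gProb n k p A := by
  have h1 : gProb n k p A = bE (kSets n k) p (fun E => if A E then 1 else 0) := by
    unfold gProb bE
    rw [Finset.sum_filter]
    refine Finset.sum_congr rfl fun E _ => ?_
    by_cases hA : A E <;> simp [hA]
  have h2 := bE_mono (kSets n k) p hp0 hp1 (fun _ => 1)
    (fun E => (if A E then 1 else 0) + f E) (fun E _ => by
      have a := hf0 E
      by_cases h : A E
      · simp [h, a]
      · simp [h, hf E h])
  rw [bE_one] at h2
  have h3 : bE (kSets n k) p (fun E => (if A E then 1 else 0) + f E) =
      bE (kSets n k) p (fun E => if A E then 1 else 0) + bE (kSets n k) p f := by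
    unfold bE
    rw [← Finset.sum_add_distrib]
    refine Finset.sum_congr rfl fun E _ => by ring
  rw [h3, ← h1] at h2
  linarith

lemma small_subsets {ι : Type*} [Fintype ι] [DecidableEq ι] (r : ℕ) (hN : 1 ≤ Fintype.card ι) :
    (Finset.univ.filter (fun Λ : Finset ι => Λ.card < r)).card ≤ r * (Fintype.card ι) ^ r := by
  have h : Finset.univ.filter (fun Λ : Finset ι => Λ.card < r) ⊆
      (Finset.range r).biUnion (fun j => (Finset.univ : Finset ι).powersetCard j) := by
    intro Λ hΛ
    exact Finset.mem_biUnion.2 ⟨Λ.card, Finset.mem_range.2 (Finset.mem_filter.1 hΛ).2,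
      Finset.mem_powersetCard.2 ⟨Finset.subset_univ _, rfl⟩⟩
  refine (Finset.card_le_card h).trans ?_
  refine (Finset.card_biUnion_le_card_mul _ _ ((Fintype.card ι) ^ r) fun j hj => ?_).trans ?_
  · rw [Finset.card_powersetCard, Finset.card_univ]
    exact (Nat.choose_le_pow _ _).trans (Nat.pow_le_pow_right hN (Finset.mem_range.1 hj).le)
  · simp

lemma par_exists (k ℓ : ℕ) (hl1 : 1 ≤ ℓ) (hlk : ℓ < k)
    (t4 : ℕ) (ht4 : t4 = ⌈((3 * k - ℓ - 2 : ℕ) : ℚ) / ((k : ℚ) - (ℓ : ℚ))⌉₊) :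
    ∃ P : Par, P.k = k ∧ P.l = ℓ ∧ P.d = k - ℓ ∧ P.t = t4 := by
  obtain ⟨d, rfl⟩ : ∃ d, k = d + ℓ := ⟨k - ℓ, by omega⟩
  have hd : 1 ≤ d := by omega
  have hdq : (0 : ℚ) < d := by exact_mod_cast hd
  have h1 : 3 * (d + ℓ) - ℓ - 2 ≤ t4 * d := by
    have h := Nat.le_ceil (((3 * (d + ℓ) - ℓ - 2 : ℕ) : ℚ) / (((d + ℓ : ℕ) : ℚ) - (ℓ : ℚ)))
    rw [← ht4] at h
    have e : (((d + ℓ : ℕ) : ℚ) - (ℓ : ℚ)) = d := by push_cast; ring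
    rw [e, div_le_iff₀ hdq] at h
    exact_mod_cast h
  have hdivs : ∀ x : ℕ, ∃ y, y * d ≤ x ∧ x + 1 ≤ y * d + d := fun x =>
    ⟨x / d, Nat.div_mul_le_self _ _, Nat.lt_div_mul_add (a := x) (b := d) (by omega)⟩
  obtain ⟨m, a1, a2⟩ := hdivs (d + ℓ)
  obtain ⟨κ, a3, a4'⟩ := hdivs (d + ℓ + d - 1)
  have a4 : d + ℓ ≤ κ * d := by omega
  have hm1 : 1 ≤ m := by
    by_contra h
    have : m = 0 := by omega
    rw [this] at a2; omega
  have hκ2 : 2 ≤ κ := by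
    by_contra h
    have : κ ≤ 1 := by omega
    have := Nat.mul_le_mul_right d this
    omega
  have key : (κ + m ≤ t4) ∨ (d = 1 ∧ κ + m = t4 + 1) ∨ (d = 1 ∧ κ + m ≤ t4) := by
    by_cases h : d = 1
    · subst h
      omega
    · left
      by_contra hlt
      have : (t4 + 1) * d ≤ (κ + m) * d := Nat.mul_le_mul_right _ (by omega)
      rw [add_mul, add_mul] at this
      omega
  have hκt : κ ≤ t4 := by omega
  refine ⟨⟨d, ℓ, d + ℓ, t4, m, κ, t4 - κ, hd, hl1, rfl, a1, a2, a4, hκ2, by omega, ?_, hm1⟩,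
    rfl, rfl, by simp, rfl⟩
  omega

namespace Par
variable (P : Par)

lemma det {n : ℕ} (H E : Finset (Finset (Fin n))) (U V' : Finset (Fin n))
    (θ β γ : ℝ) (hθ0 : 0 < θ) (hθ2 : θ ≤ 2) (hn : 0 < n) (hβ : 0 < β)
    (hβθ : β ^ 2 ≤ θ / 8) (hβγ : β * n * P.b ≤ γ)
    (r : ℕ) (hr0 : 0 < r) (hr : 4 * (P.d * Real.log n) ≤ θ * r) (hrn : (r : ℝ) ≤ β * n / 2)
    (h𝒲 : (V'.powersetCard P.d).Nonempty)
    (hQ : ∀ T : Finset (Fin n), (T.card : ℝ) ≤ γ → ∀ Λ : Finset (Fin P.b → Fin n), Λ.card < r →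
      ∃ w ∈ GoodT (V'.powersetCard P.d) (P.LL H U) θ Λ, Rw P.JJ P.Fe w ⊆ E ∧ ∀ m, w m ∉ T) :
    ∃ 𝒜 : Finset (Fin P.b → Fin n),
          (𝒜.card : ℝ) ≤ β * (n : ℝ) ∧
          (∀ w ∈ 𝒜, SpansPath P.k P.l (P.T - 1) (H ∪ E) w) ∧
          (∀ w ∈ 𝒜, firstEnd P.l w ∈ shadowL P.l H ∧ lastEnd P.l w ∈ shadowL P.l H) ∧
          (∀ w ∈ 𝒜, ∀ m, w m ∉ U) ∧
          (∀ w ∈ 𝒜, ∀ w' ∈ 𝒜, w ≠ w' → ∀ m m', w m ≠ w' m') ∧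
          ∀ W : Finset (Fin n), W ⊆ V' → W.card = P.d →
            β ^ 3 * (n : ℝ) ≤
              ((𝒜.filter (fun w => IsAbsorber P.k P.l (P.T - 1) (H ∪ E) w W)).card : ℝ) := by
  have hnp : (0 : ℝ) < n := by exact_mod_cast hn
  have hrp : (0 : ℝ) < r := by exact_mod_cast hr0
  set s := ⌊β * n / r⌋₊ with hs
  have hs1 : (s : ℝ) * r ≤ β * n := by
    have : (s : ℝ) ≤ β * n / r := Nat.floor_le (by positivity)
    rwa [le_div_iff₀ hrp] at this
  have hs2 : β * n / 2 ≤ (s : ℝ) * r := by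
    have : β * n / r < (s : ℝ) + 1 := Nat.lt_floor_add_one _
    rw [div_lt_iff₀ hrp] at this
    linarith
  have hW𝒲 : ((V'.powersetCard P.d).card : ℝ) ≤ Real.exp (P.d * Real.log n) := by
    have e : Real.exp (P.d * Real.log n) = (n : ℝ) ^ P.d := by
      rw [mul_comm, ← Real.rpow_def_of_pos hnp, Real.rpow_natCast]
    rw [e, Finset.card_powersetCard]
    have h1 : V'.card ≤ n := by simpa using Finset.card_le_univ V'
    have := (Nat.choose_le_pow V'.card P.d).trans (Nat.pow_le_pow_left h1 P.d)
    exact_mod_cast this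
  obtain ⟨Λ, hc, hPD, hmem, hcov⟩ := groups_lemma P.bpos (V'.powersetCard P.d) (P.LL H U) θ γ
    (P.d * Real.log n) hθ2 r hW𝒲 hr (fun w => Rw P.JJ P.Fe w ⊆ E) hQ s
    (le_trans (mul_le_mul_of_nonneg_right hs1 (by positivity)) hβγ)
  have hLL : ∀ w ∈ Λ, ∃ W, w ∈ P.LL H U W := by
    intro w hw
    obtain ⟨⟨Λ', hΛ'⟩, _⟩ := hmem w hw
    obtain ⟨W, _, h⟩ := good_mem _ h𝒲 _ θ hθ0 Λ' w hΛ'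
    exact ⟨W, h⟩
  refine ⟨Λ, ?_, ?_, ?_, ?_, hPD, ?_⟩
  · rw [hc]; push_cast; exact hs1
  · intro w hw
    obtain ⟨W, h⟩ := hLL w hw
    exact P.spans_w H E U W w h (hmem w hw).2
  · intro w hw
    obtain ⟨W, h⟩ := hLL w hw
    exact P.ends_w H U W w h
  · intro w hw
    obtain ⟨W, h⟩ := hLL w hw
    exact (Finset.mem_filter.1 h).2.2.1
  · intro W hW hWc
    have h1 := hcov W (Finset.mem_powersetCard.2 ⟨hW, hWc⟩)
    have h2 : β ^ 3 * (n : ℝ) ≤ s * (θ * r / 4) := by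
      have e1 : β ^ 3 * (n : ℝ) = β ^ 2 * (β * n) := by ring
      have e2 : (s : ℝ) * (θ * r / 4) = θ / 4 * (s * r) := by ring
      rw [e1, e2]
      have := mul_le_mul_of_nonneg_right hβθ (by positivity : 0 ≤ β * n)
      have := mul_le_mul_of_nonneg_left hs2 (by positivity : 0 ≤ θ / 4)
      linarith
    refine h2.trans (h1.trans (Nat.cast_le.2 (Finset.card_le_card ?_)))
    intro w hw
    obtain ⟨a1, a2⟩ := Finset.mem_filter.1 hw
    exact Finset.mem_filter.2 ⟨a1, P.absorber_w H E U W w a2 (hmem w a1).2 hWc⟩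

lemma phi_bound {n C : ℕ} (hn : 0 < n) (hC : 1 ≤ C) (hnC : C ^ 3 ≤ n) (ε p : ℝ) (hε0 : 0 < ε)
    (hε : ε ≤ (P.l : ℝ) / (3 * (P.T : ℝ)))
    (hp : (2 ≤ P.l → (n : ℝ) ^ (-((P.k : ℝ) - (P.l : ℝ)) - ε) ≤ p) ∧
       (P.l = 1 → (C : ℝ) * (n : ℝ) ^ (-((P.k : ℝ) - 1)) ≤ p)) :
    0 < p ∧ ∀ j, 1 ≤ j → j ≤ P.JJ.card → (C : ℝ) * n ≤ (n : ℝ) ^ (j * P.d + P.l) * p ^ j := by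
  have hnp : (0 : ℝ) < n := by exact_mod_cast hn
  have hn1 : (1 : ℝ) ≤ n := by exact_mod_cast hn
  have hC1 : (1 : ℝ) ≤ C := by exact_mod_cast hC
  have hkk : (P.k : ℝ) = P.d + P.l := by rw [P.hk]; push_cast; ring
  have hsplit : ∀ j : ℕ, (n : ℝ) ^ (j * P.d + P.l) * p ^ j =
      (n : ℝ) ^ P.l * ((n : ℝ) ^ P.d * p) ^ j := by
    intro j; rw [mul_pow, ← pow_mul, pow_add, mul_comm P.d j]; ring
  rcases Nat.lt_or_ge 1 P.l with hl | hl
  · have h := hp.1 hl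
    have h0 : 0 < p := lt_of_lt_of_le (Real.rpow_pos_of_pos hnp _) h
    refine ⟨h0, fun j hj1 hj2 => ?_⟩
    have h3 : (n : ℝ) ^ (-ε) ≤ (n : ℝ) ^ P.d * p := by
      calc (n : ℝ) ^ (-ε) = (n : ℝ) ^ P.d * (n : ℝ) ^ (-((P.k : ℝ) - (P.l : ℝ)) - ε) := by
            rw [← Real.rpow_natCast, ← Real.rpow_add hnp]; congr 1; rw [hkk]; ring
        _ ≤ _ := by gcongr
    rw [hsplit]
    have hTp : (0 : ℝ) < P.T := by have := P.T2; exact_mod_cast (by omega : 0 < P.T)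
    have hjT : (j : ℝ) ≤ P.T := by
      have := P.JJ_card; exact_mod_cast (by omega : j ≤ P.T)
    have hjε : j * ε ≤ P.l / 3 := by
      calc j * ε ≤ P.T * ((P.l : ℝ) / (3 * (P.T : ℝ))) := by gcongr
        _ = P.l / 3 := by field_simp
    have hl2 : (2 : ℝ) ≤ P.l := by exact_mod_cast hl
    have hC3 : (C : ℝ) ≤ (n : ℝ) ^ (1 / 3 : ℝ) := by
      have h1 : ((C : ℝ) ^ 3) ≤ n := by exact_mod_cast hnC
      calc (C : ℝ) = ((C : ℝ) ^ 3) ^ (1 / 3 : ℝ) := by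
            rw [← Real.rpow_natCast, ← Real.rpow_mul (by positivity)]; norm_num
        _ ≤ _ := Real.rpow_le_rpow (by positivity) h1 (by norm_num)
    calc (C : ℝ) * n ≤ (n : ℝ) ^ (1 / 3 : ℝ) * n := by gcongr
      _ = (n : ℝ) ^ (4 / 3 : ℝ) := by
          rw [← Real.rpow_add_one hnp.ne']; norm_num
      _ ≤ (n : ℝ) ^ ((P.l : ℝ) + (-ε) * j) :=
          Real.rpow_le_rpow_of_exponent_le hn1 (by linarith)
      _ = (n : ℝ) ^ P.l * ((n : ℝ) ^ (-ε)) ^ j := by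
          rw [Real.rpow_add hnp, Real.rpow_natCast, Real.rpow_mul hnp.le, Real.rpow_natCast]
      _ ≤ _ := by gcongr
  · have hl1 : P.l = 1 := by have := P.hl; omega
    have h := hp.2 hl1
    have h0 : 0 < p := lt_of_lt_of_le (mul_pos (by linarith) (Real.rpow_pos_of_pos hnp _)) h
    refine ⟨h0, fun j hj1 hj2 => ?_⟩
    have h3 : (C : ℝ) ≤ (n : ℝ) ^ P.d * p := by
      calc (C : ℝ) = (n : ℝ) ^ P.d * ((C : ℝ) * (n : ℝ) ^ (-((P.k : ℝ) - 1))) := by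
            have : (n : ℝ) ^ P.d * (n : ℝ) ^ (-((P.k : ℝ) - 1)) = 1 := by
              rw [← Real.rpow_natCast, ← Real.rpow_add hnp, hkk, hl1]
              norm_num
            calc (C : ℝ) = C * ((n : ℝ) ^ P.d * (n : ℝ) ^ (-((P.k : ℝ) - 1))) := by rw [this, mul_one]
              _ = _ := by ring
        _ ≤ _ := by gcongr
    rw [hsplit, hl1, pow_one]
    calc (C : ℝ) * n = n * (C : ℝ) ^ 1 := by ring
      _ ≤ n * (C : ℝ) ^ j := by gcongr
      _ ≤ _ := by gcongr

/-- the exponent constant -/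
noncomputable def κc (θ : ℝ) : ℝ := (θ / 2) ^ 2 / (4 * 2 ^ P.JJ.card * (P.b : ℝ) ^ P.b)

lemma prob {n : ℕ} (H : Finset (Finset (Fin n))) (U V' : Finset (Fin n))
    (θ : ℝ) (hθ0 : 0 < θ) (hn : 0 < n) (p Φ : ℝ) (hp0 : 0 < p) (hp1 : p ≤ 1) (hΦ0 : 0 < Φ)
    (hΦ : ∀ j, 1 ≤ j → j ≤ P.JJ.card → Φ ≤ (n : ℝ) ^ (j * P.d + P.l) * p ^ j)
    (r : ℕ) (h𝒲 : (V'.powersetCard P.d).Nonempty)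
    (hL : ∀ W ∈ V'.powersetCard P.d, 2 * θ * (n : ℝ) ^ P.b ≤ (P.LL H U W).card) :
    1 - 2 ^ n * (r * ((n : ℝ) ^ P.b) ^ r) * Real.exp (-(P.κc θ * Φ)) ≤
      gProb n P.k p (fun E => ∀ T : Finset (Fin n), (T.card : ℝ) ≤ θ * n / (2 * P.b) →
        ∀ Λ : Finset (Fin P.b → Fin n), Λ.card < r →
      ∃ w ∈ GoodT (V'.powersetCard P.d) (P.LL H U) θ Λ, Rw P.JJ P.Fe w ⊆ E ∧ ∀ m, w m ∉ T) := by
  have hnp : (0 : ℝ) < n := by exact_mod_cast hn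
  have hbp : (0 : ℝ) < P.b := by exact_mod_cast P.bpos
  set TS := Finset.univ.filter (fun T : Finset (Fin n) => (T.card : ℝ) ≤ θ * n / (2 * P.b)) with hTS
  set ΛS := Finset.univ.filter (fun Λ : Finset (Fin P.b → Fin n) => Λ.card < r) with hΛS
  set Gd : Finset (Fin n) → Finset (Fin P.b → Fin n) → Finset (Fin P.b → Fin n) := fun T Λ =>
    (GoodT (V'.powersetCard P.d) (P.LL H U) θ Λ).filter (fun w => ∀ m, w m ∉ T) with hGd
  refine gProb_ge p hp0.le hp1 _
    (fun E => ∑ T ∈ TS, ∑ Λ ∈ ΛS, avInd (Rw P.JJ P.Fe) (Gd T Λ) E) _ ?_ ?_ ?_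
  · intro E
    exact Finset.sum_nonneg fun T _ => Finset.sum_nonneg fun Λ _ => avInd_nonneg _ _ _
  · intro E hE
    push Not at hE
    obtain ⟨T, hT, Λ, hΛ, hno⟩ := hE
    have h1 : avInd (Rw P.JJ P.Fe) (Gd T Λ) E = 1 := by
      unfold avInd
      rw [if_pos]
      intro w hw hR
      obtain ⟨a1, a2⟩ := Finset.mem_filter.1 hw
      obtain ⟨m, hm⟩ := hno w a1 hR
      exact a2 m hm
    have h2 : avInd (Rw P.JJ P.Fe) (Gd T Λ) E ≤ ∑ Λ ∈ ΛS, avInd (Rw P.JJ P.Fe) (Gd T Λ) E :=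
      Finset.single_le_sum (f := fun Λ => avInd (Rw P.JJ P.Fe) (Gd T Λ) E)
        (fun Λ _ => avInd_nonneg _ _ _) (Finset.mem_filter.2 ⟨Finset.mem_univ _, hΛ⟩)
    have h3 : ∑ Λ ∈ ΛS, avInd (Rw P.JJ P.Fe) (Gd T Λ) E ≤
        ∑ T ∈ TS, ∑ Λ ∈ ΛS, avInd (Rw P.JJ P.Fe) (Gd T Λ) E :=
      Finset.single_le_sum (f := fun T => ∑ Λ ∈ ΛS, avInd (Rw P.JJ P.Fe) (Gd T Λ) E)
        (fun T _ => Finset.sum_nonneg fun Λ _ => avInd_nonneg _ _ _)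
        (Finset.mem_filter.2 ⟨Finset.mem_univ _, hT⟩)
    linarith
  · rw [bE_sum]
    have hN : (Fintype.card (Fin P.b → Fin n) : ℝ) = (n : ℝ) ^ P.b := by simp
    have hterm : ∀ T ∈ TS, ∀ Λ ∈ ΛS, bE (kSets n P.k) p (avInd (Rw P.JJ P.Fe) (Gd T Λ)) ≤
        Real.exp (-(P.κc θ * Φ)) := by
      intro T hT Λ _
      have hT := (Finset.mem_filter.1 hT).2
      refine no_copy P.bpos hn p hp0 hp1 P.JJ P.JJ_ne P.Fe P.Fe_card P.Fe_inj P.Fe_union Φ hΦ0 hΦ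
        (θ / 2) (by positivity) (Gd T Λ) ?_ ?_
      · intro w hw
        obtain ⟨W, _, h⟩ := good_mem _ h𝒲 _ θ hθ0 Λ w (Finset.mem_filter.1 hw).1
        exact (Finset.mem_filter.1 h).2.1
      · have hg := good_card _ h𝒲 (P.LL H U) θ ((n : ℝ) ^ P.b) hθ0.le hN hL Λ
        have hsub : GoodT (V'.powersetCard P.d) (P.LL H U) θ Λ ⊆
            Gd T Λ ∪ Finset.univ.filter (fun w : Fin P.b → Fin n => ∃ y, w y ∈ T) := by
          intro w hw
          by_cases h : ∃ y, w y ∈ T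
          · exact Finset.mem_union_right _ (Finset.mem_filter.2 ⟨Finset.mem_univ _, h⟩)
          · push Not at h
            exact Finset.mem_union_left _ (Finset.mem_filter.2 ⟨hw, h⟩)
        have h1 := (Finset.card_le_card hsub).trans (Finset.card_union_le _ _)
        have h2 := h1.trans (Nat.add_le_add_left (hit_tuples (b := P.b) T) _)
        have h3 : ((GoodT (V'.powersetCard P.d) (P.LL H U) θ Λ).card : ℝ) ≤
            (Gd T Λ).card + P.b * (T.card * (n : ℝ) ^ (P.b - 1)) := by exact_mod_cast h2
        have h4 : (P.b : ℝ) * (T.card * (n : ℝ) ^ (P.b - 1)) ≤ θ / 2 * (n : ℝ) ^ P.b := by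
          have hpw : (n : ℝ) ^ P.b = n * (n : ℝ) ^ (P.b - 1) := by
            rw [← pow_succ']; congr 1; have := P.bpos; omega
          rw [hpw]
          calc (P.b : ℝ) * (T.card * (n : ℝ) ^ (P.b - 1))
              ≤ P.b * ((θ * n / (2 * P.b)) * (n : ℝ) ^ (P.b - 1)) := by gcongr
            _ = θ / 2 * (n * (n : ℝ) ^ (P.b - 1)) := by field_simp
        linarith
    have hcT : (TS.card : ℝ) ≤ 2 ^ n := by
      have h : TS.card ≤ (Finset.univ : Finset (Finset (Fin n))).card := Finset.card_filter_le _ _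
      have e : (Finset.univ : Finset (Finset (Fin n))).card = 2 ^ n := by simp
      rw [e] at h
      exact_mod_cast h
    have hcΛ : (ΛS.card : ℝ) ≤ r * ((n : ℝ) ^ P.b) ^ r := by
      have h := small_subsets (ι := Fin P.b → Fin n) r (by
        simp only [Fintype.card_fun, Fintype.card_fin]; exact Nat.one_le_pow _ _ hn)
      simp only [Fintype.card_fun, Fintype.card_fin] at h
      exact_mod_cast h
    have hX : 0 ≤ Real.exp (-(P.κc θ * Φ)) := (Real.exp_pos _).le
    calc ∑ T ∈ TS, bE (kSets n P.k) p (fun E => ∑ Λ ∈ ΛS, avInd (Rw P.JJ P.Fe) (Gd T Λ) E)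
        ≤ ∑ T ∈ TS, ∑ Λ ∈ ΛS, Real.exp (-(P.κc θ * Φ)) := by
          refine Finset.sum_le_sum fun T hT => ?_
          rw [bE_sum]
          exact Finset.sum_le_sum fun Λ hΛ => hterm T hT Λ hΛ
      _ = TS.card * (ΛS.card * Real.exp (-(P.κc θ * Φ))) := by simp
      _ ≤ 2 ^ n * ((r * ((n : ℝ) ^ P.b) ^ r) * Real.exp (-(P.κc θ * Φ))) := by gcongr
      _ = _ := by ring

lemma gProb_mono {n k : ℕ} (p : ℝ) (hp0 : 0 ≤ p) (hp1 : p ≤ 1)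
    (A A' : Finset (Finset (Fin n)) → Prop) (h : ∀ E, A E → A' E) :
    gProb n k p A ≤ gProb n k p A' := by
  unfold gProb
  have h1 : 0 ≤ 1 - p := by linarith
  refine Finset.sum_le_sum_of_subset_of_nonneg ?_ (fun E _ _ => by positivity)
  intro E hE
  obtain ⟨a1, a2⟩ := Finset.mem_filter.1 hE
  exact Finset.mem_filter.2 ⟨a1, h E a2⟩

lemma eventually_small (b K a : ℝ) (hK : 0 ≤ K) (hb : 0 ≤ b) (ha : 0 < a) :
    ∃ n₀ : ℕ, ∀ n : ℕ, n₀ ≤ n → ∀ r : ℝ, 0 ≤ r → r ≤ K * Real.log n + 2 →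
      r ≤ a * n ∧ r * (1 + b * Real.log n) ≤ a * n := by
  have h1 : ∀ᶠ n : ℕ in Filter.atTop, 1 ≤ Real.log n :=
    (Real.tendsto_log_atTop.comp tendsto_natCast_atTop_atTop).eventually_ge_atTop 1
  have h2 : ∀ᶠ n : ℕ in Filter.atTop, (K + 2) * (1 + b) * (Real.log n) ^ 2 ≤ a * n := by
    have h := (Real.isLittleO_pow_log_id_atTop (n := 2)).comp_tendsto
      (tendsto_natCast_atTop_atTop (R := ℝ))
    have hd : 0 < (K + 2) * (1 + b) := by positivity
    have h' := h.def (div_pos ha hd)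
    filter_upwards [h'] with n hn
    simp only [Function.comp, id, Real.norm_eq_abs] at hn
    rw [abs_of_nonneg (by positivity), abs_of_nonneg (by positivity)] at hn
    calc (K + 2) * (1 + b) * (Real.log n) ^ 2
        ≤ (K + 2) * (1 + b) * (a / ((K + 2) * (1 + b)) * n) := by gcongr
      _ = a * n := by field_simp
  obtain ⟨n₀, hn₀⟩ := Filter.eventually_atTop.1 (h1.and h2)
  refine ⟨n₀, fun n hn r hr0 hr => ?_⟩
  obtain ⟨l1, l2⟩ := hn₀ n hn
  have r1 : r ≤ (K + 2) * Real.log n := by nlinarith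
  have r2 : 1 + b * Real.log n ≤ (1 + b) * Real.log n := by nlinarith
  have r3 : r * (1 + b * Real.log n) ≤ a * n := by
    refine le_trans ?_ l2
    calc r * (1 + b * Real.log n) ≤ ((K + 2) * Real.log n) * ((1 + b) * Real.log n) := by
          gcongr
      _ = _ := by ring
  refine ⟨le_trans ?_ r3, r3⟩
  have : 0 ≤ b * Real.log n := by positivity
  nlinarith

theorem core (ε : ℝ) (hε0 : 0 < ε) (hε : ε ≤ (P.l : ℝ) / (3 * (P.T : ℝ)))
    (α η : ℝ) (hα : 0 < α) (hη : 0 < η) :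
    ∃ β₀ : ℝ, 0 < β₀ ∧ ∀ β : ℝ, 0 < β → β ≤ β₀ →
    ∃ C₀ : ℕ, ∀ C : ℕ, C₀ ≤ C →
    ∀ δ : ℝ, 0 < δ → ∃ n₀ : ℕ, ∀ n : ℕ, n₀ ≤ n →
    ∀ V' U : Finset (Fin n), (U.card : ℝ) ≤ η * (n : ℝ) / 3 →
    ∀ H : Finset (Finset (Fin n)), H ⊆ kSets n P.k →
      (∀ v ∈ V', α * (n : ℝ) ^ (P.k - 1) ≤ (degOf H {v} : ℝ)) →
      (∀ S : Finset (Fin n), S.card = P.l →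
        degOf H S = 0 ∨ η * (n : ℝ) ^ P.d ≤ (degOf H S : ℝ)) →
    ∀ p : ℝ, 0 ≤ p → p ≤ 1 →
      ((2 ≤ P.l → (n : ℝ) ^ (-((P.k : ℝ) - (P.l : ℝ)) - ε) ≤ p) ∧
       (P.l = 1 → (C : ℝ) * (n : ℝ) ^ (-((P.k : ℝ) - 1)) ≤ p)) →
      1 - δ ≤ gProb n P.k p (fun E =>
        ∃ 𝒜 : Finset (Fin P.b → Fin n),
          (𝒜.card : ℝ) ≤ β * (n : ℝ) ∧
          (∀ w ∈ 𝒜, SpansPath P.k P.l (P.T - 1) (H ∪ E) w) ∧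
          (∀ w ∈ 𝒜, firstEnd P.l w ∈ shadowL P.l H ∧ lastEnd P.l w ∈ shadowL P.l H) ∧
          (∀ w ∈ 𝒜, ∀ m, w m ∉ U) ∧
          (∀ w ∈ 𝒜, ∀ w' ∈ 𝒜, w ≠ w' → ∀ m m', w m ≠ w' m') ∧
          ∀ W : Finset (Fin n), W ⊆ V' → W.card = P.d →
            β ^ 3 * (n : ℝ) ≤
              ((𝒜.filter (fun w => IsAbsorber P.k P.l (P.T - 1) (H ∪ E) w W)).card : ℝ)) := by
  have hbp : (0 : ℝ) < P.b := by exact_mod_cast P.bpos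
  have hc0 := P.c0_pos η α hη hα
  have hc1 : P.c0 η α ≤ 1 := (min_le_right _ _).trans (pow_le_one₀ (by norm_num) (by norm_num))
  set c := P.c0 η α ^ (P.T + 1) with hc
  have hcp : 0 < c := by positivity
  have hcle : c ≤ 1 := pow_le_one₀ hc0.le hc1
  set θ := c / 4 with hθ
  have hθp : 0 < θ := by positivity
  have hκp : 0 < P.κc θ := by unfold κc; positivity
  refine ⟨min (θ / (2 * (P.b : ℝ) ^ 2)) (min 1 (θ / 8)), by positivity, fun β hβ hβ₀ => ?_⟩
  have hβ1 : β ≤ θ / (2 * (P.b : ℝ) ^ 2) := hβ₀.trans (min_le_left _ _)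
  have hβ2 : β ≤ 1 := hβ₀.trans ((min_le_right _ _).trans (min_le_left _ _))
  have hβ3 : β ≤ θ / 8 := hβ₀.trans ((min_le_right _ _).trans (min_le_right _ _))
  refine ⟨max 1 ⌈2 / P.κc θ⌉₊, fun C hC δ hδ => ?_⟩
  have hC1 : 1 ≤ C := (le_max_left _ _).trans hC
  have hC2 : 2 ≤ P.κc θ * C := by
    have h := (Nat.le_ceil (2 / P.κc θ)).trans (Nat.cast_le.2 ((le_max_right 1 _).trans hC))
    rw [div_le_iff₀ hκp] at h
    linarith
  obtain ⟨n₁, hn₁⟩ := eventually_small (P.b : ℝ) (4 * P.d / θ) (min (1 / 2) (β / 2))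
    (by positivity) hbp.le (by positivity)
  refine ⟨max (max n₁ (C ^ 3)) (max ⌈2 * ((P.b : ℝ) ^ 2 + P.b * P.d) / c⌉₊ (max 1 ⌈2 / δ⌉₊)), ?_⟩
  intro n hn V' U hU H hH hdegv hdeg p hp0 hp1 hp
  have hnn1 : n₁ ≤ n := le_trans (le_trans (le_max_left _ _) (le_max_left _ _)) hn
  have hnC : C ^ 3 ≤ n := le_trans (le_trans (le_max_right _ _) (le_max_left _ _)) hn
  have hn2 : ⌈2 * ((P.b : ℝ) ^ 2 + P.b * P.d) / c⌉₊ ≤ n :=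
    le_trans (le_trans (le_max_left _ _) (le_max_right _ _)) hn
  have hn0 : 0 < n := le_trans (le_trans (le_trans (le_max_left _ _) (le_max_right _ _)) (le_max_right _ _)) hn
  have hn3 : ⌈2 / δ⌉₊ ≤ n :=
    le_trans (le_trans (le_trans (le_max_right _ _) (le_max_right _ _)) (le_max_right _ _)) hn
  have hnp : (0 : ℝ) < n := by exact_mod_cast hn0
  by_cases h𝒲 : (V'.powersetCard P.d).Nonempty
  swap
  · have h1 : 1 - 0 ≤ gProb n P.k p (fun _ => True) := by
      refine gProb_ge p hp0 hp1 _ (fun _ => 0) 0 (fun _ => le_rfl) (fun E hE => absurd trivial hE) ?_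
      simp [bE]
    refine le_trans (by linarith) (h1.trans (gProb_mono p hp0 hp1 _ _ fun E _ => ?_))
    refine ⟨∅, by simp; positivity, by simp, by simp, by simp, by simp, fun W hW hWc => ?_⟩
    exact absurd ⟨W, Finset.mem_powersetCard.2 ⟨hW, hWc⟩⟩ h𝒲
  · have hlog : 0 ≤ Real.log n := Real.log_natCast_nonneg n
    set r := ⌈4 * P.d / θ * Real.log n⌉₊ + 1 with hr
    have hr1 : 4 * P.d / θ * Real.log n ≤ r := by
      rw [hr]; push_cast; linarith [Nat.le_ceil (4 * P.d / θ * Real.log n)]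
    have hr2 : (r : ℝ) ≤ 4 * P.d / θ * Real.log n + 2 := by
      have := Nat.ceil_lt_add_one (a := 4 * P.d / θ * Real.log n) (by positivity)
      rw [hr]; push_cast; linarith
    obtain ⟨e1, e2⟩ := hn₁ n hnn1 r (by positivity) hr2
    have e1' : (r : ℝ) ≤ β * n / 2 := by
      have := mul_le_mul_of_nonneg_right (min_le_right (1 / 2) (β / 2)) hnp.le
      linarith
    have e2' : r * (1 + P.b * Real.log n) ≤ n / 2 := by
      have := mul_le_mul_of_nonneg_right (min_le_left (1 / 2) (β / 2)) hnp.le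
      linarith
    have hnb : 2 * ((P.b : ℝ) ^ 2 + P.b * P.d) ≤ c * n := by
      have h := (Nat.le_ceil _).trans (Nat.cast_le (α := ℝ).2 hn2)
      rw [div_le_iff₀ hcp] at h
      linarith
    obtain ⟨hp0', hΦ⟩ := P.phi_bound hn0 hC1 hnC ε p hε0 hε hp
    have hCp : (0 : ℝ) < C := by exact_mod_cast hC1
    have hprob := P.prob H U V' θ hθp hn0 p (C * n) hp0' hp1 (by positivity) hΦ r h𝒲 (by
      intro W hW
      obtain ⟨hWV, hWc⟩ := Finset.mem_powersetCard.1 hW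
      have h := P.LL_card η α hη hα hn0 hnb H hH U W hU hdeg hWc (fun v hv => hdegv v (hWV hv))
      have e : 2 * θ = c / 2 := by rw [hθ]; ring
      rw [e]; exact h)
    have hbound : 2 ^ n * (r * ((n : ℝ) ^ P.b) ^ r) * Real.exp (-(P.κc θ * (C * n))) ≤ δ := by
      have f1 : (2 : ℝ) ^ n ≤ Real.exp n := by
        have : (2 : ℝ) ≤ Real.exp 1 := by have := Real.add_one_le_exp (1 : ℝ); linarith
        calc (2 : ℝ) ^ n ≤ (Real.exp 1) ^ n := by gcongr
          _ = Real.exp n := by rw [← Real.exp_nat_mul, mul_one]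
      have f2 : (r : ℝ) ≤ Real.exp r := by have := Real.add_one_le_exp (r : ℝ); linarith
      have f3 : ((n : ℝ) ^ P.b) ^ r = Real.exp (r * (P.b * Real.log n)) := by
        rw [Real.exp_nat_mul, Real.exp_nat_mul, Real.exp_log hnp]
      have f4 : Real.exp (-(P.κc θ * (C * n))) ≤ Real.exp (-(2 * n)) := by
        apply Real.exp_le_exp.2
        have := mul_le_mul_of_nonneg_right hC2 hnp.le
        linarith
      have f5 : 2 / δ ≤ n := (Nat.le_ceil _).trans (Nat.cast_le (α := ℝ).2 hn3)
      calc 2 ^ n * (r * ((n : ℝ) ^ P.b) ^ r) * Real.exp (-(P.κc θ * (C * n)))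
          ≤ Real.exp n * (Real.exp r * Real.exp (r * (P.b * Real.log n))) * Real.exp (-(2 * n)) := by
            rw [f3]; gcongr
        _ = Real.exp (-n + r * (1 + P.b * Real.log n)) := by
            rw [← Real.exp_add, ← Real.exp_add, ← Real.exp_add]; congr 1; ring
        _ ≤ Real.exp (-(n / 2)) := by apply Real.exp_le_exp.2; linarith
        _ ≤ 1 / (n / 2) := by
            rw [Real.exp_neg, ← one_div]
            apply one_div_le_one_div_of_le (by positivity)
            have := Real.add_one_le_exp ((n : ℝ) / 2); linarith
        _ ≤ δ := by
            rw [div_le_iff₀ (by positivity)]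
            rw [div_le_iff₀ hδ] at f5
            linarith
    refine le_trans (by linarith) (hprob.trans (gProb_mono p hp0 hp1 _ _ fun E hE => ?_))
    refine P.det H E U V' θ β _ hθp (by linarith) hn0 hβ ?_ ?_ r (by omega) ?_ e1' h𝒲 hE
    · calc β ^ 2 = β * β := sq β
        _ ≤ 1 * (θ / 8) := mul_le_mul hβ2 hβ3 hβ.le zero_le_one
        _ = θ / 8 := one_mul _
    · rw [le_div_iff₀ (by positivity)] at hβ1 ⊢
      have := mul_le_mul_of_nonneg_right hβ1 hnp.le
      calc β * n * P.b * (2 * P.b) = β * (2 * (P.b : ℝ) ^ 2) * n := by ring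
        _ ≤ _ := this
    · rw [div_mul_eq_mul_div, div_le_iff₀ hθp] at hr1
      linarith

end Par

/-- Lemma 3.4, the absorbing lemma. -/
theorem absorbing_lemma
    (k ℓ : ℕ) (hl1 : 1 ≤ ℓ) (hlk : ℓ < k)
    (t4 t5 : ℕ) (ht4 : t4 = ⌈((3 * k - ℓ - 2 : ℕ) : ℚ) / ((k : ℚ) - (ℓ : ℚ))⌉₊)
    (ht5 : t5 = t4 * (k - ℓ))
    (ε : ℝ) (hε0 : 0 < ε) (hε : ε ≤ (ℓ : ℝ) / (3 * (t5 : ℝ)))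
    (α η : ℝ) (hα : 0 < α) (hη : 0 < η) :
    ∃ β₀ : ℝ, 0 < β₀ ∧ ∀ β : ℝ, 0 < β → β ≤ β₀ →
    ∃ C₀ : ℕ, ∀ C : ℕ, C₀ ≤ C →
    ∀ δ : ℝ, 0 < δ → ∃ n₀ : ℕ, ∀ n : ℕ, n₀ ≤ n →
    ∀ V' U : Finset (Fin n), (U.card : ℝ) ≤ η * (n : ℝ) / 3 →
    ∀ H : Finset (Finset (Fin n)), H ⊆ kSets n k →
      (∀ v ∈ V', α * (n : ℝ) ^ (k - 1) ≤ (degOf H {v} : ℝ)) →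
      (∀ S : Finset (Fin n), S.card = ℓ →
        degOf H S = 0 ∨ η * (n : ℝ) ^ (k - ℓ) ≤ (degOf H S : ℝ)) →
    ∀ p : ℝ, 0 ≤ p → p ≤ 1 →
      ((2 ≤ ℓ → (n : ℝ) ^ (-((k : ℝ) - (ℓ : ℝ)) - ε) ≤ p) ∧
       (ℓ = 1 → (C : ℝ) * (n : ℝ) ^ (-((k : ℝ) - 1)) ≤ p)) →
      1 - δ ≤ gProb n k p (fun E =>
        ∃ 𝒜 : Finset (Fin ((t5 - 1) * (k - ℓ) + ℓ) → Fin n),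
          (𝒜.card : ℝ) ≤ β * (n : ℝ) ∧
          (∀ w ∈ 𝒜, SpansPath k ℓ (t5 - 1) (H ∪ E) w) ∧
          (∀ w ∈ 𝒜, firstEnd ℓ w ∈ shadowL ℓ H ∧ lastEnd ℓ w ∈ shadowL ℓ H) ∧
          (∀ w ∈ 𝒜, ∀ m, w m ∉ U) ∧
          (∀ w ∈ 𝒜, ∀ w' ∈ 𝒜, w ≠ w' → ∀ m m', w m ≠ w' m') ∧
          ∀ W : Finset (Fin n), W ⊆ V' → W.card = k - ℓ →
            β ^ 3 * (n : ℝ) ≤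
              ((𝒜.filter (fun w => IsAbsorber k ℓ (t5 - 1) (H ∪ E) w W)).card : ℝ)) := by
  obtain ⟨P, hk, hl, hd, ht⟩ := par_exists k ℓ hl1 hlk t4 ht4
  subst hk hl ht
  rw [← hd] at ht5 ⊢
  subst ht5
  exact P.core ε hε0 hε α η hα hη
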